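/- arXiv:1308.6650 — 3 statements merged into one kernel-verified Lean document; each statement's English description precedes it below -/
import Mathlib

section
/- Let t, s ∈ ℂ^* satisfy a_1⋯a_n b_1⋯b_n · t · s = q, with |t| < 1 and |s| < 1. Let x = (x_1,…,x_n) ∈ (ℂ^*)ⁿ be such that x_i/x_j ∉ qᶻ for all i ≠ j and t b_1⋯b_n x_1⋯x_n ∉ qᶻ. Then (1−q)ⁿ Σ_{(ν_1,…,ν_n)∈ℤⁿ} [ ∏_{i=1}^n ∏_{j=1}^n (q a_j⁻¹ x_i q^{ν_i})_∞ (q b_j⁻¹ x_i⁻¹ q^{−ν_i})_∞ ] / [ (s a_1⋯a_n x_1⁻¹⋯x_n⁻¹ q^{−(ν_1+⋯+ν_n)})_∞ · (t b_1⋯b_n x_1⋯x_n q^{ν_1+⋯+ν_n})_∞ · ∏_{1≤i<j≤n} (q x_i q^{ν_i} (x_j q^{ν_j})⁻¹)_∞ (q x_j q^{ν_j} (x_i q^{ν_i})⁻¹)_∞ ] = (1−q)ⁿ (q)_∞ⁿ ∏_{i=1}^n ∏_{j=1}^n (q a_i⁻¹ b_j⁻¹)_∞ / ( (t)_∞ (s)_∞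 ). (Macdonald-type sum; Proposition following (3.24) of the paper, with t = q^α, s = q^β and the balancing condition a_1⋯a_n b_1⋯b_n q^{α+β} = q.) -/
open scoped BigOperators
open Finset

/-- The infinite q-Pochhammer symbol `(a)_∞ = ∏_{i=0}^∞ (1 - qⁱ a)`. -/
noncomputable def qp (q a : ℂ) : ℂ := ∏' i : ℕ, (1 - q ^ i * a)

/-- Summand of the Macdonald-type sum. -/
noncomputable def macTerm {n : ℕ} (q t s : ℂ) (a b x : Fin n → ℂ) (ν : Fin n → ℤ) : ℂ :=
  (∏ i, ∏ j, qp q (q * (a j)⁻¹ * (x i * q ^ ν i)) * qp q (q * (b j)⁻¹ * (x i * q ^ ν i)⁻¹)) /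
    (qp q (s * (∏ i, a i) * (∏ i, x i * q ^ ν i)⁻¹) *
      qp q (t * (∏ i, b i) * ∏ i, x i * q ^ ν i) *
      ∏ i, ∏ j ∈ Finset.Ioi i,
        qp q (q * (x i * q ^ ν i) * (x j * q ^ ν j)⁻¹) *
          qp q (q * (x j * q ^ ν j) * (x i * q ^ ν i)⁻¹))

/-!
Up to theta functions, the denominator of `macTerm` is invariant under translations of `ν`: by
quasi-periodicity every summand is, up to a factor independent of `ν`, the Vandermonde determinant
of the points `x i * q ^ ν i` times a product of weights, one for each coordinate of `ν`. Hence the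
sum is a determinant of moments of one-variable weights. The `q`-difference equation of the weight
is a linear recurrence between `n + 1` consecutive moments, which Cramer's rule turns into a
contiguity relation for the determinant under `b j ↦ b j / q`. Iterating it sends every `b j` to
infinity at the cost of the factors `(q / (a i * b j))_∞`, and the reflection `ν ↦ -ν` then does the
same for every `a i`. The remaining constant does not depend on `a` and `b`, so it can be read off
from the case `a = x`, `b = x⁻¹`, in which only `ν = 0` contributes.
-/

open Filter Topology Polynomial

section FiniteProducts

variable {ι : Type*} [Fintype ι] {K : Type*} [Field K]

lemma prod_sub_eq_neg_pow_mul_prod_one_sub {z : K} (hz : z ≠ 0) (c : ι → K) :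
    ∏ j, (c j - z) = (-z) ^ Fintype.card ι * ∏ j, (1 - c j * z⁻¹) := by
  rw [← card_univ, ← prod_const, ← prod_mul_distrib]
  refine prod_congr rfl fun j _ => ?_
  field_simp
  ring

variable [DecidableEq ι]

lemma prod_update_mul {M : Type*} [CommMonoid M] (c : ι → M) (k : ι) (r : M) :
    ∏ i, Function.update c k (r * c k) i = r * ∏ i, c i := by
  rw [prod_update_of_mem (mem_univ k), mul_assoc, ← mul_prod_erase univ c (mem_univ k),
    sdiff_singleton_eq_erase]

lemma prod_compl_neg_div_mul_pow (z : ι → K) {k : ι} (hk : z k ≠ 0) :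
    (∏ j ∈ {k}ᶜ, -(z j / z k)) * (-z k) ^ Fintype.card ι = -∏ j, z j := by
  have hpow : (-z k) ^ Fintype.card ι = (∏ _j ∈ {k}ᶜ, -z k) * -z k := by
    rw [← Fintype.prod_eq_prod_compl_mul k fun _ => -z k, prod_const, card_univ]
  rw [hpow, ← mul_assoc, ← prod_mul_distrib, Fintype.prod_eq_prod_compl_mul k, mul_neg]
  exact congrArg (-(· * z k)) (prod_congr rfl fun j _ => by field_simp)

end FiniteProducts

section Pochhammer

variable {q : ℂ}

lemma summable_norm_pow_mul (hq1 : ‖q‖ < 1) (a : ℂ) :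
    Summable fun i : ℕ => ‖-(q ^ i * a)‖ := by
  simpa using (summable_geometric_of_lt_one (norm_nonneg q) hq1).mul_right ‖a‖

lemma multipliable_qp (hq1 : ‖q‖ < 1) (a : ℂ) : Multipliable fun i : ℕ => 1 - q ^ i * a := by
  simpa [sub_eq_add_neg] using multipliable_one_add_of_summable (summable_norm_pow_mul hq1 a)

lemma tendsto_prod_range_qp (hq1 : ‖q‖ < 1) (a : ℂ) :
    Tendsto (fun m : ℕ => ∏ k ∈ range m, (1 - q ^ k * a)) atTop (𝓝 (qp q a)) :=
  (multipliable_qp hq1 a).tendsto_prod_tprod_nat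

@[simp] lemma qp_zero (q : ℂ) : qp q 0 = 1 := by simp [qp]

lemma qp_eq_one_sub_mul (hq1 : ‖q‖ < 1) (a : ℂ) : qp q a = (1 - a) * qp q (q * a) := by
  have h := tprod_eq_zero_mul' (f := fun i : ℕ => 1 - q ^ i * a) (by
    simpa [pow_succ, mul_assoc] using multipliable_qp hq1 (q * a))
  simpa [qp, pow_succ, mul_assoc] using h

lemma qp_zpow_eq_zero (hq0 : q ≠ 0) {l : ℤ} (hl : l ≤ 0) : qp q (q ^ l) = 0 := by
  lift -l to ℕ using neg_nonneg.2 hl with m hm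
  refine tprod_of_exists_eq_zero ⟨m, ?_⟩
  rw [← zpow_natCast, hm, ← zpow_add₀ hq0, neg_add_cancel, zpow_zero, sub_self]

lemma qp_ne_zero (hq1 : ‖q‖ < 1) {a : ℂ} (h : ∀ i : ℕ, q ^ i * a ≠ 1) : qp q a ≠ 0 := by
  simpa [qp, sub_eq_add_neg] using
    tprod_one_add_ne_zero_of_summable (f := fun i : ℕ => -(q ^ i * a))
      (fun i hi => h i (by linear_combination -hi)) (summable_norm_pow_mul hq1 a)

lemma qp_ne_zero_of_norm_lt_one (hq1 : ‖q‖ < 1) {a : ℂ} (ha : ‖a‖ < 1) : qp q a ≠ 0 := by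
  refine qp_ne_zero hq1 fun i hi => (?_ : ‖q ^ i * a‖ < 1).ne (by rw [hi, norm_one])
  rw [norm_mul, norm_pow]
  exact (mul_le_of_le_one_left (norm_nonneg a) (pow_le_one₀ (norm_nonneg q) hq1.le)).trans_lt ha

lemma continuous_qp (hq1 : ‖q‖ < 1) : Continuous (qp q) := by
  refine continuous_iff_continuousAt.2 fun a => ?_
  have hball : IsOpen (Metric.ball (0 : ℂ) (‖a‖ + 1)) := Metric.isOpen_ball
  have hprod := Summable.hasProdLocallyUniformlyOn_one_add (f := fun (i : ℕ) b => -(q ^ i * b))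
    hball ((summable_geometric_of_lt_one (norm_nonneg q) hq1).mul_right (‖a‖ + 1))
    (.of_forall fun i b hb => by
      rw [norm_neg, norm_mul, norm_pow]
      gcongr
      exact (mem_ball_zero_iff.1 hb).le)
    (fun i => by fun_prop)
  have hcont : ContinuousOn (fun b => ∏' i : ℕ, (1 + -(q ^ i * b)))
      (Metric.ball (0 : ℂ) (‖a‖ + 1)) :=
    (hasProdLocallyUniformlyOn_iff_tendstoLocallyUniformlyOn.1 hprod).continuousOn
      (.of_forall fun s => by fun_prop)
  have ha : a ∈ Metric.ball (0 : ℂ) (‖a‖ + 1) := by simp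
  simpa only [qp, sub_eq_add_neg] using! hcont.continuousAt (hball.mem_nhds ha)

lemma tendsto_pow_mul_zero (hq1 : ‖q‖ < 1) (y : ℂ) :
    Tendsto (fun m : ℕ => q ^ m * y) atTop (𝓝 0) := by
  simpa using (tendsto_pow_atTop_nhds_zero_of_norm_lt_one hq1).mul_const y

lemma eq_prod_qp_mul_of_forall_eq_prod_one_sub_mul {ι : Type*} [Fintype ι] (hq1 : ‖q‖ < 1)
    {g : ℂ → ℂ} (hg : ContinuousAt g 0) (u : ι → ℂ) (y : ℂ)
    (h : ∀ m : ℕ, g (q ^ m * y) = (∏ i, (1 - u i * (q ^ m * y))) * g (q ^ (m + 1) * y)) :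
    g y = (∏ i, qp q (u i * y)) * g 0 := by
  have hiter : ∀ m : ℕ,
      (∏ i, ∏ k ∈ range m, (1 - q ^ k * (u i * y))) * g (q ^ m * y) = g y := by
    intro m
    induction m with
    | zero => simp
    | succ m ih =>
      rw [← ih, h m]
      simp only [prod_range_succ, prod_mul_distrib, mul_left_comm, mul_assoc]
  refine tendsto_nhds_unique (tendsto_const_nhds.congr fun m => (hiter m).symm) (?_ :
    Tendsto _ (atTop : Filter ℕ) _)
  exact (tendsto_finsetProd _ fun i _ => tendsto_prod_range_qp hq1 (u i * y)).mul
    (hg.tendsto.comp (tendsto_pow_mul_zero hq1 y))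

end Pochhammer

section Determinant

variable {R : Type*} [CommRing R] {n : ℕ}

lemma apply_zero_mul_det_of_mulVec_eq_single (M : Matrix (Fin (n + 1)) (Fin (n + 1)) R)
    {v : Fin (n + 1) → R} {r : R} (h : M.mulVec v = Pi.single 0 r) :
    v 0 * M.det = r * (M.submatrix Fin.succ Fin.succ).det := by
  have hcramer : M.adjugate.mulVec (M.mulVec v) = M.det • v := by
    rw [Matrix.mulVec_mulVec, Matrix.adjugate_mul, Matrix.smul_mulVec, Matrix.one_mulVec]
  have h0 := congrFun hcramer 0
  simp only [h, Matrix.mulVec_single, Pi.smul_apply, Matrix.col_apply, op_smul_eq_smul,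
    smul_eq_mul, Matrix.adjugate_fin_succ_eq_det_submatrix] at h0
  simpa [mul_comm] using h0.symm

lemma det_cons_pow (m : Fin n → ℕ → R) (β : R) :
    (Matrix.of (Fin.cons (fun k => β ^ (k : ℕ)) fun i k => m i k) :
      Matrix (Fin (n + 1)) (Fin (n + 1)) R).det =
      (Matrix.of fun i j : Fin n => m i (j + 1) - β * m i j).det := by
  set M : Matrix (Fin (n + 1)) (Fin (n + 1)) R :=
    Matrix.of (Fin.cons (fun k => β ^ (k : ℕ)) fun i k => m i k) with hM
  let N : Matrix (Fin (n + 1)) (Fin (n + 1)) R :=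
    Matrix.of fun i => Fin.cons (M i 0) fun j => M i j.succ - β * M i j.castSucc
  have hMN : M.det = N.det := Matrix.det_eq_of_forall_col_eq_smul_add_pred (fun _ => β)
    (fun i => by simp [N]) (fun i j => by simp [N])
  rw [hMN, Matrix.det_succ_row_zero, Fin.sum_univ_succ, Finset.sum_eq_zero fun j _ => ?_]
  · simp only [N, hM, Matrix.of_apply, Fin.cons_zero, Fin.val_zero, pow_zero, one_mul, add_zero]
    congr 1
  · simp [N, hM, pow_succ, mul_comm]

lemma coeff_zero_mul_det_sub (m : Fin n → ℕ → R) (P : R[X]) (hP : P.natDegree ≤ n)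
    (h : ∀ i, ∑ k ∈ range (n + 1), P.coeff k * m i k = 0) (β : R) :
    P.coeff 0 * (Matrix.of fun i j : Fin n => m i (j + 1) - β * m i j).det =
      P.eval β * (Matrix.of fun i j : Fin n => m i (j + 1)).det := by
  rw [← det_cons_pow]
  refine apply_zero_mul_det_of_mulVec_eq_single (v := fun k => P.coeff k) _ (funext fun i => ?_)
  cases i using Fin.cases with
  | zero =>
    rw [Pi.single_eq_same, Polynomial.eval_eq_sum_range' (Nat.lt_succ_of_le hP), sum_range]
    simp [Matrix.mulVec, dotProduct, mul_comm]
  | succ i =>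
    rw [Pi.single_eq_of_ne (Fin.succ_ne_zero i), ← h i, sum_range]
    simp [Matrix.mulVec, dotProduct, mul_comm]

end Determinant

section LatticeSums

lemma eq_apply_zero_of_forall_add_single {ι α : Type*} [Finite ι] [DecidableEq ι]
    {f : (ι → ℤ) → α} (h : ∀ ν k, f (ν + Pi.single k 1) = f ν) (ν : ι → ℤ) : f ν = f 0 := by
  have := Fintype.ofFinite ι
  have hsingle : ∀ (k : ι) (m : ℤ), Function.Periodic f (Pi.single k m) := fun k m => by
    simpa [← Pi.single_smul'] using Function.Periodic.zsmul (fun ν => h ν k) m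
  have hsum : ∀ s : Finset ι, f (∑ k ∈ s, Pi.single k (ν k)) = f 0 := fun s => by
    induction s using Finset.induction_on with
    | empty => simp
    | insert k s hk ih => rw [sum_insert hk, add_comm, hsingle k, ih]
  rw [← hsum univ, univ_sum_single]

variable {R κ : Type*} [NormedCommRing R] {n : ℕ}

lemma summable_norm_prod_apply {f : Fin n → κ → R} (hf : ∀ i, Summable fun k => ‖f i k‖) :
    Summable fun ν : Fin n → κ => ‖∏ i, f i (ν i)‖ := by
  induction n with
  | zero => exact Summable.of_finite
  | succ n ih =>
    rw [← (Fin.consEquiv fun _ => κ).summable_iff]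
    refine ((hf 0).mul_norm (ih fun i => hf i.succ)).congr fun ν => ?_
    rw [Function.comp_apply, Fin.prod_univ_succ]
    rfl

lemma hasSum_prod_apply [CompleteSpace R] {f : Fin n → κ → R}
    (hf : ∀ i, Summable fun k => ‖f i k‖) :
    HasSum (fun ν : Fin n → κ => ∏ i, f i (ν i)) (∏ i, ∑' k, f i k) := by
  refine (summable_norm_prod_apply hf).of_norm.hasSum_iff.2 ?_
  induction n with
  | zero => simp
  | succ n ih =>
    rw [← (Fin.consEquiv fun _ => κ).tsum_eq, Fin.prod_univ_succ, ← ih fun i => hf i.succ,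
      tsum_mul_tsum_of_summable_norm (hf 0) (summable_norm_prod_apply fun i => hf i.succ)]
    exact tsum_congr fun ν => Fin.prod_univ_succ _

end LatticeSums

section ProductDegree

variable {R ι : Type*} [CommRing R] [Fintype ι]

lemma natDegree_prod_one_sub_C_mul_X_le (d : ι → R) :
    (∏ j, (1 - C (d j) * X)).natDegree ≤ Fintype.card ι :=
  (Polynomial.natDegree_prod_le _ _).trans <|
    (sum_le_card_nsmul _ _ 1 fun j _ => by compute_degree).trans_eq <| by simp [card_univ]

lemma natDegree_prod_C_sub_X_le (c : ι → R) : (∏ j, (C (c j) - X)).natDegree ≤ Fintype.card ι :=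
  (Polynomial.natDegree_prod_le _ _).trans <|
    (sum_le_card_nsmul _ _ 1 fun j _ => by compute_degree).trans_eq <| by simp [card_univ]

end ProductDegree

section Theta

variable {q : ℂ} {n : ℕ}

/-- The modified theta function `θ(u) = (u)_∞ (q/u)_∞`. -/
noncomputable def theta (q u : ℂ) : ℂ := qp q u * qp q (q * u⁻¹)

lemma theta_mul_left (hq0 : q ≠ 0) (hq1 : ‖q‖ < 1) {u : ℂ} (hu : u ≠ 0) :
    theta q (q * u) = -u⁻¹ * theta q u := by
  rw [theta, theta, mul_inv, mul_inv_cancel_left₀ hq0, qp_eq_one_sub_mul hq1 u,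
    qp_eq_one_sub_mul hq1 u⁻¹]
  field_simp
  ring

lemma theta_ne_zero (hq0 : q ≠ 0) (hq1 : ‖q‖ < 1) {u : ℂ} (hu : ∀ m : ℤ, u ≠ q ^ m) :
    theta q u ≠ 0 := by
  refine mul_ne_zero (qp_ne_zero hq1 fun i hi => hu (-i) ?_)
    (qp_ne_zero hq1 fun i hi => hu (i + 1) ?_)
  · rw [zpow_neg, zpow_natCast, eq_inv_of_mul_eq_one_right hi]
  · rw [zpow_add_one₀ hq0, zpow_natCast, ← inv_inj]
    exact eq_inv_of_mul_eq_one_right (by rw [← hi, mul_assoc])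

/-- The theta analogue `v θ(u/v)` of the difference `v - u`. -/
noncomputable def thetaSub (q u v : ℂ) : ℂ := v * theta q (u / v)

lemma thetaSub_eq (hq1 : ‖q‖ < 1) (u : ℂ) {v : ℂ} (hv : v ≠ 0) :
    thetaSub q u v = (v - u) * (qp q (q * u * v⁻¹) * qp q (q * v * u⁻¹)) := by
  rw [thetaSub, theta, qp_eq_one_sub_mul hq1 (u / v), inv_div, div_eq_mul_inv v, mul_assoc q u,
    mul_assoc q v, div_eq_mul_inv]
  field_simp

lemma thetaSub_mul_left (hq0 : q ≠ 0) (hq1 : ‖q‖ < 1) {u v : ℂ} (hu : u ≠ 0) (hv : v ≠ 0) :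
    thetaSub q (q * u) v = -(v / u) * thetaSub q u v := by
  rw [thetaSub, thetaSub, mul_div_assoc, theta_mul_left hq0 hq1 (div_ne_zero hu hv), inv_div]
  ring

lemma thetaSub_mul_right (hq0 : q ≠ 0) (hq1 : ‖q‖ < 1) {u v : ℂ} (hu : u ≠ 0) (hv : v ≠ 0) :
    thetaSub q u (q * v) = -(u / v) * thetaSub q u v := by
  have hqv : q * (u / (q * v)) = u / v := by field_simp
  have h := theta_mul_left hq0 hq1 (div_ne_zero hu (mul_ne_zero hq0 hv))
  rw [hqv] at h
  rw [thetaSub, thetaSub, h]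
  field_simp

lemma thetaSub_ne_zero (hq0 : q ≠ 0) (hq1 : ‖q‖ < 1) {u v : ℂ} (hv : v ≠ 0)
    (huv : ∀ m : ℤ, u / v ≠ q ^ m) : thetaSub q u v ≠ 0 :=
  mul_ne_zero hv (theta_ne_zero hq0 hq1 huv)

/-- The theta analogue of the Vandermonde determinant in `z`. -/
noncomputable def thetaVandermonde (q : ℂ) (z : Fin n → ℂ) : ℂ :=
  ∏ i, ∏ j ∈ Ioi i, thetaSub q (z i) (z j)

lemma thetaVandermonde_ne_zero (hq0 : q ≠ 0) (hq1 : ‖q‖ < 1) {z : Fin n → ℂ}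
    (hz : ∀ i, z i ≠ 0) (hzz : ∀ i j, i ≠ j → ∀ m : ℤ, z i / z j ≠ q ^ m) :
    thetaVandermonde q z ≠ 0 :=
  prod_ne_zero_iff.2 fun i _ => prod_ne_zero_iff.2 fun j hj =>
    thetaSub_ne_zero hq0 hq1 (hz j) (hzz i j (mem_Ioi.1 hj).ne)

lemma thetaVandermonde_eq (hq1 : ‖q‖ < 1) {z : Fin n → ℂ} (hz : ∀ i, z i ≠ 0) :
    thetaVandermonde q z = (Matrix.vandermonde z).det *
      ∏ i, ∏ j ∈ Ioi i, qp q (q * z i * (z j)⁻¹) * qp q (q * z j * (z i)⁻¹) := by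
  simp_rw [thetaVandermonde, thetaSub_eq hq1 _ (hz _), prod_mul_distrib, Matrix.det_vandermonde]

lemma thetaVandermonde_update_mul (hq0 : q ≠ 0) (hq1 : ‖q‖ < 1) {z : Fin n → ℂ}
    (hz : ∀ i, z i ≠ 0) (k : Fin n) :
    thetaVandermonde q (Function.update z k (q * z k)) =
      (∏ j ∈ {k}ᶜ, -(z j / z k)) * thetaVandermonde q z := by
  let r : Fin n → Fin n → ℂ := fun j i => if i = k then -(z j / z k) else 1
  have hpair : ∀ i, ∀ j ∈ Ioi i,
      thetaSub q (Function.update z k (q * z k) i) (Function.update z k (q * z k) j) =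
        r j i * r i j * thetaSub q (z i) (z j) := by
    intro i j hj
    have hij : i ≠ j := (mem_Ioi.1 hj).ne
    by_cases hik : i = k
    · subst hik
      simp [r, hij.symm, thetaSub_mul_left hq0 hq1 (hz i) (hz j)]
    · by_cases hjk : j = k
      · subst hjk
        simp [r, hij, thetaSub_mul_right hq0 hq1 (hz i) (hz j)]
      · simp [r, hik, hjk]
  have hr : ∏ i, ∏ j ∈ {i}ᶜ, r j i = ∏ j ∈ {k}ᶜ, -(z j / z k) := by
    rw [prod_eq_single_of_mem k (mem_univ k) fun i _ hik => prod_eq_one fun j _ => if_neg hik]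
    exact prod_congr rfl fun j _ => if_pos rfl
  rw [thetaVandermonde, prod_congr rfl fun i _ => prod_congr rfl (hpair i)]
  simp only [prod_mul_distrib]
  rw [← hr, ← prod_prod_Ioi_mul_eq_prod_prod_off_diag, thetaVandermonde]
  simp only [prod_mul_distrib]

lemma theta_mul_thetaVandermonde_update (hq0 : q ≠ 0) (hq1 : ‖q‖ < 1) {p : ℂ} (hp : p ≠ 0)
    {z : Fin n → ℂ} (hz : ∀ i, z i ≠ 0) (k : Fin n) :
    theta q (p * ∏ i, Function.update z k (q * z k) i) *
        thetaVandermonde q (Function.update z k (q * z k)) * (p * (-z k) ^ n) =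
      theta q (p * ∏ i, z i) * thetaVandermonde q z := by
  have hprod : ∏ i, z i ≠ 0 := prod_ne_zero_iff.2 fun i _ => hz i
  rw [prod_update_mul, mul_left_comm p, theta_mul_left hq0 hq1 (mul_ne_zero hp hprod),
    thetaVandermonde_update_mul hq0 hq1 hz]
  calc _ = -(p * ∏ i, z i)⁻¹ * theta q (p * ∏ i, z i) * thetaVandermonde q z * p *
        ((∏ j ∈ {k}ᶜ, -(z j / z k)) * (-z k) ^ Fintype.card (Fin n)) := by
          rw [Fintype.card_fin]
          ring
    _ = _ := by
      rw [prod_compl_neg_div_mul_pow z (hz k)]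
      field_simp

/-- The quasi-period of the theta function: `θ(u) = quasiPeriod q u k * θ(q ^ k * u)`. -/
noncomputable def quasiPeriod (q u : ℂ) (k : ℤ) : ℂ := (-u) ^ k * q ^ (k * (k - 1) / 2)

@[simp] lemma quasiPeriod_zero (q u : ℂ) : quasiPeriod q u 0 = 1 := by simp [quasiPeriod]

lemma quasiPeriod_add_one (hq0 : q ≠ 0) {u : ℂ} (hu : u ≠ 0) (k : ℤ) :
    quasiPeriod q u (k + 1) = -(u * q ^ k) * quasiPeriod q u k := by
  have hexp : (k + 1) * (k + 1 - 1) / 2 = k * (k - 1) / 2 + k := by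
    rw [show (k + 1) * (k + 1 - 1) = k * (k - 1) + k * 2 by ring]
    exact Int.add_mul_ediv_right _ _ two_ne_zero
  rw [quasiPeriod, quasiPeriod, hexp, zpow_add₀ hq0, zpow_add_one₀ (neg_ne_zero.2 hu)]
  ring

lemma quasiPeriod_neg (hq0 : q ≠ 0) (u : ℂ) (k : ℤ) :
    quasiPeriod q u (-k) = quasiPeriod q u⁻¹ k * q ^ k := by
  have hexp : -k * (-k - 1) / 2 = k * (k - 1) / 2 + k := by
    rw [show -k * (-k - 1) = k * (k - 1) + k * 2 by ring]
    exact Int.add_mul_ediv_right _ _ two_ne_zero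
  rw [quasiPeriod, quasiPeriod, hexp, zpow_add₀ hq0, zpow_neg, ← inv_zpow, inv_neg, mul_assoc]

lemma theta_mul_thetaVandermonde_zpow (hq0 : q ≠ 0) (hq1 : ‖q‖ < 1) {p : ℂ} (hp : p ≠ 0)
    {x : Fin n → ℂ} (hx : ∀ i, x i ≠ 0) (ν : Fin n → ℤ) :
    theta q (p * ∏ i, x i * q ^ ν i) * thetaVandermonde q (fun i => x i * q ^ ν i) *
        ∏ i, quasiPeriod q (x i) (ν i) ^ n * p ^ ν i =
      theta q (p * ∏ i, x i) * thetaVandermonde q x := by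
  have hperiod := eq_apply_zero_of_forall_add_single (f := fun ν : Fin n → ℤ =>
    theta q (p * ∏ i, x i * q ^ ν i) * thetaVandermonde q (fun i => x i * q ^ ν i) *
      ∏ i, quasiPeriod q (x i) (ν i) ^ n * p ^ ν i) ?_ ν
  · simpa using hperiod
  intro ν k
  set z : Fin n → ℂ := fun i => x i * q ^ ν i with hzdef
  have hz : ∀ i, z i ≠ 0 := fun i => mul_ne_zero (hx i) (zpow_ne_zero _ hq0)
  have hupdate : (fun i => x i * q ^ (ν + Pi.single k 1 : Fin n → ℤ) i) =
      Function.update z k (q * z k) := by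
    ext i
    rcases eq_or_ne i k with rfl | hik
    · simp only [Function.update_self, Pi.add_apply, Pi.single_eq_same, zpow_add_one₀ hq0, hzdef]
      ring
    · simp [hzdef, hik]
  have hfactor : ∏ i, quasiPeriod q (x i) ((ν + Pi.single k 1 : Fin n → ℤ) i) ^ n *
      p ^ (ν + Pi.single k 1 : Fin n → ℤ) i =
        (∏ i, quasiPeriod q (x i) (ν i) ^ n * p ^ ν i) * (p * (-z k) ^ n) := by
    rw [← Fintype.prod_ite_eq' k fun i => p * (-z i) ^ n, ← prod_mul_distrib]
    refine prod_congr rfl fun i _ => ?_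
    rcases eq_or_ne i k with rfl | hik
    · simp only [Pi.add_apply, Pi.single_eq_same, quasiPeriod_add_one hq0 (hx i),
        zpow_add_one₀ hp, if_true, hzdef]
      ring
    · simp [hik]
  rw [hfactor, ← theta_mul_thetaVandermonde_update hq0 hq1 hp hz k, ← hupdate]
  ring

end Theta

section RatioTest

lemma exists_summable_bound_of_tendsto_ratio {X R : Type*} [NormedRing R] {l : Filter X}
    {f ρ : X → ℕ → R} {A : R} (hA : ‖A‖ < 1) (hρ : Tendsto (Function.uncurry ρ) (l ×ˢ atTop) (𝓝 A))
    (hf : ∀ᶠ am in l ×ˢ atTop, f am.1 (am.2 + 1) = ρ am.1 am.2 * f am.1 am.2)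
    (hbdd : ∀ m, l.IsBoundedUnder (· ≤ ·) fun a => ‖f a m‖) :
    ∃ u : ℕ → ℝ, Summable u ∧ ∀ᶠ a in l, ∀ m, ‖f a m‖ ≤ u m := by
  obtain ⟨r, hAr, hr1⟩ := exists_between hA
  have hr0 : 0 ≤ r := (norm_nonneg A).trans hAr.le
  have hstep : ∀ᶠ am in l ×ˢ atTop, ‖f am.1 (am.2 + 1)‖ ≤ r * ‖f am.1 am.2‖ := by
    filter_upwards [hf, hρ.norm.eventually (gt_mem_nhds hAr)] with am hrec hlt
    rw [hrec]
    exact norm_mul_le_of_le hlt.le le_rfl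
  obtain ⟨P, hP, Q, hQ, hPQ⟩ := eventually_prod_iff.1 hstep
  obtain ⟨M, hM⟩ := eventually_atTop.1 hQ
  choose B hB using fun m => (hbdd m).eventually_le
  refine ⟨fun m => if m < M then B m else B M * r ^ (m - M), ?_, ?_⟩
  · rw [← summable_nat_add_iff M]
    simpa using (summable_geometric_of_lt_one hr0 hr1).mul_left (B M)
  filter_upwards [hP, (eventually_all_finset (range (M + 1))).2 fun m _ => hB m] with a ha hBa m
  split_ifs with hm
  · exact hBa m (mem_range.2 (by omega))
  obtain ⟨k, rfl⟩ := Nat.exists_eq_add_of_le (not_lt.1 hm)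
  rw [Nat.add_sub_cancel_left]
  induction k with
  | zero => simpa using hBa M (self_mem_range_succ M)
  | succ k ih =>
    calc ‖f a (M + k + 1)‖ ≤ r * ‖f a (M + k)‖ := hPQ ha (hM _ (by omega))
      _ ≤ r * (B M * r ^ k) := by gcongr; exact ih (by omega)
      _ = B M * r ^ (k + 1) := by ring

end RatioTest

section Weight

variable {q p x : ℂ} {n : ℕ} {d c : Fin n → ℂ}

/-- The one-variable weight into which `macTerm` factors, up to a Vandermonde determinant and a
factor that does not depend on `ν`. The parameters are `d = a⁻¹`, `c = b⁻¹` and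
`p = t b_1 ⋯ b_n`: inverting `a` and `b` lets them be sent to infinity, at `d = 0` and `c = 0`. -/
noncomputable def weight (q p : ℂ) (d c : Fin n → ℂ) (x : ℂ) (ν : ℤ) : ℂ :=
  (∏ j, qp q (q * d j * (x * q ^ ν)) * qp q (q * c j * (x * q ^ ν)⁻¹)) *
    (quasiPeriod q x ν ^ n * p ^ ν)

lemma weight_add_one (hq0 : q ≠ 0) (hq1 : ‖q‖ < 1) (hp : p ≠ 0) (hx : x ≠ 0)
    (d c : Fin n → ℂ) (ν : ℤ) :
    weight q p d c x (ν + 1) * ∏ j, (1 - q * d j * (x * q ^ ν)) =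
      weight q p d c x ν * (p * ∏ j, (c j - x * q ^ ν)) := by
  have hc : ∀ j, qp q (q * c j * (x * q ^ (ν + 1))⁻¹) =
      (1 - c j * (x * q ^ ν)⁻¹) * qp q (q * c j * (x * q ^ ν)⁻¹) := fun j => by
    rw [mul_assoc q (c j) (x * q ^ ν)⁻¹, ← qp_eq_one_sub_mul hq1, zpow_add_one₀ hq0]
    congr 1
    field_simp
  have hd : ∀ j, qp q (q * d j * (x * q ^ ν)) =
      (1 - q * d j * (x * q ^ ν)) * qp q (q * d j * (x * q ^ (ν + 1))) := fun j => by
    rw [qp_eq_one_sub_mul hq1, zpow_add_one₀ hq0]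
    ring_nf
  rw [prod_sub_eq_neg_pow_mul_prod_one_sub (mul_ne_zero hx (zpow_ne_zero ν hq0)),
    Fintype.card_fin]
  simp only [weight, hc, hd, prod_mul_distrib, quasiPeriod_add_one hq0 hx, zpow_add_one₀ hp,
    mul_pow]
  ring

lemma weight_update_mul (hq1 : ‖q‖ < 1) (p x : ℂ) (d c : Fin n → ℂ) (j : Fin n) (ν : ℤ) :
    weight q p d (Function.update c j (q * c j)) x ν * (1 - q * c j * (x * q ^ ν)⁻¹) =
      weight q p d c x ν := by
  have hj : qp q (q * c j * (x * q ^ ν)⁻¹) =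
      (1 - q * c j * (x * q ^ ν)⁻¹) * qp q (q * (q * c j) * (x * q ^ ν)⁻¹) := by
    rw [qp_eq_one_sub_mul hq1]
    ring_nf
  have hne : ∏ k ∈ {j}ᶜ, qp q (q * Function.update c j (q * c j) k * (x * q ^ ν)⁻¹) =
      ∏ k ∈ {j}ᶜ, qp q (q * c k * (x * q ^ ν)⁻¹) :=
    prod_congr rfl fun k hk => by rw [Function.update_of_ne (by simpa using hk)]
  simp only [weight, prod_mul_distrib]
  rw [Fintype.prod_eq_prod_compl_mul j fun k =>
      qp q (q * Function.update c j (q * c j) k * (x * q ^ ν)⁻¹), hne,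
    Fintype.prod_eq_prod_compl_mul j fun k => qp q (q * c k * (x * q ^ ν)⁻¹), hj,
    Function.update_self]
  ring

lemma weight_neg (hq0 : q ≠ 0) (p x : ℂ) (d c : Fin n → ℂ) (ν : ℤ) :
    weight q p d c x (-ν) = weight q (q ^ n / p) c d x⁻¹ ν := by
  have hz : (x * q ^ (-ν))⁻¹ = x⁻¹ * q ^ ν := by rw [mul_inv, zpow_neg, inv_inv]
  have hz' : x * q ^ (-ν) = (x⁻¹ * q ^ ν)⁻¹ := by rw [← hz, inv_inv]
  have hqn : (q ^ n / p) ^ ν = (q ^ ν) ^ n * p ^ (-ν) := by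
    rw [div_zpow, zpow_neg, ← zpow_natCast, ← zpow_natCast, zpow_comm, div_eq_mul_inv]
  rw [weight, weight, hz, hz', hqn, quasiPeriod_neg hq0, mul_pow]
  simp only [mul_comm (qp q (q * d _ * _))]
  ring

lemma weight_mul_zpow (p x : ℂ) (d c : Fin n → ℂ) (ν k : ℤ) :
    weight q p d c x ν * (x * q ^ ν) ^ k = x ^ k * weight q (p * q ^ k) d c x ν := by
  rw [weight, weight, mul_zpow, mul_zpow, zpow_comm q ν k]
  ring

lemma weight_eq_zero_of_lt (hq0 : q ≠ 0) (hx : x ≠ 0) (p : ℂ) (d : Fin n → ℂ) {j : Fin n}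
    {l ν : ℤ} (hj : c j = x * q ^ l) (hν : l < ν) : weight q p d c x ν = 0 := by
  have harg : q * c j * (x * q ^ ν)⁻¹ = q ^ (l + 1 - ν) := by
    rw [hj, zpow_sub₀ hq0, zpow_add_one₀ hq0]
    field_simp
  rw [weight, prod_eq_zero (mem_univ j) (by rw [harg, qp_zpow_eq_zero hq0 (by omega), mul_zero]),
    zero_mul]

lemma tendsto_weight {X : Type*} {l : Filter X} {D C : X → Fin n → ℂ} (hq1 : ‖q‖ < 1)
    (hD : Tendsto D l (𝓝 d)) (hC : Tendsto C l (𝓝 c)) (p x : ℂ) (ν : ℤ) :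
    Tendsto (fun a => weight q p (D a) (C a) x ν) l (𝓝 (weight q p d c x ν)) := by
  have hqp : ∀ {E : X → Fin n → ℂ} {e : Fin n → ℂ}, Tendsto E l (𝓝 e) → ∀ j y,
      Tendsto (fun a => qp q (q * E a j * y)) l (𝓝 (qp q (q * e j * y))) := fun hE j y =>
    ((continuous_qp hq1).tendsto _).comp (((tendsto_pi_nhds.1 hE j).const_mul q).mul_const y)
  exact (tendsto_finsetProd _ fun j _ => (hqp hD j _).mul (hqp hC j _)).mul_const _

/-- Sufficient condition for `∑ weight q p d c x ν` to converge as `ν → +∞`: the terms decay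
geometrically, or all but finitely many of them vanish. By `weight_neg`, the condition as `ν → -∞`
is `TailDecay q (q ^ n / p) d x⁻¹`. -/
def TailDecay (q p : ℂ) (c : Fin n → ℂ) (x : ℂ) : Prop :=
  ‖p‖ * ∏ j, ‖c j‖ < 1 ∨ ∃ j, ∃ l : ℤ, c j = x * q ^ l

lemma TailDecay.mono {p' : ℂ} (h : TailDecay q p c x) (hp : ‖p'‖ ≤ ‖p‖) : TailDecay q p' c x :=
  h.imp_left <| lt_of_le_of_lt <| by gcongr

lemma TailDecay.update_pow_mul (hq0 : q ≠ 0) (h : TailDecay q p c x) (j : Fin n) (m : ℕ) :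
    TailDecay q (p / q ^ m) (Function.update c j (q ^ m * c j)) x := by
  refine h.imp (fun h => ?_) fun ⟨k, l, hk⟩ => ?_
  · rw [← norm_prod, ← norm_mul] at h ⊢
    rwa [prod_update_mul, ← mul_assoc, div_mul_cancel₀ p (pow_ne_zero m hq0)]
  · rcases eq_or_ne k j with rfl | hkj
    · refine ⟨k, l + m, ?_⟩
      rw [Function.update_self, hk, zpow_add₀ hq0, zpow_natCast]
      ring
    · exact ⟨k, l, by rw [Function.update_of_ne hkj, hk]⟩

lemma norm_mul_prod_norm_lt_one_of_apply_eq_zero (p : ℂ) {j : Fin n} (hj : c j = 0) :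
    ‖p‖ * ∏ i, ‖c i‖ < 1 := by
  rw [prod_eq_zero (f := fun i => ‖c i‖) (mem_univ j) (by simp [hj]), mul_zero]
  exact one_pos

lemma TailDecay.of_apply_eq_zero (q p x : ℂ) {j : Fin n} (hj : c j = 0) : TailDecay q p c x :=
  .inl (norm_mul_prod_norm_lt_one_of_apply_eq_zero p hj)

lemma tendsto_weight_ratio {X : Type*} {l : Filter X} {D C : X → Fin n → ℂ} (hq1 : ‖q‖ < 1)
    (hD : Tendsto D l (𝓝 d)) (hC : Tendsto C l (𝓝 c)) (p x : ℂ) :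
    Tendsto (fun am : X × ℕ => ∏ j, (1 - q * D am.1 j * (x * q ^ (am.2 : ℤ)))) (l ×ˢ atTop)
        (𝓝 1) ∧
      Tendsto (fun am : X × ℕ => p * ∏ j, (C am.1 j - x * q ^ (am.2 : ℤ))) (l ×ˢ atTop)
        (𝓝 (p * ∏ j, c j)) := by
  have hz : Tendsto (fun am : X × ℕ => x * q ^ (am.2 : ℤ)) (l ×ˢ atTop) (𝓝 0) := by
    simpa only [zpow_natCast, mul_comm x] using!
      (tendsto_pow_mul_zero hq1 x).comp (tendsto_snd (f := l))
  have hD' := fun j => (tendsto_pi_nhds.1 hD j).comp (tendsto_fst (g := (atTop : Filter ℕ)))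
  have hC' := fun j => (tendsto_pi_nhds.1 hC j).comp (tendsto_fst (g := (atTop : Filter ℕ)))
  constructor
  · simpa using tendsto_finsetProd univ fun j _ => (((hD' j).const_mul q).mul hz).const_sub 1
  · simpa using (tendsto_finsetProd univ fun j _ => (hC' j).sub hz).const_mul p

lemma exists_summable_bound_weight_natCast {X : Type*} {l : Filter X} {D C : X → Fin n → ℂ}
    (hq0 : q ≠ 0) (hq1 : ‖q‖ < 1) (hp : p ≠ 0) (hx : x ≠ 0) (hD : Tendsto D l (𝓝 d))
    (hC : Tendsto C l (𝓝 c))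
    (h : ‖p‖ * ∏ j, ‖c j‖ < 1 ∨ ∃ j, ∃ k : ℤ, ∀ a, C a j = x * q ^ k) :
    ∃ u : ℕ → ℝ, Summable u ∧ ∀ᶠ a in l, ∀ m : ℕ, ‖weight q p (D a) (C a) x m‖ ≤ u m := by
  have hbdd := fun m : ℕ => (tendsto_weight hq1 hD hC p x m).norm.isBoundedUnder_le
  rcases h with h | ⟨j, k, hj⟩
  · obtain ⟨hden, hnum⟩ := tendsto_weight_ratio hq1 hD hC p x
    have hρ := hnum.div hden one_ne_zero
    refine exists_summable_bound_of_tendsto_ratio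
      (ρ := fun a m => (p * ∏ j, (C a j - x * q ^ (m : ℤ))) /
        ∏ j, (1 - q * D a j * (x * q ^ (m : ℤ)))) (by simpa using h) hρ ?_ hbdd
    filter_upwards [hden.eventually_ne one_ne_zero] with am hne
    push_cast
    rw [div_mul_eq_mul_div, eq_div_iff hne, weight_add_one hq0 hq1 hp hx]
    ring
  · refine exists_summable_bound_of_tendsto_ratio (ρ := fun _ _ => 0) (A := 0) (by simp)
      tendsto_const_nhds ?_ hbdd
    filter_upwards [tendsto_snd.eventually (eventually_ge_atTop k.toNat)] with am hm
    rw [zero_mul, weight_eq_zero_of_lt hq0 hx p _ (hj am.1) (by push_cast; omega)]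

lemma exists_summable_bound_weight {X : Type*} {l : Filter X} {D C : X → Fin n → ℂ}
    (hq0 : q ≠ 0) (hq1 : ‖q‖ < 1) (hp : p ≠ 0) (hx : x ≠ 0) (hD : Tendsto D l (𝓝 d))
    (hC : Tendsto C l (𝓝 c))
    (hc : ‖p‖ * ∏ j, ‖c j‖ < 1 ∨ ∃ j, ∃ k : ℤ, ∀ a, C a j = x * q ^ k)
    (hd : ‖q ^ n / p‖ * ∏ j, ‖d j‖ < 1 ∨ ∃ j, ∃ k : ℤ, ∀ a, D a j = x⁻¹ * q ^ k) :
    ∃ u : ℤ → ℝ, Summable u ∧ ∀ᶠ a in l, ∀ ν, ‖weight q p (D a) (C a) x ν‖ ≤ u ν := by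
  obtain ⟨u, hu, hbound⟩ := exists_summable_bound_weight_natCast hq0 hq1 hp hx hD hC hc
  obtain ⟨v, hv, hbound'⟩ := exists_summable_bound_weight_natCast hq0 hq1
    (div_ne_zero (pow_ne_zero n hq0) hp) (inv_ne_zero hx) hC hD hd
  refine ⟨_, hu.int_rec ((summable_nat_add_iff 1).2 hv), ?_⟩
  filter_upwards [hbound, hbound'] with a ha ha'
  rintro (m | m)
  · exact ha m
  · rw [Int.negSucc_eq, weight_neg hq0]
    exact mod_cast ha' (m + 1)

lemma summable_norm_weight (hq0 : q ≠ 0) (hq1 : ‖q‖ < 1) (hp : p ≠ 0) (hx : x ≠ 0)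
    (hc : TailDecay q p c x) (hd : TailDecay q (q ^ n / p) d x⁻¹) :
    Summable fun ν => ‖weight q p d c x ν‖ := by
  obtain ⟨u, hu, hbound⟩ := exists_summable_bound_weight (l := pure ()) hq0 hq1 hp hx
    tendsto_const_nhds tendsto_const_nhds
    (hc.imp_right fun ⟨j, k, hj⟩ => ⟨j, k, fun _ => hj⟩)
    (hd.imp_right fun ⟨j, k, hj⟩ => ⟨j, k, fun _ => hj⟩)
  exact hu.of_nonneg_of_le (fun ν => norm_nonneg _) (eventually_pure.1 hbound)

end Weight

section Moments

variable {q p x : ℂ} {n : ℕ} {d c : Fin n → ℂ}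

/-- The `k`-th moment of the weight with respect to the points `x q ^ ν` of the bilateral
geometric lattice through `x`. -/
noncomputable def moment (q p : ℂ) (d c : Fin n → ℂ) (x : ℂ) (k : ℤ) : ℂ :=
  ∑' ν : ℤ, weight q p d c x ν * (x * q ^ ν) ^ k

lemma norm_pow_div_mul_zpow_le (hq0 : q ≠ 0) (hq1 : ‖q‖ < 1) (p : ℂ) {k : ℤ} (hk : k < n) :
    ‖q ^ n / (p * q ^ k)‖ ≤ ‖q / p‖ := by
  have hqk : q ^ n / (p * q ^ k) = q ^ (n - 1 - k) * (q / p) := by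
    rw [zpow_sub₀ hq0, zpow_sub_one₀ hq0, zpow_natCast]
    field_simp
  rw [hqk, norm_mul, norm_zpow]
  exact mul_le_of_le_one_left (norm_nonneg _)
    (zpow_le_one₀ (norm_pos_iff.2 hq0) hq1.le (by omega))

lemma summable_norm_weight_mul_zpow (hq0 : q ≠ 0) (hq1 : ‖q‖ < 1) (hp : p ≠ 0) (hx : x ≠ 0)
    {r k : ℤ} (hc : TailDecay q (p * q ^ r) c x) (hd : TailDecay q (q / p) d x⁻¹)
    (hr : r ≤ k) (hk : k < n) : Summable fun ν => ‖weight q p d c x ν * (x * q ^ ν) ^ k‖ := by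
  have hrk : ‖p * q ^ k‖ ≤ ‖p * q ^ r‖ := by
    rw [norm_mul, norm_mul, norm_zpow, norm_zpow]
    exact mul_le_mul_of_nonneg_left
      (zpow_le_zpow_right_of_le_one₀ (norm_pos_iff.2 hq0) hq1.le hr) (norm_nonneg p)
  simp only [weight_mul_zpow, norm_mul]
  exact (summable_norm_weight hq0 hq1 (mul_ne_zero hp (zpow_ne_zero k hq0)) hx (hc.mono hrk)
    (hd.mono (norm_pow_div_mul_zpow_le hq0 hq1 p hk))).mul_left _

lemma moment_eq_mul_moment_inv (hq0 : q ≠ 0) (hp : p ≠ 0) (hx : x ≠ 0) (d c : Fin n → ℂ) (k : ℤ) :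
    moment q p d c x k = x ^ (n - 1 : ℤ) * moment q (q / p) c d x⁻¹ (n - 1 - k) := by
  rw [moment, ← (Equiv.neg ℤ).tsum_eq, moment, ← tsum_mul_left]
  refine tsum_congr fun ν => ?_
  have hp' : q / p * q ^ (n - 1 - k) = q ^ n / p * q ^ (-k) := by
    rw [zpow_sub₀ hq0, zpow_sub_one₀ hq0, zpow_natCast, zpow_neg]
    field_simp
  have hz : x * q ^ (-ν) = (x⁻¹ * q ^ ν)⁻¹ := by rw [mul_inv, inv_inv, zpow_neg]
  rw [Equiv.neg_apply, weight_neg hq0, hz, inv_zpow', weight_mul_zpow, weight_mul_zpow, hp',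
    ← mul_assoc, inv_zpow', inv_zpow', ← zpow_add₀ hx]
  ring_nf

lemma tendsto_moment {X : Type*} {l : Filter X} {C : X → Fin n → ℂ} (hq0 : q ≠ 0)
    (hq1 : ‖q‖ < 1) (hp : p ≠ 0) (hx : x ≠ 0) (hC : Tendsto C l (𝓝 c))
    {k : ℤ} (hc : ‖p * q ^ k‖ * ∏ j, ‖c j‖ < 1) (hd : TailDecay q (q ^ n / (p * q ^ k)) d x⁻¹) :
    Tendsto (fun a => moment q p d (C a) x k) l (𝓝 (moment q p d c x k)) := by
  have hpk := mul_ne_zero hp (zpow_ne_zero k hq0)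
  obtain ⟨u, hu, hbound⟩ := exists_summable_bound_weight hq0 hq1 hpk hx tendsto_const_nhds hC
    (.inl hc) (hd.imp_right fun ⟨j, k, hj⟩ => ⟨j, k, fun _ => hj⟩)
  simp only [moment, weight_mul_zpow, tsum_mul_left]
  exact (tendsto_tsum_of_dominated_convergence hu
    (tendsto_weight hq1 tendsto_const_nhds hC _ x) hbound).const_mul _

lemma hasSum_weight_mul_eval_mul_inv (hq0 : q ≠ 0) (hq1 : ‖q‖ < 1) (hp : p ≠ 0) (hx : x ≠ 0)
    (hc : TailDecay q (p / q) c x) (hd : TailDecay q (q / p) d x⁻¹) {P : ℂ[X]}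
    (hP : P.natDegree ≤ n) :
    HasSum (fun ν => weight q p d c x ν * (P.eval (x * q ^ ν) * (x * q ^ ν)⁻¹))
      (∑ k ∈ range (n + 1), P.coeff k * moment q p d c x (k - 1)) := by
  rw [div_eq_mul_inv, ← zpow_neg_one] at hc
  have heval : ∀ ν, weight q p d c x ν * (P.eval (x * q ^ ν) * (x * q ^ ν)⁻¹) =
      ∑ k ∈ range (n + 1), P.coeff k * (weight q p d c x ν * (x * q ^ ν) ^ (k - 1 : ℤ)) := by
    intro ν
    rw [Polynomial.eval_eq_sum_range' (Nat.lt_succ_of_le hP), sum_mul, mul_sum]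
    refine sum_congr rfl fun k _ => ?_
    rw [zpow_sub_one₀ (mul_ne_zero hx (zpow_ne_zero ν hq0)), zpow_natCast]
    ring
  simp only [heval]
  exact hasSum_sum fun k hk => (summable_norm_weight_mul_zpow hq0 hq1 hp hx hc hd (by omega)
    (by have := mem_range.1 hk; omega)).of_norm.hasSum.mul_left (P.coeff k)

/-- The polynomial whose coefficients give the linear recurrence satisfied by the moments; see
`sum_coeff_momentRecurrence_mul_moment`. -/
noncomputable def momentRecurrence (q p : ℂ) (d c : Fin n → ℂ) : ℂ[X] :=
  ∏ j, (1 - C (d j) * X) - C (p / q) * ∏ j, (C (c j) - X)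

lemma natDegree_momentRecurrence_le (q p : ℂ) (d c : Fin n → ℂ) :
    (momentRecurrence q p d c).natDegree ≤ n :=
  (Polynomial.natDegree_sub_le _ _).trans <|
    max_le (by simpa using natDegree_prod_one_sub_C_mul_X_le d) <|
      (Polynomial.natDegree_C_mul_le _ _).trans (by simpa using natDegree_prod_C_sub_X_le c)

lemma eval_momentRecurrence (q p : ℂ) (d c : Fin n → ℂ) (z : ℂ) :
    (momentRecurrence q p d c).eval z =
      ∏ j, (1 - d j * z) - p / q * ∏ j, (c j - z) := by
  simp [momentRecurrence, Polynomial.eval_prod]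

lemma sum_coeff_momentRecurrence_mul_moment (hq0 : q ≠ 0) (hq1 : ‖q‖ < 1) (hp : p ≠ 0)
    (hx : x ≠ 0) (hc : TailDecay q (p / q) c x) (hd : TailDecay q (q / p) d x⁻¹) :
    ∑ k ∈ range (n + 1), (momentRecurrence q p d c).coeff k * moment q p d c x (k - 1) = 0 := by
  have hsum := fun {P : ℂ[X]} => hasSum_weight_mul_eval_mul_inv hq0 hq1 hp hx hc hd (P := P)
  have hd' := hsum (by simpa using natDegree_prod_one_sub_C_mul_X_le d)
  have hc' := hsum (by simpa using natDegree_prod_C_sub_X_le c)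
  have hz : ∀ ν : ℤ, x * q ^ (ν + 1) = q * (x * q ^ ν) := fun ν => by
    rw [zpow_add_one₀ hq0, ← mul_assoc, mul_comm q]
  have hshift : ∀ ν, weight q p d c x (ν + 1) *
        ((∏ j, (1 - C (d j) * X)).eval (x * q ^ (ν + 1)) * (x * q ^ (ν + 1))⁻¹) =
      p / q * (weight q p d c x ν * ((∏ j, (C (c j) - X)).eval (x * q ^ ν) * (x * q ^ ν)⁻¹)) := by
    intro ν
    have hrec := weight_add_one hq0 hq1 hp hx d c ν
    simp only [mul_assoc q] at hrec
    simp only [Polynomial.eval_prod, Polynomial.eval_sub, Polynomial.eval_one,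
      Polynomial.eval_mul, Polynomial.eval_C, Polynomial.eval_X, hz,
      mul_left_comm (d _) q]
    rw [← mul_assoc, hrec, mul_inv]
    ring
  have heq := ((Equiv.addRight (1 : ℤ)).hasSum_iff.2 hd').unique <| by
    simpa only [Function.comp_def, Equiv.coe_addRight, hshift] using hc'.mul_left (p / q)
  simp only [momentRecurrence, Polynomial.coeff_sub, Polynomial.coeff_C_mul, sub_mul,
    sum_sub_distrib, heq, mul_assoc, mul_sum, sub_self]

end Moments

section MomentDet

variable {q p : ℂ} {n : ℕ} {d c x : Fin n → ℂ}

/-- The determinant of the first `n` moments of the weights through `x 0, …, x (n - 1)`. It is the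
sum over `ν` of the product of the weights and the Vandermonde determinant; see
`hasSum_det_vandermonde_mul_prod_weight`. -/
noncomputable def momentDet (q p : ℂ) (d c x : Fin n → ℂ) : ℂ :=
  (Matrix.of fun i j : Fin n => moment q p d c (x i) j).det

lemma hasSum_det_vandermonde_mul_prod_weight (hq0 : q ≠ 0) (hq1 : ‖q‖ < 1) (hp : p ≠ 0)
    (hx : ∀ i, x i ≠ 0) (hc : ∀ i, TailDecay q p c (x i))
    (hd : ∀ i, TailDecay q (q / p) d (x i)⁻¹) :
    HasSum (fun ν : Fin n → ℤ => (Matrix.vandermonde fun i => x i * q ^ ν i).det *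
      ∏ i, weight q p d c (x i) (ν i)) (momentDet q p d c x) := by
  have hsummable := fun i (j : Fin n) => summable_norm_weight_mul_zpow hq0 hq1 hp (hx i)
    (r := 0) (k := j) (by simpa using hc i) (hd i) (by omega) (by omega)
  have hexpand : ∀ ν : Fin n → ℤ, (Matrix.vandermonde fun i => x i * q ^ ν i).det *
      ∏ i, weight q p d c (x i) (ν i) = ∑ σ : Equiv.Perm (Fin n), (Equiv.Perm.sign σ : ℂ) *
        ∏ i, weight q p d c (x i) (ν i) * (x i * q ^ ν i) ^ (σ i : ℤ) := fun ν => by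
    rw [← Matrix.det_transpose, Matrix.det_apply', sum_mul]
    refine sum_congr rfl fun σ _ => ?_
    simp only [Matrix.transpose_apply, Matrix.vandermonde_apply, prod_mul_distrib, zpow_natCast]
    ring
  rw [funext hexpand, momentDet, ← Matrix.det_transpose, Matrix.det_apply']
  exact hasSum_sum fun σ _ => (hasSum_prod_apply fun i => hsummable i (σ i)).mul_left _

lemma momentDet_eq_mul_momentDet_inv (hq0 : q ≠ 0) (hp : p ≠ 0) (hx : ∀ i, x i ≠ 0)
    (d c : Fin n → ℂ) :
    momentDet q p d c x = (∏ i, x i ^ (n - 1 : ℤ)) *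
      ((Equiv.Perm.sign (Fin.revPerm (n := n)) : ℂ) * momentDet q (q / p) c d x⁻¹) := by
  rw [momentDet, momentDet, ← Matrix.det_permute', ← Matrix.det_mul_column]
  congr 1
  ext i j
  have hrev : ((Fin.rev j : ℕ) : ℤ) = n - 1 - j := by rw [Fin.val_rev]; omega
  simp only [Matrix.of_apply, Matrix.submatrix_apply, id, Fin.revPerm_apply, hrev, Pi.inv_apply,
    moment_eq_mul_moment_inv hq0 hp (hx i) d c j]

lemma moment_sub_mul_moment_update_mul (hq0 : q ≠ 0) (hq1 : ‖q‖ < 1) (hp : p ≠ 0) {y : ℂ}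
    (hy : y ≠ 0) (hc : TailDecay q p c y) (hd : TailDecay q (q / p) d y⁻¹) (j k : Fin n) :
    moment q p d (Function.update c j (q * c j)) y k -
        q * c j * moment q p d (Function.update c j (q * c j)) y (k - 1) =
      moment q p d c y k := by
  have hc' := hc.update_pow_mul hq0 j 1
  rw [pow_one, div_eq_mul_inv, ← zpow_neg_one] at hc'
  have hsummable := fun l h h' =>
    (summable_norm_weight_mul_zpow hq0 hq1 hp hy (k := l) hc' hd h h').of_norm
  rw [moment, moment, ← tsum_mul_left, ← (hsummable k (by omega) (by omega)).tsum_sub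
    ((hsummable (k - 1) (by omega) (by omega)).mul_left _)]
  refine tsum_congr fun ν => ?_
  rw [← weight_update_mul hq1 p y d c j, zpow_sub_one₀ (mul_ne_zero hy (zpow_ne_zero ν hq0))]
  ring

lemma one_sub_mul_momentDet (hq0 : q ≠ 0) (hq1 : ‖q‖ < 1) (hp : p ≠ 0) (hx : ∀ i, x i ≠ 0)
    (hc : ∀ i, TailDecay q p c (x i)) (hd : ∀ i, TailDecay q (q / p) d (x i)⁻¹) (j : Fin n) :
    (1 - p * ∏ k, c k) * momentDet q p d c x =
      (∏ i, (1 - q * d i * c j)) * momentDet q p d (Function.update c j (q * c j)) x := by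
  set c' := Function.update c j (q * c j)
  have hc' := fun i => by simpa using (hc i).update_pow_mul hq0 j 1
  have hdet := coeff_zero_mul_det_sub (fun i (k : ℕ) => moment q p d c' (x i) (k - 1))
    (momentRecurrence q p d c') (natDegree_momentRecurrence_le q p d c')
    (fun i => sum_coeff_momentRecurrence_mul_moment hq0 hq1 hp (hx i) (hc' i) (hd i)) (q * c j)
  have hcoeff : (momentRecurrence q p d c').coeff 0 = 1 - p * ∏ k, c k := by
    rw [Polynomial.coeff_zero_eq_eval_zero, eval_momentRecurrence]
    simp [c', prod_update_mul, ← mul_assoc, hq0]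
  have hroot : ∏ k, (c' k - q * c j) = 0 := prod_eq_zero (mem_univ j) (by simp [c'])
  have heval : (momentRecurrence q p d c').eval (q * c j) = ∏ i, (1 - q * d i * c j) := by
    rw [eval_momentRecurrence, hroot, mul_zero, sub_zero]
    simp only [mul_left_comm, mul_assoc]
  simpa only [hcoeff, heval, Nat.cast_add, Nat.cast_one, add_sub_cancel_right, momentDet, c',
    moment_sub_mul_moment_update_mul hq0 hq1 hp (hx _) (hc _) (hd _)] using hdet

lemma continuousAt_momentDet_update (hq0 : q ≠ 0) (hq1 : ‖q‖ < 1) (hp : p ≠ 0)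
    (hx : ∀ i, x i ≠ 0) (hd : ∀ i, TailDecay q (q / p) d (x i)⁻¹) (c : Fin n → ℂ) (j : Fin n) :
    ContinuousAt (fun u => momentDet q p d (Function.update c j u) x) 0 := by
  have hentry : ∀ i k : Fin n,
      ContinuousAt (fun u => moment q p d (Function.update c j u) (x i) k) 0 := fun i k =>
    tendsto_moment hq0 hq1 hp (hx i) ((continuous_const.update j continuous_id).tendsto 0)
      (norm_mul_prod_norm_lt_one_of_apply_eq_zero (j := j) _ (by simp))
      ((hd i).mono (norm_pow_div_mul_zpow_le hq0 hq1 p (by omega)))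
  exact (Continuous.matrix_det continuous_id).continuousAt.comp
    (continuousAt_pi.2 fun i => continuousAt_pi.2 fun k => hentry i k)

lemma qp_mul_momentDet_update_zero (hq0 : q ≠ 0) (hq1 : ‖q‖ < 1) (hp : p ≠ 0)
    (hx : ∀ i, x i ≠ 0) (hc : ∀ i, TailDecay q p c (x i))
    (hd : ∀ i, TailDecay q (q / p) d (x i)⁻¹) (j : Fin n) :
    qp q (p * ∏ k, c k) * momentDet q p d c x =
      (∏ i, qp q (q * d i * c j)) * (qp q (p * ∏ k, Function.update c j 0 k) *
        momentDet q p d (Function.update c j 0) x) := by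
  have hcont : ContinuousAt (fun u => qp q (p * ∏ k, Function.update c j u k) *
      momentDet q p d (Function.update c j u) x) 0 :=
    ((continuous_qp hq1).comp (by fun_prop)).continuousAt.mul
      (continuousAt_momentDet_update hq0 hq1 hp hx hd c j)
  have h := eq_prod_qp_mul_of_forall_eq_prod_one_sub_mul hq1 hcont (fun i => q * d i) (c j)
    fun m => ?_
  · simpa using h
  have hpm : ‖p‖ ≤ ‖p / q ^ m‖ := by
    rw [norm_div, norm_pow]
    exact le_div_self (norm_nonneg p) (pow_pos (norm_pos_iff.2 hq0) m)
      (pow_le_one₀ (norm_nonneg q) hq1.le)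
  have hcm := fun i => ((hc i).update_pow_mul hq0 j m).mono hpm
  have hstep := one_sub_mul_momentDet hq0 hq1 hp hx hcm hd j
  have hupdate : Function.update (Function.update c j (q ^ m * c j)) j
      (q * Function.update c j (q ^ m * c j) j) = Function.update c j (q ^ (m + 1) * c j) := by
    rw [Function.update_idem, Function.update_self, pow_succ', mul_assoc]
  have hprod : q * (p * ∏ k, Function.update c j (q ^ m * c j) k) =
      p * ∏ k, Function.update c j (q ^ (m + 1) * c j) k := by
    rw [prod_update_mul, prod_update_mul, pow_succ]
    ring
  rw [hupdate, Function.update_self] at hstep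
  rw [qp_eq_one_sub_mul hq1, mul_right_comm, hstep, hprod]
  ring

lemma qp_mul_momentDet_eq_prod_qp_mul (hq0 : q ≠ 0) (hq1 : ‖q‖ < 1) (hp : p ≠ 0)
    (hx : ∀ i, x i ≠ 0) (hc : ∀ i, TailDecay q p c (x i))
    (hd : ∀ i, TailDecay q (q / p) d (x i)⁻¹) :
    qp q (p * ∏ k, c k) * momentDet q p d c x =
      (∏ j, ∏ i, qp q (q * d i * c j)) *
        (qp q (p * ∏ _k : Fin n, 0) * momentDet q p d 0 x) := by
  suffices h : ∀ s : Finset (Fin n), (∀ i, TailDecay q p (s.piecewise 0 c) (x i)) ∧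
      qp q (p * ∏ k, c k) * momentDet q p d c x = (∏ j ∈ s, ∏ i, qp q (q * d i * c j)) *
        (qp q (p * ∏ k, s.piecewise 0 c k) * momentDet q p d (s.piecewise 0 c) x) by
    simpa using (h univ).2
  intro s
  induction s using Finset.induction_on with
  | empty => simpa using hc
  | insert j s hj ih =>
    have hcj : s.piecewise 0 c j = c j := piecewise_eq_of_notMem _ _ _ hj
    rw [piecewise_insert, ih.2, qp_mul_momentDet_update_zero hq0 hq1 hp hx ih.1 hd j, hcj,
      prod_insert hj]
    exact ⟨fun i => .of_apply_eq_zero _ _ _ (j := j) (by simp), by simp only [Pi.zero_apply]; ring⟩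

/-- `momentDet` multiplied by the two factors that cancel its poles as a function of `d` and
`c`. -/
noncomputable def normMomentDet (q p : ℂ) (d c x : Fin n → ℂ) : ℂ :=
  qp q (p * ∏ j, c j) * qp q (q / p * ∏ i, d i) * momentDet q p d c x

lemma normMomentDet_eq_mul_normMomentDet_inv (hq0 : q ≠ 0) (hp : p ≠ 0) (hx : ∀ i, x i ≠ 0)
    (d c : Fin n → ℂ) :
    normMomentDet q p d c x = (∏ i, x i ^ (n - 1 : ℤ)) *
      ((Equiv.Perm.sign (Fin.revPerm (n := n)) : ℂ) * normMomentDet q (q / p) c d x⁻¹) := by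
  rw [normMomentDet, normMomentDet, momentDet_eq_mul_momentDet_inv hq0 hp hx,
    div_div_cancel₀ hq0]
  ring

lemma normMomentDet_eq_prod_qp_mul_zero_right (hq0 : q ≠ 0) (hq1 : ‖q‖ < 1) (hp : p ≠ 0)
    (hx : ∀ i, x i ≠ 0) (hc : ∀ i, TailDecay q p c (x i))
    (hd : ∀ i, TailDecay q (q / p) d (x i)⁻¹) :
    normMomentDet q p d c x = (∏ i, ∏ j, qp q (q * d i * c j)) * normMomentDet q p d 0 x := by
  have h := qp_mul_momentDet_eq_prod_qp_mul hq0 hq1 hp hx hc hd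
  rw [Finset.prod_comm] at h
  simp only [normMomentDet, mul_right_comm _ (qp q (q / p * _)), h, Pi.zero_apply, mul_assoc]

lemma normMomentDet_eq_prod_qp_mul_zero (hq0 : q ≠ 0) (hq1 : ‖q‖ < 1) (hp : p ≠ 0)
    (hx : ∀ i, x i ≠ 0) (hc : ∀ i, TailDecay q p c (x i))
    (hd : ∀ i, TailDecay q (q / p) d (x i)⁻¹) :
    normMomentDet q p d c x = (∏ i, ∏ j, qp q (q * d i * c j)) * normMomentDet q p 0 0 x := by
  have hzero := fun (i : Fin n) (y : ℂ) =>
    TailDecay.of_apply_eq_zero q (q / (q / p)) y (c := (0 : Fin n → ℂ)) (j := i) rfl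
  rw [normMomentDet_eq_prod_qp_mul_zero_right hq0 hq1 hp hx hc hd,
    normMomentDet_eq_mul_normMomentDet_inv hq0 hp hx,
    normMomentDet_eq_prod_qp_mul_zero_right hq0 hq1 (div_ne_zero hq0 hp)
      (x := x⁻¹) (fun i => inv_ne_zero (hx i)) hd fun i => hzero i _,
    normMomentDet_eq_mul_normMomentDet_inv hq0 hp hx 0 0]
  simp

lemma moment_inv_self (hq0 : q ≠ 0) (hx : ∀ i, x i ≠ 0) (p : ℂ) (i : Fin n) (k : ℤ) :
    moment q p x⁻¹ x (x i) k =
      (∏ j, qp q (q * (x j)⁻¹ * x i) * qp q (q * x j * (x i)⁻¹)) * x i ^ k := by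
  rw [moment, tsum_eq_single 0 fun ν hν => ?_]
  · simp [weight]
  rcases hν.lt_or_gt with hν | hν
  · rw [← neg_neg ν, weight_neg hq0, weight_eq_zero_of_lt hq0 (inv_ne_zero (hx i)) (j := i) (l := 0)
      _ _ (by simp) (neg_pos.2 hν), zero_mul]
  · rw [weight_eq_zero_of_lt hq0 (hx i) (j := i) (l := 0) _ _ (by simp) hν, zero_mul]

lemma momentDet_inv_self (hq0 : q ≠ 0) (hx : ∀ i, x i ≠ 0) (p : ℂ) :
    momentDet q p x⁻¹ x x =
      (∏ i, ∏ j, qp q (q * (x i)⁻¹ * x j)) ^ 2 * (Matrix.vandermonde x).det := by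
  have hsq : ∏ i, ∏ j, qp q (q * (x j)⁻¹ * x i) * qp q (q * x j * (x i)⁻¹) =
      (∏ i, ∏ j, qp q (q * (x i)⁻¹ * x j)) ^ 2 := by
    simp only [prod_mul_distrib, sq]
    rw [Finset.prod_comm]
    simp only [mul_right_comm q]
  rw [momentDet, ← hsq, ← Matrix.det_mul_column]
  congr 1
  ext i j
  simp [moment_inv_self hq0 hx]

lemma prod_qp_mul_det_vandermonde (hq1 : ‖q‖ < 1) (hx : ∀ i, x i ≠ 0) :
    (∏ i, ∏ j, qp q (q * (x i)⁻¹ * x j)) * (Matrix.vandermonde x).det =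
      qp q q ^ n * thetaVandermonde q x := by
  have hdiag : ∀ i, ∏ j, qp q (q * (x i)⁻¹ * x j) =
      (∏ j ∈ {i}ᶜ, qp q (q * (x i)⁻¹ * x j)) * qp q q := fun i => by
    rw [Fintype.prod_eq_prod_compl_mul i, inv_mul_cancel_right₀ (hx i)]
  rw [thetaVandermonde_eq hq1 hx, prod_congr rfl fun i _ => hdiag i, prod_mul_distrib,
    ← prod_prod_Ioi_mul_eq_prod_prod_off_diag, prod_const, card_univ, Fintype.card_fin]
  simp only [mul_right_comm q, mul_left_comm, mul_comm]

lemma normMomentDet_zero (hq0 : q ≠ 0) (hq1 : ‖q‖ < 1) (hp : p ≠ 0) (hx : ∀ i, x i ≠ 0)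
    (hxx : ∀ i j, i ≠ j → ∀ m : ℤ, x i / x j ≠ q ^ m) :
    normMomentDet q p 0 0 x =
      qp q q ^ n * (theta q (p * ∏ i, x i) * thetaVandermonde q x) := by
  have hreduce := normMomentDet_eq_prod_qp_mul_zero hq0 hq1 hp hx (d := x⁻¹) (c := x)
    (fun i => .inr ⟨i, 0, by simp⟩) (fun i => .inr ⟨i, 0, by simp⟩)
  have hvandermonde := prod_qp_mul_det_vandermonde hq1 hx
  have hne := left_ne_zero_of_mul <| hvandermonde.trans_ne <| mul_ne_zero
    (pow_ne_zero n (qp_ne_zero_of_norm_lt_one hq1 hq1)) (thetaVandermonde_ne_zero hq0 hq1 hx hxx)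
  have htheta : qp q (p * ∏ i, x i) * qp q (q / p * ∏ i, x⁻¹ i) = theta q (p * ∏ i, x i) := by
    rw [theta, mul_inv, ← mul_assoc q, ← div_eq_mul_inv q, ← prod_inv_distrib]
    rfl
  refine mul_left_cancel₀ hne ?_
  rw [normMomentDet, htheta, momentDet_inv_self hq0 hx, sq] at hreduce
  simp only [Pi.inv_apply] at hreduce
  rw [← hreduce, mul_left_comm (qp q q ^ n), ← hvandermonde]
  ring

lemma normMomentDet_eq (hq0 : q ≠ 0) (hq1 : ‖q‖ < 1) (hp : p ≠ 0) (hx : ∀ i, x i ≠ 0)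
    (hxx : ∀ i j, i ≠ j → ∀ m : ℤ, x i / x j ≠ q ^ m) (hc : ∀ i, TailDecay q p c (x i))
    (hd : ∀ i, TailDecay q (q / p) d (x i)⁻¹) :
    normMomentDet q p d c x = (∏ i, ∏ j, qp q (q * d i * c j)) *
      (qp q q ^ n * (theta q (p * ∏ i, x i) * thetaVandermonde q x)) := by
  rw [normMomentDet_eq_prod_qp_mul_zero hq0 hq1 hp hx hc hd, normMomentDet_zero hq0 hq1 hp hx hxx]

end MomentDet

section MacdonaldSum

variable {q t s : ℂ} {n : ℕ} {a b x : Fin n → ℂ}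

lemma macTerm_eq (hq0 : q ≠ 0) (hq1 : ‖q‖ < 1) (hp : t * ∏ i, b i ≠ 0)
    (hs : s * ∏ i, a i = q / (t * ∏ i, b i)) (hx : ∀ i, x i ≠ 0)
    (hne : theta q (t * (∏ i, b i) * ∏ i, x i) * thetaVandermonde q x ≠ 0) (ν : Fin n → ℤ) :
    macTerm q t s a b x ν =
      (theta q (t * (∏ i, b i) * ∏ i, x i) * thetaVandermonde q x)⁻¹ *
        ((Matrix.vandermonde fun i => x i * q ^ ν i).det *
          ∏ i, weight q (t * ∏ i, b i) a⁻¹ b⁻¹ (x i) (ν i)) := by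
  have hperiod := theta_mul_thetaVandermonde_zpow hq0 hq1 hp hx ν
  rw [← hperiod] at hne ⊢
  rw [thetaVandermonde_eq hq1 fun i => mul_ne_zero (hx i) (zpow_ne_zero (ν i) hq0)] at hne ⊢
  simp only [mul_ne_zero_iff] at hne
  obtain ⟨⟨hθ, hdet, _⟩, hquasi⟩ := hne
  have hθ' : qp q (s * (∏ i, a i) * (∏ i, x i * q ^ ν i)⁻¹) *
      qp q (t * (∏ i, b i) * ∏ i, x i * q ^ ν i) =
        theta q (t * (∏ i, b i) * ∏ i, x i * q ^ ν i) := by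
    rw [theta, hs, mul_comm, mul_inv, ← mul_assoc q, div_eq_mul_inv]
  rw [macTerm, hθ']
  simp only [weight, Pi.inv_apply, prod_mul_distrib (f := fun _ => ∏ _, _)]
  field_simp

theorem macdonald_type_sum_general (hq0 : q ≠ 0) (hq1 : ‖q‖ < 1)
    (hbal : (∏ i, a i) * (∏ i, b i) * t * s = q) (ht1 : ‖t‖ < 1) (hs1 : ‖s‖ < 1)
    (hx : ∀ i, x i ≠ 0) (hxx : ∀ i j, i ≠ j → ∀ m : ℤ, x i / x j ≠ q ^ m)
    (htx : ∀ m : ℤ, t * (∏ i, b i) * ∏ i, x i ≠ q ^ m) :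
    HasSum (macTerm q t s a b x)
      (qp q q ^ n * (∏ i, ∏ j, qp q (q * (a i)⁻¹ * (b j)⁻¹)) / (qp q t * qp q s)) := by
  obtain ⟨⟨⟨ha, hb⟩, ht⟩, _⟩ := by simpa only [mul_ne_zero_iff] using hbal.trans_ne hq0
  have hp : t * ∏ i, b i ≠ 0 := mul_ne_zero ht hb
  have hpb : t * (∏ i, b i) * ∏ i, b⁻¹ i = t := by
    simp only [Pi.inv_apply, prod_inv_distrib, mul_inv_cancel_right₀ hb]
  have hsa : s * ∏ i, a i = q / (t * ∏ i, b i) := by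
    rw [eq_div_iff hp, ← hbal]
    ring
  have hpa : q / (t * ∏ i, b i) * ∏ i, a⁻¹ i = s := by
    simp only [← hsa, Pi.inv_apply, prod_inv_distrib, mul_inv_cancel_right₀ ha]
  have hc : ∀ i, TailDecay q (t * ∏ i, b i) b⁻¹ (x i) := fun i =>
    .inl <| by rwa [← norm_prod, ← norm_mul, hpb]
  have hd : ∀ i, TailDecay q (q / (t * ∏ i, b i)) a⁻¹ (x i)⁻¹ := fun i =>
    .inl <| by rwa [← norm_prod, ← norm_mul, hpa]
  have hne := mul_ne_zero (theta_ne_zero hq0 hq1 htx) (thetaVandermonde_ne_zero hq0 hq1 hx hxx)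
  have hdet := normMomentDet_eq hq0 hq1 hp hx hxx hc hd
  rw [normMomentDet, hpb, hpa] at hdet
  have hvalue : qp q q ^ n * (∏ i, ∏ j, qp q (q * (a i)⁻¹ * (b j)⁻¹)) / (qp q t * qp q s) =
      (theta q (t * (∏ i, b i) * ∏ i, x i) * thetaVandermonde q x)⁻¹ *
        momentDet q (t * ∏ i, b i) a⁻¹ b⁻¹ x := by
    rw [inv_mul_eq_div, div_eq_div_iff (mul_ne_zero (qp_ne_zero_of_norm_lt_one hq1 ht1)
      (qp_ne_zero_of_norm_lt_one hq1 hs1)) hne, mul_comm (momentDet _ _ _ _ _), hdet]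
    simp only [Pi.inv_apply]
    ring
  rw [hvalue, funext (macTerm_eq hq0 hq1 hp hsa hx hne)]
  exact (hasSum_det_vandermonde_mul_prod_weight hq0 hq1 hp hx hc hd).mul_left _

end MacdonaldSum

/-- The Macdonald-type bilateral sum evaluates to an `x`-independent constant. -/
theorem macdonald_type_sum
    (q : ℝ) (hq0 : 0 < q) (hq1 : q < 1) (n : ℕ) (hn : 1 ≤ n)
    (a b : Fin n → ℂ) (ha : ∀ i, a i ≠ 0) (hb : ∀ i, b i ≠ 0)
    (t s : ℂ) (ht0 : t ≠ 0) (hs0 : s ≠ 0)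
    (hbal : (∏ i, a i) * (∏ i, b i) * t * s = (q : ℂ))
    (ht1 : ‖t‖ < 1) (hs1 : ‖s‖ < 1)
    (x : Fin n → ℂ) (hx : ∀ i, x i ≠ 0)
    (hxx : ∀ i j, i ≠ j → ∀ m : ℤ, x i / x j ≠ (q : ℂ) ^ m)
    (htx : ∀ m : ℤ, t * (∏ i, b i) * ∏ i, x i ≠ (q : ℂ) ^ m) :
    (1 - (q : ℂ)) ^ n * ∑' ν : Fin n → ℤ, macTerm (q : ℂ) t s a b x ν =
      (1 - (q : ℂ)) ^ n * qp (q : ℂ) (q : ℂ) ^ n *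
        (∏ i, ∏ j, qp (q : ℂ) ((q : ℂ) * (a i)⁻¹ * (b j)⁻¹)) /
        (qp (q : ℂ) t * qp (q : ℂ) s) := by
  rw [(macdonald_type_sum_general (mod_cast hq0.ne') (by simpa [abs_of_pos hq0] using hq1) hbal ht1
    hs1 hx hxx htx).tsum_eq]
  ring
end

section
/- Suppose |a_i| < 1 and |b_i| < 1 for all 1 ≤ i ≤ n, and t, s ∈ ℂ^* satisfy a_1⋯a_n b_1⋯b_n · t · s = q. Then (1/n!) (2π)^{−n} ∫_{[0,2π]ⁿ} F(e^{iθ_1},…,e^{iθ_n}) dθ_1⋯dθ_n = (q t⁻¹)_∞ (q s⁻¹)_∞ / [ (q)_∞ⁿ · ∏_{i=1}^n ∏_{j=1}^n (a_i b_j)_∞ ], where F(z_1,…,z_n) := (t a_1⋯a_n z_1⁻¹⋯z_n⁻¹)_∞ (s b_1⋯b_n z_1⋯z_n)_∞ / [ ∏_{i=1}^n ∏_{j=1}^n (a_i z_j⁻¹)_∞ (b_i z_j)_∞ ] · ∏_{1≤i<j≤n} (z_i/z_j)_∞ (z_j/z_i)_∞. (Contour-integral corollary over the n-torus of the Macdonald-type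 sum, with t = q^α, s = q^β.) -/
open scoped BigOperators
open Finset MeasureTheory

/-- Integrand of the contour integral over the `n`-torus. -/
noncomputable def torusKer {n : ℕ} (q t s : ℂ) (a b : Fin n → ℂ) (z : Fin n → ℂ) : ℂ :=
  qp q (t * (∏ i, a i) * (∏ i, z i)⁻¹) * qp q (s * (∏ i, b i) * ∏ i, z i) /
      (∏ i, ∏ j, qp q (a i * (z j)⁻¹) * qp q (b i * z j)) *
    ∏ i, ∏ j ∈ Finset.Ioi i, qp q (z i / z j) * qp q (z j / z i)

/-!
With `u = t ∏ aᵢ` the balancing condition turns the integrand into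
`θ(u / ∏ zᵢ) ∏ᵢ w(zᵢ) ∏_{i < j} (zᵢ/zⱼ)_∞ (zⱼ/zᵢ)_∞`, where `θ(x) = (x)_∞ (q/x)_∞` and
`w(x) = ∏ᵢ 1 / ((aᵢ/x)_∞ (bᵢ x)_∞)`. Replacing `(zⱼ/zₖ)_∞ (zₖ/zⱼ)_∞` by `θ(zⱼ/zₖ)` for one
distinguished variable `zⱼ` makes the integrand quasi-periodic under `zⱼ ↦ q zⱼ`, and summing over
`j` recovers symmetric integrands by Lagrange interpolation. By Cauchy's theorem the shift does
not change the integral as long as no pole is crossed, which gives a relation between the averages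
at `(aᵢ, u)` and at `(q aᵢ, q u)`. Together with its mirror image under `z ↦ z⁻¹` it reads
`Ψ(a, b) = (1 - u ∏ bₗ) (1 - (q/u) ∏ aₗ) Ψ(…, q aᵢ, …; …, q bᵢ, …)` for the average `Ψ` normalized
by `∏ (aᵢ bⱼ)_∞`, and iterating this relation reduces everything to `a = b = 0`. That constant is
found by induction on `n`: the weight `1 / θ(α/x)` is a case of `w`, and the same shift now
crosses one simple pole, at `α`, whose residue is the integrand in one variable fewer.
-/

namespace QTorus

open Filter Metric Real Topology

/-! ### The q-Pochhammer symbol and the theta function -/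

section QPochhammer

variable {q x : ℂ}

lemma summable_norm_pow_mul (hq : ‖q‖ < 1) (x : ℂ) : Summable fun i : ℕ => ‖-(q ^ i * x)‖ := by
  simpa only [norm_neg, norm_mul, norm_pow] using
    (summable_geometric_of_lt_one (norm_nonneg q) hq).mul_right ‖x‖

lemma multipliable_qp (hq : ‖q‖ < 1) (x : ℂ) : Multipliable fun i : ℕ => 1 - q ^ i * x := by
  simpa only [sub_eq_add_neg] using multipliable_one_add_of_summable (summable_norm_pow_mul hq x)

lemma qp_eq_one_sub_mul (hq : ‖q‖ < 1) (x : ℂ) : qp q x = (1 - x) * qp q (q * x) := by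
  have hmul : Multipliable fun i : ℕ => 1 - q ^ (i + 1) * x := by
    simpa only [pow_succ, mul_assoc] using multipliable_qp hq (q * x)
  unfold qp
  rw [tprod_eq_zero_mul' (f := fun i : ℕ => 1 - q ^ i * x) hmul]
  simp only [pow_zero, one_mul, pow_succ, mul_assoc]

@[simp]
lemma qp_zero (q : ℂ) : qp q 0 = 1 := by simp [qp]

lemma qp_one (hq : ‖q‖ < 1) : qp q 1 = 0 := by
  rw [qp_eq_one_sub_mul hq, sub_self, zero_mul]

lemma qp_ne_zero (hq : ‖q‖ < 1) (hx : ‖x‖ < 1) : qp q x ≠ 0 := by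
  have hfactor (i : ℕ) : 1 + -(q ^ i * x) ≠ 0 := by
    refine fun h => (norm_one (α := ℂ)).not_lt ?_
    calc ‖(1 : ℂ)‖ = ‖q‖ ^ i * ‖x‖ := by rw [← norm_pow, ← norm_mul, eq_neg_of_add_eq_zero_left h,
            neg_neg]
      _ ≤ 1 * ‖x‖ := by gcongr; exact pow_le_one₀ (norm_nonneg q) hq.le
      _ < 1 := by rwa [one_mul]
  simpa only [qp, sub_eq_add_neg] using
    tprod_one_add_ne_zero_of_summable hfactor (summable_norm_pow_mul hq x)

lemma differentiable_qp (hq : ‖q‖ < 1) : Differentiable ℂ (qp q) := by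
  intro x
  have hlim := Summable.hasProdLocallyUniformlyOn_nat_one_add (K := ball (0 : ℂ) (‖x‖ + 1))
    (f := fun i y => -(q ^ i * y)) (u := fun i => ‖q‖ ^ i * (‖x‖ + 1)) isOpen_ball
    ((summable_geometric_of_lt_one (norm_nonneg q) hq).mul_right _)
    (Eventually.of_forall fun i y hy => by
      rw [norm_neg, norm_mul, norm_pow]
      gcongr
      exact (mem_ball_zero_iff.1 hy).le)
    fun i => by fun_prop
  have hdiff : DifferentiableOn ℂ (qp q) (ball 0 (‖x‖ + 1)) := by
    refine (hlim.tendstoLocallyUniformlyOn_finsetRange.differentiableOn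
      (Eventually.of_forall fun m => by fun_prop) isOpen_ball).congr fun y _ => ?_
    simp only [qp, sub_eq_add_neg]
  have hx : x ∈ ball (0 : ℂ) (‖x‖ + 1) := by simp
  exact (hdiff x hx).differentiableAt (isOpen_ball.mem_nhds hx)

lemma continuous_qp (hq : ‖q‖ < 1) : Continuous (qp q) :=
  (differentiable_qp hq).continuous

/-- The theta function `θ(x) = (x)_∞ (q/x)_∞`. -/
noncomputable def theta (q x : ℂ) : ℂ := qp q x * qp q (q / x)

lemma theta_q_div (hq0 : q ≠ 0) (x : ℂ) : theta q (q / x) = theta q x := by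
  rw [theta, theta, div_div_cancel₀ hq0, mul_comm]

lemma theta_one (hq : ‖q‖ < 1) : theta q 1 = 0 := by
  rw [theta, qp_one hq, zero_mul]

lemma qp_mul_qp_inv (hq : ‖q‖ < 1) (x : ℂ) :
    qp q x * qp q x⁻¹ = (1 - x⁻¹) * theta q x := by
  rw [qp_eq_one_sub_mul hq x⁻¹, theta, div_eq_mul_inv]
  ring

lemma theta_div_q (hq : ‖q‖ < 1) (hq0 : q ≠ 0) (hx : x ≠ 0) :
    theta q (x / q) = -(x / q) * theta q x := by
  rw [theta, theta, qp_eq_one_sub_mul hq (x / q), mul_div_cancel₀ x hq0, div_div_eq_mul_div,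
    mul_div_assoc, qp_eq_one_sub_mul hq (q / x)]
  field_simp
  ring

lemma theta_ne_zero (hq : ‖q‖ < 1) (hx : ‖x‖ < 1) (hqx : ‖q / x‖ < 1) : theta q x ≠ 0 :=
  mul_ne_zero (qp_ne_zero hq hx) (qp_ne_zero hq hqx)

lemma differentiableAt_theta (hq : ‖q‖ < 1) (hx : x ≠ 0) : DifferentiableAt ℂ (theta q) x :=
  ((differentiable_qp hq) x).mul
    ((differentiable_qp hq _).comp x ((differentiableAt_const q).div differentiableAt_id hx))

end QPochhammer

/-! ### Averages over circles and tori -/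

section Circle

lemma circleAverage_comp_mul_left (f : ℂ → ℂ) (c : ℂ) :
    circleAverage (fun x => f (c * x)) 0 1 = circleAverage f 0 ‖c‖ := by
  rw [circleAverage_eq_integral_add (f := f) c.arg, circleAverage_def]
  congr! 5 with θ
  simp only [circleMap, zero_add, Complex.ofReal_one, one_mul, Complex.ofReal_add, add_mul,
    Complex.exp_add]
  rw [mul_left_comm, Complex.norm_mul_exp_arg_mul_I, mul_comm]

lemma circleAverage_comp_mul_left_eq {c : ℂ} (hc0 : c ≠ 0) (hc : ‖c‖ ≤ 1) {f : ℂ → ℂ}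
    (hf : ∀ x, ‖c‖ ≤ ‖x‖ → ‖x‖ ≤ 1 → DifferentiableAt ℂ f x) :
    circleAverage (fun x => f (c * x)) 0 1 = circleAverage f 0 1 := by
  have hc0' : 0 < ‖c‖ := norm_pos_iff.2 hc0
  rw [circleAverage_comp_mul_left, circleAverage_eq_circleIntegral one_ne_zero,
    circleAverage_eq_circleIntegral hc0'.ne',
    Complex.circleIntegral_sub_center_inv_smul_eq_of_differentiable_on_annulus_off_countable
      hc0' hc Set.countable_empty]
  · intro x hx
    rw [Set.mem_sdiff, mem_closedBall_zero_iff, mem_ball_zero_iff, not_lt] at hx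
    exact (hf x hx.2 hx.1).continuousAt.continuousWithinAt
  · rintro x ⟨hx, -⟩
    rw [Set.mem_sdiff, mem_closedBall_zero_iff, mem_ball_zero_iff, not_le] at hx
    exact hf x hx.2.le hx.1.le

lemma circleAverage_div_sub_of_lt {r : ℝ} (hr : 0 < r) {α : ℂ} (hα : r < ‖α‖) :
    circleAverage (fun x => x / (x - α)) 0 r = 0 := by
  have hne : ∀ x ∈ closedBall (0 : ℂ) |r|, x - α ≠ 0 := by
    intro x hx h
    rw [mem_closedBall_zero_iff, abs_of_pos hr, sub_eq_zero.1 h] at hx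
    exact hx.not_gt hα
  have hd : DifferentiableOn ℂ (fun x => x / (x - α)) (closedBall 0 |r|) :=
    differentiableOn_id.div (differentiableOn_id.sub_const α) hne
  simpa using (hd.diffContOnCl_ball subset_rfl).circleAverage

lemma circleAverage_div_sub_of_gt {r : ℝ} {α : ℂ} (hα : ‖α‖ < r) :
    circleAverage (fun x => x / (x - α)) 0 r = 1 := by
  have hα' : α ∈ ball (0 : ℂ) |r| := by
    simpa using hα.trans_le (le_abs_self r)
  simpa using (diffContOnCl_const (c := (1 : ℂ))).circleAverage_smul_div hα'

lemma circleAverage_div_sub_mul {r : ℝ} (hr : 0 ≤ r) {α : ℂ} (hα : r ≠ ‖α‖) {g : ℂ → ℂ}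
    (hg : ContinuousOn g (sphere 0 r)) :
    circleAverage (fun x => x / (x - α) * g x) 0 r =
      circleAverage (fun x => x * dslope g α x) 0 r +
        g α * circleAverage (fun x => x / (x - α)) 0 r := by
  have hne : ∀ x ∈ sphere (0 : ℂ) r, x ≠ α := by
    rintro x hx rfl
    exact hα (mem_sphere_zero_iff_norm.1 hx).symm
  have hslope : CircleIntegrable (fun x => x * dslope g α x) 0 r :=
    ContinuousOn.circleIntegrable hr <| continuousOn_id.mul fun x hx =>
      (continuousWithinAt_dslope_of_ne (hne x hx)).2 (hg x hx)
  have hpole : CircleIntegrable (fun x => g α • (x / (x - α))) 0 r :=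
    ContinuousOn.circleIntegrable hr <| .fun_smul continuousOn_const <|
      continuousOn_id.div (by fun_prop) fun x hx => sub_ne_zero.2 (hne x hx)
  rw [← smul_eq_mul (g α), ← circleAverage_fun_smul, ← circleAverage_fun_add hslope hpole]
  refine circleAverage_congr_sphere fun x hx => ?_
  have hxα : x - α ≠ 0 := sub_ne_zero.2 (hne x (by rwa [abs_of_nonneg hr] at hx))
  have hgx : g x = (x - α) * dslope g α x + g α := by
    rw [← smul_eq_mul, sub_smul_dslope, sub_add_cancel]
  simp only [hgx, smul_eq_mul]
  field_simp

lemma circleAverage_sub_comp_mul_left {c α : ℂ} (hc0 : c ≠ 0) (hcα : ‖c‖ < ‖α‖) (hα : ‖α‖ < 1)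
    {g : ℂ → ℂ} (hg : ∀ x, ‖c‖ ≤ ‖x‖ → ‖x‖ ≤ 1 → DifferentiableAt ℂ g x) :
    circleAverage (fun x => x / (x - α) * g x) 0 1 -
      circleAverage (fun x => c * x / (c * x - α) * g (c * x)) 0 1 = g α := by
  have hc1 : ‖c‖ < 1 := hcα.trans hα
  have hcont (r : ℝ) (hcr : ‖c‖ ≤ r) (hr : r ≤ 1) : ContinuousOn g (sphere 0 r) := fun x hx => by
    rw [mem_sphere_zero_iff_norm] at hx
    exact (hg x (hx ▸ hcr) (hx ▸ hr)).continuousAt.continuousWithinAt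
  have hslope (x : ℂ) (hcx : ‖c‖ ≤ ‖x‖) (hx : ‖x‖ ≤ 1) :
      DifferentiableAt ℂ (fun x => x * dslope g α x) x := by
    refine differentiableAt_id.mul ?_
    obtain rfl | hne := eq_or_ne x α
    · have hopen : IsOpen {y : ℂ | ‖c‖ < ‖y‖ ∧ ‖y‖ < 1} :=
        (isOpen_lt continuous_const continuous_norm).inter
          (isOpen_lt continuous_norm continuous_const)
      exact ((Complex.differentiableOn_dslope (hopen.mem_nhds ⟨hcα, hα⟩)).2 fun y hy =>
        (hg y hy.1.le hy.2.le).differentiableWithinAt).differentiableAt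
          (hopen.mem_nhds ⟨hcα, hα⟩)
    · exact (differentiableAt_dslope_of_ne hne).2 (hg x hcx hx)
  rw [circleAverage_comp_mul_left (fun x => x / (x - α) * g x),
    circleAverage_div_sub_mul zero_le_one hα.ne' (hcont 1 hc1.le le_rfl),
    circleAverage_div_sub_mul (norm_nonneg c) hcα.ne (hcont _ le_rfl hc1.le),
    circleAverage_div_sub_of_gt hα, circleAverage_div_sub_of_lt (norm_pos_iff.2 hc0) hcα,
    ← circleAverage_comp_mul_left_eq hc0 hc1.le hslope,
    circleAverage_comp_mul_left fun x => x * dslope g α x]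
  ring

end Circle

section Torus

variable {n : ℕ}

lemma integrable_of_continuous {X : Type*} [TopologicalSpace X] [CompactSpace X] [MeasurableSpace X]
    [OpensMeasurableSpace X] {μ : Measure X} [IsFiniteMeasureOnCompacts μ] {f : X → ℂ}
    (hf : Continuous f) : Integrable f μ :=
  hf.integrable_of_hasCompactSupport (HasCompactSupport.of_compactSpace f)

/-- The point of the torus `𝕋ⁿ ⊆ ℂⁿ` whose angles, in units of a full turn, are the `x i`. -/
noncomputable def torusPoint (x : Fin n → UnitAddCircle) : Fin n → ℂ :=
  fun i => (AddCircle.toCircle (x i) : ℂ)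

/-- The average of a function over the torus `𝕋ⁿ`, that is, its integral against
`∏ dzᵢ / (2πi zᵢ)`. -/
noncomputable def torusAverage (f : (Fin n → ℂ) → ℂ) : ℂ :=
  ∫ x : Fin n → UnitAddCircle, f (torusPoint x)

@[fun_prop]
lemma continuous_torusPoint : Continuous (torusPoint : (Fin n → UnitAddCircle) → Fin n → ℂ) :=
  continuous_pi fun i =>
    continuous_subtype_val.comp (AddCircle.continuous_toCircle.comp (continuous_apply i))

lemma norm_torusPoint (x : Fin n → UnitAddCircle) (i : Fin n) : ‖torusPoint x i‖ = 1 :=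
  Circle.norm_coe _

lemma torusPoint_ne_zero (x : Fin n → UnitAddCircle) (i : Fin n) : torusPoint x i ≠ 0 :=
  Circle.coe_ne_zero _

lemma torusAverage_congr {f g : (Fin n → ℂ) → ℂ} (h : ∀ z, (∀ i, ‖z i‖ = 1) → f z = g z) :
    torusAverage f = torusAverage g :=
  integral_congr_ae <| .of_forall fun x => h _ (norm_torusPoint x)

lemma torusAverage_const (c : ℂ) : torusAverage (fun _ : Fin n → ℂ => c) = c := by
  simp [torusAverage, measureReal_def, volume_pi, Measure.pi_univ]

lemma torusAverage_const_mul (c : ℂ) (f : (Fin n → ℂ) → ℂ) :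
    torusAverage (fun z => c * f z) = c * torusAverage f :=
  integral_const_mul c _

lemma torusAverage_sub {f g : (Fin n → ℂ) → ℂ}
    (hf : Continuous fun x : Fin n → UnitAddCircle => f (torusPoint x))
    (hg : Continuous fun x : Fin n → UnitAddCircle => g (torusPoint x)) :
    torusAverage (fun z => f z - g z) = torusAverage f - torusAverage g :=
  integral_sub (integrable_of_continuous hf) (integrable_of_continuous hg)

lemma torusAverage_inv (f : (Fin n → ℂ) → ℂ) :
    torusAverage (fun z => f z⁻¹) = torusAverage f := by
  have hneg : MeasurePreserving (fun x : Fin n → UnitAddCircle => fun i => -x i) :=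
    measurePreserving_pi _ _ fun _ => Measure.measurePreserving_neg volume
  rw [torusAverage, torusAverage, ← hneg.integral_comp (MeasurableEquiv.neg _).measurableEmbedding]
  congr! 3
  ext i
  simp [torusPoint, AddCircle.toCircle_neg]

lemma circleAverage_eq_integral_unitAddCircle (f : ℂ → ℂ) :
    circleAverage f 0 1 = ∫ x : UnitAddCircle, f (AddCircle.toCircle x) := by
  have hsubst := intervalIntegral.integral_comp_mul_left (a := 0) (b := 1)
    (fun θ => f (circleMap 0 1 θ)) two_pi_pos.ne'
  rw [mul_zero, mul_one] at hsubst
  rw [circleAverage_def, ← hsubst, ← UnitAddCircle.intervalIntegral_preimage 0, zero_add]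
  congr! 3 with θ
  simp [AddCircle.toCircle_apply_mk, circleMap]

lemma torusAverage_removeNth {G : ℂ → (Fin n → ℂ) → ℂ}
    (hG : Continuous fun p : UnitAddCircle × (Fin n → UnitAddCircle) =>
      G (AddCircle.toCircle p.1) (torusPoint p.2)) (j : Fin (n + 1)) :
    torusAverage (fun z => G (z j) (j.removeNth z)) =
      torusAverage fun z => circleAverage (fun x => G x z) 0 1 := by
  simp only [torusAverage, circleAverage_eq_integral_unitAddCircle]
  have hG_int : Integrable fun p : UnitAddCircle × (Fin n → UnitAddCircle) =>
      G (AddCircle.toCircle p.1) (torusPoint p.2) := integrable_of_continuous hG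
  rw [← integral_prod_symm _ hG_int]
  exact (volume_preserving_piFinSuccAbove (fun _ => UnitAddCircle) j).integral_comp
    (MeasurableEquiv.measurableEmbedding _) fun p =>
      G (AddCircle.toCircle p.1) (torusPoint p.2)

lemma torusAverage_sum_removeNth {G : ℂ → (Fin n → ℂ) → ℂ}
    (hG : Continuous fun p : UnitAddCircle × (Fin n → UnitAddCircle) =>
      G (AddCircle.toCircle p.1) (torusPoint p.2)) :
    torusAverage (fun z => ∑ j : Fin (n + 1), G (z j) (j.removeNth z)) =
      (n + 1) * torusAverage fun z => circleAverage (fun x => G x z) 0 1 := by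
  have hterm (j : Fin (n + 1)) : Continuous fun x : Fin (n + 1) → UnitAddCircle =>
      G (torusPoint x j) (j.removeNth (torusPoint x)) :=
    hG.comp (g := fun p => G _ _) (f := fun x : Fin (n + 1) → UnitAddCircle => (x j, j.removeNth x))
      ((continuous_apply j).prodMk (continuous_pi fun i => continuous_apply _))
  calc torusAverage (fun z => ∑ j : Fin (n + 1), G (z j) (j.removeNth z))
      = ∑ j : Fin (n + 1), torusAverage fun z => G (z j) (j.removeNth z) :=
        integral_finsetSum _ fun j _ => integrable_of_continuous (hterm j)
    _ = _ := by
        simp only [torusAverage_removeNth hG, sum_const, card_univ, Fintype.card_fin, nsmul_eq_mul,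
          Nat.cast_add, Nat.cast_one]

open scoped Pointwise in
lemma integral_box_eq_torusAverage {f : (Fin n → ℂ) → ℂ}
    (hf : Continuous fun x : Fin n → UnitAddCircle => f (torusPoint x)) :
    ∫ θ : Fin n → ℝ in Set.univ.pi fun _ : Fin n => Set.Icc (0 : ℝ) (2 * π),
      f (fun i => Complex.exp (θ i * Complex.I)) = (2 * π) ^ n * torusAverage f := by
  have hscale : (Set.univ.pi fun _ : Fin n => Set.Icc (0 : ℝ) (2 * π)) =
      (2 * π) • Set.univ.pi fun _ : Fin n => Set.Icc (0 : ℝ) 1 := by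
    simp only [smul_univ_pi, Pi.smul_def, LinearOrderedField.smul_Icc two_pi_pos, mul_zero, mul_one]
  have hmk : MeasurePreserving (fun t : Fin n → ℝ => fun i => (t i : UnitAddCircle))
      (volume.restrict (Set.univ.pi fun _ : Fin n => Set.Icc (0 : ℝ) 1)) := by
    rw [volume_pi, Measure.restrict_pi_pi]
    refine measurePreserving_pi _ _ fun _ => ?_
    simpa [← restrict_Ioc_eq_restrict_Icc] using UnitAddCircle.measurePreserving_mk 0
  have hexp (t : Fin n → ℝ) : (fun i => Complex.exp (((2 * π) • t) i * Complex.I)) =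
      torusPoint fun i => (t i : UnitAddCircle) := by
    ext i
    simp [torusPoint, AddCircle.toCircle_apply_mk]
  have hcomp := Measure.setIntegral_comp_smul_of_pos volume
    (fun θ : Fin n → ℝ => f fun i => Complex.exp (θ i * Complex.I))
    (Set.univ.pi fun _ : Fin n => Set.Icc (0 : ℝ) 1) two_pi_pos
  simp only [hexp] at hcomp
  rw [torusAverage, ← hmk.map_eq, integral_map hmk.measurable.aemeasurable
    hf.aestronglyMeasurable, hcomp, hscale, Module.finrank_fin_fun]
  simp

end Torus

/-! ### Lagrange interpolation -/

section Lagrange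

variable {K : Type*} [Field K] {n : ℕ} {P : Polynomial K}

lemma prod_compl_singleton_eq {M : Type*} [CommMonoid M] (f : Fin (n + 1) → M) (j : Fin (n + 1)) :
    ∏ k ∈ {j}ᶜ, f k = ∏ k, f (j.succAbove k) := by
  rw [← Fin.image_succAbove_univ, prod_image Fin.succAbove_right_injective.injOn]

lemma sum_eval_div_prod_sub {z : Fin (n + 1) → K} (hz : Function.Injective z)
    (hP : P.natDegree ≤ n) :
    ∑ j, P.eval (z j) / ∏ k, (z j - j.removeNth z k) = P.coeff n := by
  have hcoeff := Lagrange.coeff_eq_sum (s := univ) (v := z) (P := P) hz.injOn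
    ((Polynomial.degree_le_of_natDegree_le hP).trans_lt (by
      rw [card_univ, Fintype.card_fin]
      exact_mod_cast n.lt_succ_self))
  rw [card_univ, Fintype.card_fin, Nat.add_sub_cancel] at hcoeff
  rw [hcoeff]
  refine sum_congr rfl fun j _ => ?_
  rw [← sdiff_singleton_eq_erase, ← compl_eq_univ_sdiff,
    prod_compl_singleton_eq (fun k => z j - z k)]
  rfl

lemma sum_eval_div_sub_mul_prod_sub {z : Fin (n + 1) → K} (hz : Function.Injective z) {α : K}
    (hα : ∀ j, z j ≠ α) (hP : P.natDegree ≤ n + 1) :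
    ∑ j, P.eval (z j) / ((z j - α) * ∏ k, (z j - j.removeNth z k)) =
      P.coeff (n + 1) - P.eval α / ∏ j, (α - z j) := by
  have hnodes : Function.Injective (Fin.cons α z : Fin (n + 2) → K) :=
    Fin.cons_injective_iff.2 ⟨fun ⟨j, hj⟩ => hα j hj, hz⟩
  have hzero : (0 : Fin (n + 2)).removeNth (Fin.cons α z : Fin (n + 2) → K) = z := rfl
  have hsucc (j : Fin (n + 1)) : j.succ.removeNth (Fin.cons α z : Fin (n + 2) → K) =
      Fin.cons α (j.removeNth z) := by
    ext k
    cases k using Fin.cases <;> simp [Fin.removeNth]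
  have hprod (x : K) (y : Fin n → K) :
      ∏ k, (x - (Fin.cons α y : Fin (n + 1) → K) k) = (x - α) * ∏ k, (x - y k) := by
    simp only [Fin.prod_univ_succ, Fin.cons_zero, Fin.cons_succ]
  have hsum := sum_eval_div_prod_sub hnodes hP
  simp only [Fin.sum_univ_succ (n := n + 1), hzero, hsucc, Fin.cons_zero, Fin.cons_succ,
    hprod] at hsum
  exact eq_sub_of_add_eq' hsum

lemma sum_prod_sub_div_prod_sub {z : Fin (n + 1) → K} (hz : Function.Injective z) (c : Fin n → K) :
    ∑ j, (∏ k, (z j - c k)) / ∏ k, (z j - j.removeNth z k) = 1 := by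
  have hdeg : (∏ k, (Polynomial.X - Polynomial.C (c k))).natDegree = n := by
    rw [Polynomial.natDegree_finsetProd_X_sub_C_eq_card, card_univ, Fintype.card_fin]
  have hmonic : (∏ k, (Polynomial.X - Polynomial.C (c k))).coeff n = 1 := by
    simpa only [Polynomial.Monic, Polynomial.leadingCoeff, hdeg] using
      Polynomial.monic_prod_X_sub_C c univ
  simpa only [Polynomial.eval_prod, Polynomial.eval_sub, Polynomial.eval_X, Polynomial.eval_C,
    hmonic] using sum_eval_div_prod_sub hz hdeg.le

lemma sum_prod_mul_sub_one_div {z : Fin (n + 1) → K} (hz : Function.Injective z) {α : K}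
    (hα : ∀ j, z j ≠ α) (b : Fin (n + 1) → K) :
    ∑ j, (∏ l, (b l * z j - 1)) / ((z j - α) * ∏ k, (z j - j.removeNth z k)) =
      ∏ l, b l - (∏ l, (b l * α - 1)) / ∏ j, (α - z j) := by
  have hfactor (l : Fin (n + 1)) :
      (Polynomial.C (b l) * Polynomial.X + Polynomial.C (-1)).natDegree ≤ 1 :=
    Polynomial.natDegree_linear_le
  have hdeg : (∏ l, (Polynomial.C (b l) * Polynomial.X + Polynomial.C (-1))).natDegree ≤ n + 1 := by
    refine (Polynomial.natDegree_prod_le _ _).trans ((sum_le_sum fun l _ => hfactor l).trans ?_)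
    simp
  have hcoeff : (∏ l, (Polynomial.C (b l) * Polynomial.X + Polynomial.C (-1))).coeff (n + 1) =
      ∏ l, b l := by
    have h := Polynomial.coeff_prod_of_natDegree_le univ _ 1 fun l _ => hfactor l
    rw [card_univ, Fintype.card_fin, mul_one] at h
    rw [h]
    exact prod_congr rfl fun l _ => by simp [Polynomial.coeff_one]
  simpa only [Polynomial.eval_prod, Polynomial.eval_add, Polynomial.eval_mul, Polynomial.eval_C,
    Polynomial.eval_X, ← sub_eq_add_neg, hcoeff] using sum_eval_div_sub_mul_prod_sub hz hα hdeg

end Lagrange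

/-! ### The kernel and its partial fractions -/

section Kernel

variable {n : ℕ} {q u x : ℂ} {v w : ℂ → ℂ}

/-- The product `∏_{i < j} (zᵢ/zⱼ)_∞ (zⱼ/zᵢ)_∞`, a `q`-analogue of the squared Vandermonde
determinant. -/
noncomputable def interaction (q : ℂ) (z : Fin n → ℂ) : ℂ :=
  ∏ i, ∏ j ∈ Ioi i, qp q (z i / z j) * qp q (z j / z i)

/-- The integrand `θ(u / (z₁⋯zₙ)) ∏ᵢ w(zᵢ) ∏_{i < j} (zᵢ/zⱼ)_∞ (zⱼ/zᵢ)_∞` with an arbitrary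
one-variable weight `w`. -/
noncomputable def kernel (q u : ℂ) (w : ℂ → ℂ) (z : Fin n → ℂ) : ℂ :=
  theta q (u / ∏ i, z i) * (∏ i, w (z i)) * interaction q z

/-- The kernel in the variables `x, z₁, …, zₙ`, with `x` weighted by `v` and the product
`(x/zₖ)_∞ (zₖ/x)_∞` replaced by `θ(x/zₖ)`, which is quasi-periodic under `x ↦ q x`. -/
noncomputable def pointedKernel (q u : ℂ) (v w : ℂ → ℂ) (x : ℂ) (z : Fin n → ℂ) : ℂ :=
  theta q (u / (x * ∏ k, z k)) * v x * (∏ k, theta q (x / z k)) *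
    ((∏ k, w (z k)) * interaction q z)

lemma interaction_eq_prod_off_diag (q : ℂ) (z : Fin n → ℂ) :
    interaction q z = ∏ i, ∏ j ∈ {i}ᶜ, qp q (z j / z i) :=
  Eq.trans (by simp only [interaction, mul_comm])
    (prod_prod_Ioi_mul_eq_prod_prod_off_diag fun i j => qp q (z i / z j))

lemma interaction_inv (q : ℂ) (z : Fin n → ℂ) : interaction q z⁻¹ = interaction q z := by
  refine prod_congr rfl fun i _ => prod_congr rfl fun j _ => ?_
  rw [Pi.inv_apply, Pi.inv_apply, inv_div_inv, inv_div_inv, mul_comm]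

lemma interaction_eq_zero (hq : ‖q‖ < 1) {z : Fin n → ℂ} {i j : Fin n} (hij : i ≠ j)
    (h : z i = z j) (h0 : z i ≠ 0) : interaction q z = 0 := by
  rw [interaction_eq_prod_off_diag]
  refine prod_eq_zero (mem_univ i) (prod_eq_zero (i := j) (by simpa using hij.symm) ?_)
  rw [← h, div_self h0, qp_one hq]

lemma interaction_eq_mul_removeNth (hq : ‖q‖ < 1) (z : Fin (n + 1) → ℂ) (j : Fin (n + 1)) :
    interaction q z = (∏ k, (1 - j.removeNth z k / z j) * theta q (z j / j.removeNth z k)) *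
      interaction q (j.removeNth z) := by
  have hite (m : ℕ) (y : Fin m → ℂ) :
      interaction q y = ∏ i, ∏ k, if k = i then 1 else qp q (y k / y i) := by
    rw [interaction_eq_prod_off_diag]
    refine prod_congr rfl fun i _ => ?_
    simp [prod_ite, filter_ne', compl_eq_univ_sdiff, sdiff_singleton_eq_erase]
  have hpair (k : Fin n) : (1 - j.removeNth z k / z j) * theta q (z j / j.removeNth z k) =
      qp q (z j / j.removeNth z k) * qp q (j.removeNth z k / z j) := by
    simpa only [inv_div] using (qp_mul_qp_inv hq (z j / j.removeNth z k)).symm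
  rw [prod_congr rfl fun k _ => hpair k]
  simp only [hite, Fin.prod_univ_succAbove _ j, Fin.succAbove_ne, (Fin.succAbove_ne j _).symm,
    Fin.succAbove_right_inj, if_true, if_false, one_mul, prod_mul_distrib, Fin.removeNth]
  ring

lemma kernel_eq_mul_removeNth (hq : ‖q‖ < 1) (z : Fin (n + 1) → ℂ) (j : Fin (n + 1)) :
    kernel q u w z =
      (∏ k, (1 - j.removeNth z k / z j)) * pointedKernel q u w w (z j) (j.removeNth z) := by
  rw [kernel, pointedKernel, interaction_eq_mul_removeNth hq z j, Fin.prod_univ_succAbove z j,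
    Fin.prod_univ_succAbove (fun i => w (z i)) j, prod_mul_distrib]
  simp only [Fin.removeNth]
  ring

lemma kernel_eq_zero (hq : ‖q‖ < 1) {z : Fin n → ℂ} (h0 : ∀ i, z i ≠ 0)
    (hz : ¬ Function.Injective z) : kernel q u w z = 0 := by
  obtain ⟨i, j, h, hij⟩ := Function.not_injective_iff.1 hz
  rw [kernel, interaction_eq_zero hq hij h (h0 i), mul_zero]

lemma pointedKernel_eq_zero (hq : ‖q‖ < 1) {z : Fin (n + 1) → ℂ} (h0 : ∀ i, z i ≠ 0)
    (hz : ¬ Function.Injective z) (j : Fin (n + 1)) :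
    pointedKernel q u v w (z j) (j.removeNth z) = 0 := by
  by_cases hj : Function.Injective (j.removeNth z)
  · obtain ⟨k, hk⟩ : ∃ k, j.removeNth z k = z j := by
      contrapose! hz
      intro i l hil
      rcases Fin.eq_self_or_eq_succAbove j i with hi | ⟨i, rfl⟩ <;>
        rcases Fin.eq_self_or_eq_succAbove j l with hl | ⟨l, rfl⟩
      · exact hi.trans hl.symm
      · exact (hz l (hil.symm.trans (congrArg z hi))).elim
      · exact (hz i (hil.trans (congrArg z hl))).elim
      · exact congrArg _ (hj hil)
    have hzero : theta q (z j / j.removeNth z k) = 0 := by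
      rw [hk, div_self (h0 j), theta_one hq]
    rw [pointedKernel, prod_eq_zero (f := fun k => theta q (z j / j.removeNth z k)) (mem_univ k)
      hzero, mul_zero, zero_mul]
  · obtain ⟨i, k, h, hik⟩ := Function.not_injective_iff.1 hj
    rw [pointedKernel, interaction_eq_zero hq hik h (h0 _), mul_zero, mul_zero]

-- Where two coordinates coincide, both sides vanish.
lemma sum_pointedKernel (hq : ‖q‖ < 1) {z : Fin (n + 1) → ℂ} (h0 : ∀ i, z i ≠ 0)
    {r : Fin (n + 1) → ℂ} (hv : ∀ j, v (z j) * z j ^ n = w (z j) * r j) {c : ℂ}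
    (hc : Function.Injective z → ∑ j, r j / ∏ k, (z j - j.removeNth z k) = c) :
    ∑ j, pointedKernel q u v w (z j) (j.removeNth z) = c * kernel q u w z := by
  by_cases hz : Function.Injective z
  · rw [← hc hz, sum_mul]
    refine sum_congr rfl fun j _ => ?_
    have hprod : ∏ k, (z j - j.removeNth z k) = z j ^ n * ∏ k, (1 - j.removeNth z k / z j) := by
      rw [← Fin.prod_const, ← prod_mul_distrib]
      exact prod_congr rfl fun k _ => by rw [mul_sub, mul_one, mul_div_cancel₀ _ (h0 j)]
    have hne : ∏ k, (z j - j.removeNth z k) ≠ 0 :=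
      prod_ne_zero_iff.2 fun k _ => sub_ne_zero.2 (hz.ne (Fin.succAbove_ne j k).symm)
    rw [div_mul_eq_mul_div, eq_div_iff hne, hprod, kernel_eq_mul_removeNth hq z j, pointedKernel,
      pointedKernel]
    linear_combination (theta q (u / (z j * ∏ k, j.removeNth z k)) *
      (∏ k, theta q (z j / j.removeNth z k)) *
      ((∏ k, w (j.removeNth z k)) * interaction q (j.removeNth z)) *
      ∏ k, (1 - j.removeNth z k / z j)) * hv j
  · rw [kernel_eq_zero hq h0 hz, mul_zero]
    exact sum_eq_zero fun j _ => pointedKernel_eq_zero hq h0 hz j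

lemma sum_pointedKernel_self (hq : ‖q‖ < 1) {z : Fin (n + 1) → ℂ} (h0 : ∀ k, z k ≠ 0)
    (w : ℂ → ℂ) : ∑ j, pointedKernel q u w w (z j) (j.removeNth z) = kernel q u w z := by
  rw [sum_pointedKernel hq h0 (r := fun j => z j ^ n) (c := 1) (fun j => rfl) fun hz => ?_, one_mul]
  simpa using sum_eval_div_prod_sub hz (Polynomial.natDegree_X_pow_le n)

lemma pointedKernel_q_mul (hq : ‖q‖ < 1) (hq0 : q ≠ 0) (hu : u ≠ 0) (hx : x ≠ 0)
    {z : Fin n → ℂ} (hz : ∀ i, z i ≠ 0) :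
    pointedKernel q u v w (q * x) z =
      pointedKernel q u (fun y => (-1) ^ (n + 1) * (u / q) / y ^ (n + 1) * v (q * y)) w x z := by
  have htheta (y : ℂ) (hy : y ≠ 0) : theta q (q * y) = -y⁻¹ * theta q y := by
    have h := theta_div_q hq hq0 (mul_ne_zero hq0 hy)
    rw [mul_div_cancel_left₀ y hq0] at h
    rw [h]
    field_simp
  have hZ : ∏ k, z k ≠ 0 := prod_ne_zero_iff.2 fun k _ => hz k
  have hpairs : ∏ k, theta q (q * x / z k) =
      (-1) ^ n * (∏ k, z k) / x ^ n * ∏ k, theta q (x / z k) := by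
    rw [← Fin.prod_const, ← Fin.prod_const, ← prod_mul_distrib, ← prod_div_distrib,
      ← prod_mul_distrib]
    refine prod_congr rfl fun k _ => ?_
    rw [mul_div_assoc, htheta _ (div_ne_zero hx (hz k)), inv_div]
    ring
  have hu' : theta q (u / (q * x * ∏ k, z k)) =
      -(u / (q * x * ∏ k, z k)) * theta q (u / (x * ∏ k, z k)) := by
    have h := theta_div_q hq hq0 (div_ne_zero hu (mul_ne_zero hx hZ))
    rwa [div_div, mul_comm _ q, ← mul_assoc] at h
  rw [pointedKernel, pointedKernel, hpairs, hu']
  field_simp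
  ring

lemma sum_pointedKernel_q_mul (hq : ‖q‖ < 1) (hq0 : q ≠ 0) (hu : u ≠ 0) {z : Fin (n + 1) → ℂ}
    (h0 : ∀ i, z i ≠ 0) {r : Fin (n + 1) → ℂ}
    (hv : ∀ j, (-1) ^ (n + 1) * (u / q) * v (q * z j) = z j * w (z j) * r j) {c : ℂ}
    (hc : Function.Injective z → ∑ j, r j / ∏ k, (z j - j.removeNth z k) = c) :
    ∑ j, pointedKernel q u v w (q * z j) (j.removeNth z) = c * kernel q u w z := by
  rw [← sum_pointedKernel hq h0 (fun j => ?_) hc]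
  · exact sum_congr rfl fun j _ => pointedKernel_q_mul hq hq0 hu (h0 j) fun k => h0 _
  · have hj := h0 j
    rw [div_mul_eq_mul_div, hv j, pow_succ]
    field_simp

end Kernel

section Regularity

variable {n : ℕ} {q u x : ℂ} {v w : ℂ → ℂ} {X : Type*} [TopologicalSpace X]

lemma continuous_theta_comp (hq : ‖q‖ < 1) {f : X → ℂ} (hf : Continuous f) (h0 : ∀ x, f x ≠ 0) :
    Continuous fun x => theta q (f x) :=
  continuous_iff_continuousAt.2 fun x =>
    (differentiableAt_theta hq (h0 x)).continuousAt.comp hf.continuousAt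

lemma differentiableAt_theta_comp (hq : ‖q‖ < 1) {f : ℂ → ℂ} (hf : DifferentiableAt ℂ f x)
    (h0 : f x ≠ 0) : DifferentiableAt ℂ (fun y => theta q (f y)) x :=
  (differentiableAt_theta hq h0).comp x hf

lemma continuous_interaction (hq : ‖q‖ < 1) {z : X → Fin n → ℂ} (hz : Continuous z)
    (h0 : ∀ x i, z x i ≠ 0) : Continuous fun x => interaction q (z x) := by
  have hdiv (i j : Fin n) : Continuous fun x => qp q (z x i / z x j) :=
    (continuous_qp hq).comp <|
      (continuous_pi_iff.1 hz i).div (continuous_pi_iff.1 hz j) fun x => h0 x j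
  exact continuous_finsetProd _ fun i _ => continuous_finsetProd _ fun j _ =>
    (hdiv i j).mul (hdiv j i)

lemma continuous_kernel (hq : ‖q‖ < 1) (hu : u ≠ 0) {z : X → Fin n → ℂ} (hz : Continuous z)
    (h0 : ∀ x i, z x i ≠ 0) {w : X → ℂ → ℂ} (hw : ∀ i, Continuous fun x => w x (z x i)) :
    Continuous fun x => kernel q u (w x) (z x) := by
  have hZ (x : X) : ∏ i, z x i ≠ 0 := prod_ne_zero_iff.2 fun i _ => h0 x i
  exact ((continuous_theta_comp hq (continuous_const.div (by fun_prop) hZ) fun x =>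
    div_ne_zero hu (hZ x)).mul (continuous_finsetProd _ fun i _ => hw i)).mul
      (continuous_interaction hq hz h0)

lemma continuous_pointedKernel (hq : ‖q‖ < 1) (hu : u ≠ 0) {f : X → ℂ} (hf : Continuous f)
    (hf0 : ∀ x, f x ≠ 0) {z : X → Fin n → ℂ} (hz : Continuous z) (h0 : ∀ x i, z x i ≠ 0)
    (hv : Continuous fun x => v (f x)) (hw : ∀ i, Continuous fun x => w (z x i)) :
    Continuous fun x => pointedKernel q u v w (f x) (z x) := by
  have hZ (x : X) : f x * ∏ i, z x i ≠ 0 :=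
    mul_ne_zero (hf0 x) (prod_ne_zero_iff.2 fun i _ => h0 x i)
  exact (((continuous_theta_comp hq (continuous_const.div (by fun_prop) hZ) fun x =>
    div_ne_zero hu (hZ x)).mul hv).mul (continuous_finsetProd _ fun i _ =>
      continuous_theta_comp hq (hf.div (by fun_prop) fun x => h0 x i) fun x =>
        div_ne_zero (hf0 x) (h0 x i))).mul
      ((continuous_finsetProd _ fun i _ => hw i).mul (continuous_interaction hq hz h0))

lemma differentiableAt_pointedKernel (hq : ‖q‖ < 1) (hu : u ≠ 0) (hx : x ≠ 0) {z : Fin n → ℂ}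
    (h0 : ∀ i, z i ≠ 0) (hv : DifferentiableAt ℂ v x) :
    DifferentiableAt ℂ (fun x => pointedKernel q u v w x z) x := by
  have hZ : x * ∏ i, z i ≠ 0 := mul_ne_zero hx (prod_ne_zero_iff.2 fun i _ => h0 i)
  have hprod : DifferentiableAt ℂ (fun x => theta q (u / (x * ∏ i, z i))) x :=
    differentiableAt_theta_comp hq ((differentiableAt_const u).fun_div (by fun_prop) hZ)
      (div_ne_zero hu hZ)
  have hpairs : DifferentiableAt ℂ (fun x => ∏ k, theta q (x / z k)) x :=
    DifferentiableAt.fun_finsetProd fun k _ =>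
      differentiableAt_theta_comp hq (by fun_prop) (div_ne_zero hx (h0 k))
  exact ((hprod.fun_mul hv).fun_mul hpairs).mul_const _

lemma torusAverage_sum_pointedKernel_sub (hq : ‖q‖ < 1) (hq0 : q ≠ 0) (hu : u ≠ 0)
    (hv : ContinuousOn v (sphere 0 1)) (hvq : ContinuousOn v (sphere 0 ‖q‖))
    (hw : ContinuousOn w (sphere 0 1)) :
    torusAverage (fun z => ∑ j : Fin (n + 1), (pointedKernel q u v w (z j) (j.removeNth z) -
        pointedKernel q u v w (q * z j) (j.removeNth z))) =
      (n + 1) * torusAverage fun z : Fin n → ℂ =>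
        circleAverage (fun x => pointedKernel q u v w x z) 0 1 -
          circleAverage (fun x => pointedKernel q u v w (q * x) z) 0 1 := by
  have hcont (c : ℂ) (hc : c ≠ 0) (hvc : ContinuousOn v (sphere 0 ‖c‖)) :
      Continuous fun p : UnitAddCircle × (Fin n → UnitAddCircle) =>
        pointedKernel q u v w (c * AddCircle.toCircle p.1) (torusPoint p.2) := by
    have hx : Continuous fun p : UnitAddCircle × (Fin n → UnitAddCircle) =>
        c * (AddCircle.toCircle p.1 : ℂ) :=
      continuous_const.mul (continuous_subtype_val.comp
        (AddCircle.continuous_toCircle.comp continuous_fst))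
    have hz : Continuous fun p : UnitAddCircle × (Fin n → UnitAddCircle) => torusPoint p.2 := by
      fun_prop
    exact continuous_pointedKernel hq hu hx (fun p => mul_ne_zero hc (Circle.coe_ne_zero _)) hz
      (fun p => torusPoint_ne_zero p.2) (hvc.comp_continuous hx fun p => by simp [Circle.norm_coe])
      fun i => hw.comp_continuous (continuous_pi_iff.1 hz i) fun p => by simp [norm_torusPoint]
  have hF := hcont 1 one_ne_zero (by rwa [norm_one])
  have hFq := hcont q hq0 hvq
  simp only [one_mul] at hF
  rw [torusAverage_sum_removeNth (G := fun x z =>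
    pointedKernel q u v w x z - pointedKernel q u v w (q * x) z) (hF.sub hFq)]
  refine congrArg _ (integral_congr_ae (.of_forall fun y => ?_))
  simp only [circleAverage_eq_integral_unitAddCircle]
  exact integral_sub (integrable_of_continuous hF.along_fst)
    (integrable_of_continuous hFq.along_fst)

end Regularity

/-! ### Shifting the parameters -/

section Weight

variable {m n : ℕ} {q u x : ℂ} {a b : Fin m → ℂ}

/-- The one-variable weight `∏ᵢ 1 / ((aᵢ/x)_∞ (bᵢ x)_∞)`. -/
noncomputable def weight (q : ℂ) (a b : Fin m → ℂ) (x : ℂ) : ℂ :=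
  ∏ i, (qp q (a i / x) * qp q (b i * x))⁻¹

lemma norm_div_lt_one {α x : ℂ} (h : ‖α‖ < ‖x‖) : ‖α / x‖ < 1 := by
  rwa [norm_div, div_lt_one ((norm_nonneg α).trans_lt h)]

lemma norm_apply_lt_one {c : Fin m → ℂ} (hc : ‖c‖ < 1) (i : Fin m) : ‖c i‖ < 1 :=
  (norm_le_pi_norm c i).trans_lt hc

lemma one_sub_ne_zero_of_norm_lt_one (hx : ‖x‖ < 1) : 1 - x ≠ 0 := by
  refine sub_ne_zero.2 fun h => hx.ne ?_
  rw [← h, norm_one]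

lemma weight_piecewise_q_mul (hq : ‖q‖ < 1) (ha : ∀ i, ‖a i‖ < ‖x‖) (b : Fin m → ℂ)
    (S : Finset (Fin m)) :
    weight q (S.piecewise (q • a) a) b x = (∏ i ∈ S, (1 - a i / x)) * weight q a b x := by
  rw [← prod_ite_mem_eq, weight, weight, ← prod_mul_distrib]
  refine prod_congr rfl fun i _ => ?_
  by_cases hi : i ∈ S
  · rw [piecewise_eq_of_mem _ _ _ hi, if_pos hi, qp_eq_one_sub_mul hq (a i / x), Pi.smul_apply,
      smul_eq_mul, mul_div_assoc]
    have h := one_sub_ne_zero_of_norm_lt_one (norm_div_lt_one (ha i))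
    field_simp
  · rw [piecewise_eq_of_notMem _ _ _ hi, if_neg hi, one_mul]

lemma weight_update_q_mul (hq : ‖q‖ < 1) (ha : ∀ i, ‖a i‖ < ‖x‖) (b : Fin m → ℂ) (i : Fin m) :
    weight q (Function.update a i (q * a i)) b x = (1 - a i / x) * weight q a b x := by
  simpa only [piecewise_singleton, prod_singleton, Pi.smul_apply, smul_eq_mul] using
    weight_piecewise_q_mul hq ha b {i}

lemma weight_q_smul (hq : ‖q‖ < 1) (ha : ∀ i, ‖a i‖ < ‖x‖) (b : Fin m → ℂ) :
    weight q (q • a) b x = (∏ i, (1 - a i / x)) * weight q a b x := by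
  simpa only [piecewise_univ] using weight_piecewise_q_mul hq ha b univ

lemma weight_q_smul_q_mul (hq : ‖q‖ < 1) (hq0 : q ≠ 0) (a : Fin m → ℂ)
    (hb : ∀ i, ‖b i * x‖ < 1) :
    weight q (q • a) b (q * x) = (∏ i, (1 - b i * x)) * weight q a b x := by
  rw [weight, weight, ← prod_mul_distrib]
  refine prod_congr rfl fun i _ => ?_
  have h := one_sub_ne_zero_of_norm_lt_one (hb i)
  rw [Pi.smul_apply, smul_eq_mul, mul_div_mul_left _ _ hq0, mul_left_comm (b i),
    qp_eq_one_sub_mul hq (b i * x), mul_left_comm (qp q _), mul_inv (1 - _),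
    mul_inv_cancel_left₀ h]

lemma continuous_weight {X : Type*} [TopologicalSpace X] (hq : ‖q‖ < 1) {a b : X → Fin m → ℂ}
    {f : X → ℂ} (ha : Continuous a) (hb : Continuous b) (hf : Continuous f)
    (haf : ∀ x i, ‖a x i‖ < ‖f x‖) (hbf : ∀ x i, ‖b x i * f x‖ < 1) :
    Continuous fun x => weight q (a x) (b x) (f x) := by
  have hqp := continuous_qp hq
  have hf0 (i : Fin m) (x : X) : f x ≠ 0 := norm_pos_iff.1 ((norm_nonneg _).trans_lt (haf x i))
  refine continuous_finsetProd _ fun i _ => Continuous.inv₀ ?_ fun x =>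
    mul_ne_zero (qp_ne_zero hq (norm_div_lt_one (haf x i))) (qp_ne_zero hq (hbf x i))
  exact (hqp.comp ((continuous_pi_iff.1 ha i).div hf (hf0 i))).mul
    (hqp.comp ((continuous_pi_iff.1 hb i).mul hf))

lemma differentiableAt_weight (hq : ‖q‖ < 1) (ha : ∀ i, ‖a i‖ < ‖x‖) (hb : ∀ i, ‖b i * x‖ < 1) :
    DifferentiableAt ℂ (weight q a b) x := by
  have hqp (y : ℂ) : DifferentiableAt ℂ (qp q) y := differentiable_qp hq y
  refine DifferentiableAt.fun_finsetProd fun i _ => DifferentiableAt.fun_inv ?_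
    (mul_ne_zero (qp_ne_zero hq (norm_div_lt_one (ha i))) (qp_ne_zero hq (hb i)))
  have hx : x ≠ 0 := norm_pos_iff.1 ((norm_nonneg _).trans_lt (ha i))
  exact ((hqp _).comp x ((differentiableAt_const (a i)).fun_div differentiableAt_id hx)).fun_mul
    ((hqp _).comp x (differentiableAt_id.const_mul (b i)))

end Weight

section Shift

variable {m n : ℕ} {q u : ℂ}

lemma kernel_q_mul_update (hq : ‖q‖ < 1) (hq0 : q ≠ 0) (hu : u ≠ 0) {a : Fin m → ℂ}
    {z : Fin n → ℂ} (h0 : ∀ k, z k ≠ 0) (ha : ∀ i k, ‖a i‖ < ‖z k‖) (b : Fin m → ℂ) (i : Fin m) :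
    u * kernel q (q * u) (weight q (Function.update a i (q * a i)) b) z =
      -(∏ k, (z k - a i)) * kernel q u (weight q a b) z := by
  have hZ : ∏ k, z k ≠ 0 := prod_ne_zero_iff.2 fun k _ => h0 k
  have hweight : ∏ k, weight q (Function.update a i (q * a i)) b (z k) =
      (∏ k, (z k - a i)) / (∏ k, z k) * ∏ k, weight q a b (z k) := by
    rw [← prod_div_distrib, ← prod_mul_distrib]
    refine prod_congr rfl fun k _ => ?_
    rw [weight_update_q_mul hq (fun i => ha i k), sub_div, div_self (h0 k)]
  have htheta := theta_div_q hq hq0 (div_ne_zero (mul_ne_zero hq0 hu) hZ)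
  rw [mul_div_assoc, mul_div_cancel_left₀ _ hq0, ← mul_div_assoc] at htheta
  rw [kernel, kernel, hweight, htheta]
  field_simp

lemma sum_pointedKernel_weight (hq : ‖q‖ < 1) {a : Fin (n + 1) → ℂ} {z : Fin (n + 1) → ℂ}
    (h0 : ∀ k, z k ≠ 0) (ha : ∀ i k, ‖a i‖ < ‖z k‖) (b : Fin (n + 1) → ℂ) (i : Fin (n + 1)) :
    ∑ j, pointedKernel q u (weight q (q • a) b) (weight q (Function.update a i (q * a i)) b)
        (z j) (j.removeNth z) =
      kernel q u (weight q (Function.update a i (q * a i)) b) z := by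
  rw [sum_pointedKernel hq h0 (r := fun j => ∏ k, (z j - i.removeNth a k)) (c := 1) (fun j => ?_)
    fun hz => sum_prod_sub_div_prod_sub hz _, one_mul]
  have hprod : (∏ k, (1 - a (i.succAbove k) / z j)) * z j ^ n = ∏ k, (z j - i.removeNth a k) := by
    rw [← Fin.prod_const, ← prod_mul_distrib]
    refine prod_congr rfl fun k _ => ?_
    rw [sub_mul, div_mul_cancel₀ _ (h0 j), one_mul]
    rfl
  rw [weight_q_smul hq (fun i => ha i j), weight_update_q_mul hq (fun i => ha i j),
    Fin.prod_univ_succAbove _ i, ← hprod]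
  ring

lemma sum_pointedKernel_weight_q_mul (hq : ‖q‖ < 1) (hq0 : q ≠ 0) (hu : u ≠ 0)
    {a b : Fin (n + 1) → ℂ} {z : Fin (n + 1) → ℂ} (h0 : ∀ k, z k ≠ 0)
    (ha : ∀ i k, ‖a i‖ < ‖z k‖) (hb : ∀ i k, ‖b i * z k‖ < 1) (i : Fin (n + 1)) :
    ∑ j, pointedKernel q (q * u) (weight q (q • a) b)
        (weight q (Function.update a i (q * a i)) b) (q * z j) (j.removeNth z) =
      u * (∏ l, b l) * kernel q (q * u) (weight q (Function.update a i (q * a i)) b) z +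
        (∏ l, (1 - a i * b l)) * kernel q u (weight q a b) z := by
  have hne (j : Fin (n + 1)) : z j ≠ a i := fun h => (ha i j).ne (by rw [h])
  rw [sum_pointedKernel_q_mul hq hq0 (mul_ne_zero hq0 hu) h0
    (r := fun j => u * ((∏ l, (b l * z j - 1)) / (z j - a i)))
    (c := u * (∏ l, b l - (∏ l, (b l * a i - 1)) / ∏ k, (a i - z k))) (fun j => ?_) fun hz => ?_]
  · have hne' : ∏ k, (z k - a i) ≠ 0 := prod_ne_zero_iff.2 fun k _ => sub_ne_zero.2 (hne k)
    have hquot : (∏ l, (b l * a i - 1)) / ∏ k, (a i - z k) =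
        (∏ l, (1 - a i * b l)) / ∏ k, (z k - a i) := by
      rw [← prod_div_distrib, ← prod_div_distrib]
      refine prod_congr rfl fun k _ => ?_
      rw [← neg_sub, ← neg_sub (z k), neg_div_neg_eq, mul_comm]
    have hshift := kernel_q_mul_update hq hq0 hu h0 ha b i
    rw [hquot]
    linear_combination
      -((∏ l, (1 - a i * b l)) / ∏ k, (z k - a i)) * hshift +
        kernel q u (weight q a b) z * div_mul_cancel₀ (∏ l, (1 - a i * b l)) hne'
  · have hj := h0 j
    have hα := sub_ne_zero.2 (hne j)
    have hsign : ∏ l, (b l * z j - 1) = (-1) ^ (n + 1) * ∏ l, (1 - b l * z j) := by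
      rw [← Fin.prod_const, ← prod_mul_distrib]
      exact prod_congr rfl fun l _ => by ring
    rw [weight_q_smul_q_mul hq hq0 a (fun l => hb l j), weight_update_q_mul hq (fun i => ha i j),
      hsign]
    generalize ∏ l, (1 - b l * z j) = p
    field_simp
  · rw [← sum_prod_mul_sub_one_div hz hne, mul_sum]
    exact sum_congr rfl fun j _ => by rw [mul_div_assoc, div_div]

end Shift

section Relations

variable {m n : ℕ} {q u : ℂ} {a b : Fin m → ℂ}

lemma norm_update_mul_lt_one {c : ℂ} (hc : ‖c‖ ≤ 1) (ha : ‖a‖ < 1) (i : Fin m) :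
    ‖Function.update a i (c * a i)‖ < 1 := by
  refine (pi_norm_lt_iff one_pos).2 fun l => ?_
  rcases eq_or_ne l i with rfl | hl
  · rw [Function.update_self, norm_mul]
    exact mul_lt_one_of_nonneg_of_lt_one_right hc (norm_nonneg _) (norm_apply_lt_one ha l)
  · rw [Function.update_of_ne hl]
    exact norm_apply_lt_one ha l

lemma norm_apply_mul_lt_one {x : ℂ} (hb : ‖b‖ < 1) (hx : ‖x‖ ≤ 1) (i : Fin m) : ‖b i * x‖ < 1 := by
  rw [norm_mul]
  exact mul_lt_one_of_nonneg_of_lt_one_left (norm_nonneg _) (norm_apply_lt_one hb i) hx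

lemma continuousOn_weight_sphere (hq : ‖q‖ < 1) (ha : ‖a‖ < 1) (hb : ‖b‖ < 1) :
    ContinuousOn (weight q a b) (sphere 0 1) := fun x hx =>
  have hx : ‖x‖ = 1 := mem_sphere_zero_iff_norm.1 hx
  (differentiableAt_weight hq (fun i => hx ▸ norm_apply_lt_one ha i)
    (norm_apply_mul_lt_one hb hx.le)).continuousAt.continuousWithinAt

lemma continuous_kernel_weight {X : Type*} [TopologicalSpace X] (hq : ‖q‖ < 1) (hu : u ≠ 0)
    {a b : X → Fin m → ℂ} (ha : Continuous a) (hb : Continuous b) (ha1 : ∀ x, ‖a x‖ < 1)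
    (hb1 : ∀ x, ‖b x‖ < 1) {y : X → Fin n → UnitAddCircle} (hy : Continuous y) :
    Continuous fun x => kernel q u (weight q (a x) (b x)) (torusPoint (y x)) := by
  have hz : Continuous fun x => torusPoint (y x) := continuous_torusPoint.comp hy
  refine continuous_kernel hq hu hz (fun x => torusPoint_ne_zero _) fun i =>
    continuous_weight hq ha hb (continuous_pi_iff.1 hz i) (fun x l => ?_) fun x l =>
      norm_apply_mul_lt_one (hb1 x) (norm_torusPoint _ i).le l
  rw [norm_torusPoint]
  exact norm_apply_lt_one (ha1 x) l

lemma torusAverage_sum_pointedKernel_sub_eq_zero (hq : ‖q‖ < 1) (hq0 : q ≠ 0) (hu : u ≠ 0)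
    {v w : ℂ → ℂ} (hv : ∀ x, ‖q‖ ≤ ‖x‖ → ‖x‖ ≤ 1 → DifferentiableAt ℂ v x)
    (hw : ContinuousOn w (sphere 0 1)) :
    torusAverage (fun z => ∑ j : Fin (n + 1), (pointedKernel q u v w (z j) (j.removeNth z) -
        pointedKernel q u v w (q * z j) (j.removeNth z))) = 0 := by
  have hvc {r : ℝ} (hqr : ‖q‖ ≤ r) (hr : r ≤ 1) : ContinuousOn v (sphere 0 r) := fun x hx =>
    have hx : ‖x‖ = r := mem_sphere_zero_iff_norm.1 hx
    (hv x (hx ▸ hqr) (hx ▸ hr)).continuousAt.continuousWithinAt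
  rw [torusAverage_sum_pointedKernel_sub hq hq0 hu (hvc hq.le le_rfl) (hvc le_rfl hq.le) hw,
    torusAverage_congr (g := fun _ => 0) fun z hz => ?_, torusAverage_const, mul_zero]
  rw [circleAverage_comp_mul_left_eq (f := fun x => pointedKernel q u v w x z) hq0 hq.le
    fun x hqx hx => ?_, sub_self]
  exact differentiableAt_pointedKernel hq hu (norm_pos_iff.1 ((norm_pos_iff.2 hq0).trans_le hqx))
    (fun i => norm_pos_iff.1 (hz i ▸ one_pos)) (hv x hqx hx)

lemma torusAverage_kernel_update (hq : ‖q‖ < 1) (hq0 : q ≠ 0) (hu : u ≠ 0)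
    {a b : Fin (n + 1) → ℂ} (ha : ‖a‖ < 1) (hb : ‖b‖ < 1) (i : Fin (n + 1)) :
    (1 - u * ∏ l, b l) * torusAverage (n := n + 1)
        (kernel q (q * u) (weight q (Function.update a i (q * a i)) b)) =
      (∏ l, (1 - a i * b l)) * torusAverage (n := n + 1) (kernel q u (weight q a b)) := by
  have hqa {x : ℂ} (hx : ‖q‖ ≤ ‖x‖) (l : Fin (n + 1)) : ‖(q • a) l‖ < ‖x‖ := by
    rw [Pi.smul_apply, smul_eq_mul, norm_mul]
    exact (mul_lt_of_lt_one_right (norm_pos_iff.2 hq0) (norm_apply_lt_one ha l)).trans_le hx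
  have hTa := norm_update_mul_lt_one hq.le ha i
  have hzero := torusAverage_sum_pointedKernel_sub_eq_zero (n := n) hq hq0 (mul_ne_zero hq0 hu)
    (v := weight q (q • a) b) (w := weight q (Function.update a i (q * a i)) b)
    (fun x hqx hx => differentiableAt_weight hq (hqa hqx) (norm_apply_mul_lt_one hb hx))
    (continuousOn_weight_sphere hq hTa hb)
  rw [← sub_eq_zero, ← torusAverage_const_mul, ← torusAverage_const_mul, ← torusAverage_sub
    (continuous_const.mul (continuous_kernel_weight hq (mul_ne_zero hq0 hu) continuous_const
      continuous_const (fun _ => hTa) (fun _ => hb) continuous_id))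
    (continuous_const.mul (continuous_kernel_weight hq hu continuous_const
      continuous_const (fun _ => ha) (fun _ => hb) continuous_id)), ← hzero]
  refine torusAverage_congr fun z hz => ?_
  have h0 (k : Fin (n + 1)) : z k ≠ 0 := norm_pos_iff.1 (hz k ▸ one_pos)
  have haz (l k : Fin (n + 1)) : ‖a l‖ < ‖z k‖ := hz k ▸ norm_apply_lt_one ha l
  rw [sum_sub_distrib, sum_pointedKernel_weight hq h0 haz,
    sum_pointedKernel_weight_q_mul hq hq0 hu h0 haz fun l k => norm_apply_mul_lt_one hb (hz k).le l]
  ring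

end Relations

section NormalizedAverage

variable {n : ℕ} {q u : ℂ} {a b : Fin n → ℂ}

/-- The torus average of the kernel with weight parameters `a, b`, multiplied by
`∏ᵢ ∏ⱼ (aᵢ bⱼ)_∞` so that it stays finite as `a, b` vary and obeys simple shift relations. -/
noncomputable def normalizedAverage (q u : ℂ) (a b : Fin n → ℂ) : ℂ :=
  (∏ i, ∏ j, qp q (a i * b j)) * torusAverage (kernel q u (weight q a b) : (Fin n → ℂ) → ℂ)

lemma prod_update_mul (c : ℂ) (a : Fin n → ℂ) (i : Fin n) :
    ∏ l, Function.update a i (c * a i) l = c * ∏ l, a l := by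
  rw [prod_update_of_mem (mem_univ i), mul_assoc,
    ← prod_eq_mul_prod_sdiff_singleton_of_mem (mem_univ i)]

lemma prod_qp_mul_update (hq : ‖q‖ < 1) (a b : Fin n → ℂ) (i : Fin n) :
    ∏ k, ∏ l, qp q (a k * b l) =
      (∏ l, (1 - a i * b l)) * ∏ k, ∏ l, qp q (Function.update a i (q * a i) k * b l) := by
  rw [← mul_prod_erase univ (fun k => ∏ l, qp q (a k * b l)) (mem_univ i),
    ← mul_prod_erase univ (fun k => ∏ l, qp q (Function.update a i (q * a i) k * b l)) (mem_univ i),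
    Function.update_self, ← mul_assoc, ← prod_mul_distrib]
  congr 1
  · exact prod_congr rfl fun l _ => by rw [qp_eq_one_sub_mul hq, mul_assoc]
  · exact prod_congr rfl fun k hk => by rw [Function.update_of_ne (ne_of_mem_erase hk)]

lemma normalizedAverage_update_left (hq : ‖q‖ < 1) (hq0 : q ≠ 0) (hu : u ≠ 0) (ha : ‖a‖ < 1)
    (hb : ‖b‖ < 1) (i : Fin n) :
    normalizedAverage q u a b =
      (1 - u * ∏ l, b l) * normalizedAverage q (q * u) (Function.update a i (q * a i)) b := by
  obtain ⟨n, rfl⟩ := Nat.exists_eq_succ_of_ne_zero i.pos.ne'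
  rw [normalizedAverage, normalizedAverage, prod_qp_mul_update hq a b i, mul_right_comm,
    ← torusAverage_kernel_update hq hq0 hu ha hb i]
  ring

lemma normalizedAverage_swap (hq0 : q ≠ 0) (u : ℂ) (a b : Fin n → ℂ) :
    normalizedAverage q u a b = normalizedAverage q (q / u) b a := by
  rw [normalizedAverage, normalizedAverage, Finset.prod_comm, ← torusAverage_inv]
  simp only [mul_comm (b _)]
  congr 2 with z
  rw [kernel, kernel, interaction_inv, ← theta_q_div hq0 (u / ∏ i, z⁻¹ i)]
  simp only [Pi.inv_apply, prod_inv_distrib, weight, div_inv_eq_mul, ← div_eq_mul_inv,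
    mul_comm (qp q (b _ / _)), div_div]

lemma normalizedAverage_update (hq : ‖q‖ < 1) (hq0 : q ≠ 0) (hu : u ≠ 0) (ha : ‖a‖ < 1)
    (hb : ‖b‖ < 1) (i : Fin n) :
    normalizedAverage q u a b = (1 - u * ∏ l, b l) * (1 - q / u * ∏ l, a l) *
      normalizedAverage q u (Function.update a i (q * a i)) (Function.update b i (q * b i)) := by
  have hTa := norm_update_mul_lt_one hq.le ha i
  rw [normalizedAverage_update_left hq hq0 hu ha hb i, normalizedAverage_swap hq0,
    normalizedAverage_update_left hq hq0 (div_ne_zero hq0 (mul_ne_zero hq0 hu)) hb hTa i,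
    normalizedAverage_swap hq0,
    prod_update_mul, mul_assoc]
  congr 3 <;> field_simp

end NormalizedAverage

section Limit

variable {n : ℕ} {q u : ℂ} {a b : Fin n → ℂ}

lemma normalizedAverage_update_pow (hq : ‖q‖ < 1) (hq0 : q ≠ 0) (hu : u ≠ 0) (ha : ‖a‖ < 1)
    (hb : ‖b‖ < 1) (i : Fin n) (N : ℕ) :
    normalizedAverage q u a b =
      (∏ k ∈ range N, (1 - q ^ k * (u * ∏ l, b l))) *
        (∏ k ∈ range N, (1 - q ^ k * (q / u * ∏ l, a l))) *
        normalizedAverage q u (Function.update a i (q ^ N * a i))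
          (Function.update b i (q ^ N * b i)) := by
  induction N with
  | zero => simp
  | succ N ih =>
    have hqN : ‖q ^ N‖ ≤ 1 := by
      rw [norm_pow]
      exact pow_le_one₀ (norm_nonneg q) hq.le
    rw [ih, normalizedAverage_update hq hq0 hu (norm_update_mul_lt_one hqN ha i)
      (norm_update_mul_lt_one hqN hb i) i]
    simp only [prod_update_mul, Function.update_self, Function.update_idem, ← mul_assoc,
      ← pow_succ', prod_range_succ]
    ring

lemma continuousOn_normalizedAverage (hq : ‖q‖ < 1) (hu : u ≠ 0) :
    ContinuousOn (fun p : (Fin n → ℂ) × (Fin n → ℂ) => normalizedAverage q u p.1 p.2)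
      (ball 0 1 ×ˢ ball 0 1) := by
  rw [continuousOn_iff_continuous_domRestrict]
  have : LocallyCompactSpace (ball (0 : Fin n → ℂ) 1 ×ˢ ball (0 : Fin n → ℂ) 1 : Set _) :=
    (isOpen_ball.prod isOpen_ball).locallyCompactSpace
  have hkernel := continuous_kernel_weight (n := n) (q := q) (u := u)
    (X := (ball (0 : Fin n → ℂ) 1 ×ˢ ball (0 : Fin n → ℂ) 1 : Set _) × (Fin n → UnitAddCircle))
    hq hu (a := fun p => p.1.1.1) (b := fun p => p.1.1.2) (by fun_prop) (by fun_prop)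
    (fun p => mem_ball_zero_iff.1 p.1.2.1) (fun p => mem_ball_zero_iff.1 p.1.2.2)
    (y := Prod.snd) continuous_snd
  have haverage := continuous_parametric_integral_of_continuous (μ := volume)
    (f := fun p : (ball (0 : Fin n → ℂ) 1 ×ˢ ball (0 : Fin n → ℂ) 1 : Set _) =>
      fun y : Fin n → UnitAddCircle => kernel q u (weight q p.1.1 p.1.2) (torusPoint y))
    hkernel isCompact_univ
  simp only [Measure.restrict_univ] at haverage
  refine Continuous.mul (continuous_finsetProd _ fun i _ => continuous_finsetProd _ fun j _ =>
    (continuous_qp hq).comp ?_) haverage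
  fun_prop

lemma normalizedAverage_update_zero (hq : ‖q‖ < 1) (hq0 : q ≠ 0) (hu : u ≠ 0) (ha : ‖a‖ < 1)
    (hb : ‖b‖ < 1) (i : Fin n) :
    normalizedAverage q u a b = qp q (u * ∏ l, b l) * qp q (q / u * ∏ l, a l) *
      normalizedAverage q u (Function.update a i 0) (Function.update b i 0) := by
  have hzero {c : Fin n → ℂ} (hc : ‖c‖ < 1) : Function.update c i 0 ∈ ball (0 : Fin n → ℂ) 1 := by
    simpa using norm_update_mul_lt_one (c := 0) (by simp) hc i
  have hupdate (c : Fin n → ℂ) : Tendsto (fun N : ℕ => Function.update c i (q ^ N * c i)) atTop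
      (𝓝 (Function.update c i 0)) := by
    simpa only [zero_mul] using (tendsto_const_nhds (x := c)).update i
      ((tendsto_pow_atTop_nhds_zero_of_norm_lt_one hq).mul_const (c i))
  have hqp (x : ℂ) : Tendsto (fun N => ∏ k ∈ range N, (1 - q ^ k * x)) atTop (𝓝 (qp q x)) :=
    (multipliable_qp hq x).hasProd.tendsto_prod_nat
  have hcont : ContinuousAt (fun p : (Fin n → ℂ) × (Fin n → ℂ) => normalizedAverage q u p.1 p.2)
      (Function.update a i 0, Function.update b i 0) :=
    (continuousOn_normalizedAverage hq hu).continuousAt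
      ((isOpen_ball.prod isOpen_ball).mem_nhds (Set.mk_mem_prod (hzero ha) (hzero hb)))
  have haverage := hcont.tendsto.comp ((hupdate a).prodMk_nhds (hupdate b))
  have hlim := ((hqp (u * ∏ l, b l)).mul (hqp (q / u * ∏ l, a l))).mul haverage
  simp only [Function.comp_apply, ← normalizedAverage_update_pow hq hq0 hu ha hb i] at hlim
  exact tendsto_nhds_unique tendsto_const_nhds hlim

lemma normalizedAverage_eq_zero_zero (hq : ‖q‖ < 1) (hq0 : q ≠ 0) (hu : u ≠ 0) (ha : ‖a‖ < 1)
    (hb : ‖b‖ < 1) (hA : ∏ l, a l = 0) (hB : ∏ l, b l = 0) :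
    normalizedAverage q u a b = normalizedAverage q u (0 : Fin n → ℂ) 0 := by
  have hnorm {c : Fin n → ℂ} (hc : ‖c‖ < 1) (S : Finset (Fin n)) : ‖S.piecewise 0 c‖ < 1 :=
    (pi_norm_lt_iff one_pos).2 fun l =>
      S.piecewise_cases 0 c (‖·‖ < 1) (by simp) (norm_apply_lt_one hc l)
  have hprod {c : Fin n → ℂ} (hc : ∏ l, c l = 0) (S : Finset (Fin n)) :
      ∏ l, S.piecewise 0 c l = 0 := by
    obtain ⟨l, -, hl⟩ := prod_eq_zero_iff.1 hc
    exact prod_eq_zero (mem_univ l) (S.piecewise_cases 0 c (· = 0) rfl hl)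
  have hpiecewise (S : Finset (Fin n)) :
      normalizedAverage q u a b = normalizedAverage q u (S.piecewise 0 a) (S.piecewise 0 b) := by
    induction S using Finset.induction_on with
    | empty => simp only [piecewise_empty]
    | insert i S _ ih =>
      rw [ih, normalizedAverage_update_zero hq hq0 hu (hnorm ha S) (hnorm hb S) i, hprod hA,
        hprod hB, mul_zero, mul_zero, qp_zero, one_mul, one_mul, piecewise_insert,
        piecewise_insert, Pi.zero_apply]
  rw [hpiecewise univ, piecewise_univ, piecewise_univ]

lemma normalizedAverage_eq_mul_zero_zero [NeZero n] (hq : ‖q‖ < 1) (hq0 : q ≠ 0) (hu : u ≠ 0)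
    (ha : ‖a‖ < 1) (hb : ‖b‖ < 1) :
    normalizedAverage q u a b = qp q (u * ∏ l, b l) * qp q (q / u * ∏ l, a l) *
      normalizedAverage q u (0 : Fin n → ℂ) 0 := by
  have hnorm {c : Fin n → ℂ} (hc : ‖c‖ < 1) : ‖Function.update c 0 0‖ < 1 := by
    simpa using norm_update_mul_lt_one (c := 0) (by simp) hc 0
  have hprod (c : Fin n → ℂ) : ∏ l, Function.update c 0 0 l = 0 :=
    prod_eq_zero (mem_univ 0) (Function.update_self ..)
  rw [normalizedAverage_update_zero hq hq0 hu ha hb 0,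
    normalizedAverage_eq_zero_zero hq hq0 hu (hnorm ha) (hnorm hb) (hprod a) (hprod b)]

end Limit

/-! ### The constant -/

section Constant

variable {n : ℕ} {q u α x : ℂ}

/-- The weight `1 / θ(α/x)`. For `|q| < |α| < 1` its only pole in `|q| ≤ |x| ≤ 1` is a simple one at
`x = α`, whose residue relates kernel averages in `n + 1` and in `n` variables. -/
noncomputable def poleWeight (q α x : ℂ) : ℂ := (theta q (α / x))⁻¹

lemma poleWeight_eq_div_sub_mul (hq : ‖q‖ < 1) (hx : x ≠ 0) :
    poleWeight q α x =
      x / (x - α) * weight q (fun _ : Fin 1 => q * α) (fun _ => q / α) x := by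
  have hfactor : (1 - α / x)⁻¹ = x / (x - α) := by rw [one_sub_div hx, inv_div]
  rw [poleWeight, theta, qp_eq_one_sub_mul hq (α / x), mul_assoc, mul_inv, hfactor, weight,
    Fin.prod_univ_one, mul_div_assoc, div_div_eq_mul_div, ← div_mul_eq_mul_div q]

lemma poleWeight_q_mul (hq : ‖q‖ < 1) (hq0 : q ≠ 0) (hα : α ≠ 0) (hx : x ≠ 0) :
    poleWeight q α (q * x) = -(q * x / α) * poleWeight q α x := by
  rw [poleWeight, poleWeight, mul_comm q, ← div_div, theta_div_q hq hq0 (div_ne_zero hα hx),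
    mul_inv, inv_neg, div_div, inv_div]

lemma theta_div_mul_poleWeight (hq : ‖q‖ < 1) (hqα : ‖q‖ < ‖α‖) (hα : ‖α‖ < 1) (hx : ‖x‖ = 1) :
    theta q (α / x) * poleWeight q α x = 1 := by
  refine mul_inv_cancel₀ (theta_ne_zero hq ?_ ?_)
  · rwa [norm_div, hx, div_one]
  · refine norm_div_lt_one ?_
    rwa [norm_div, hx, div_one]

lemma differentiableAt_weight_pole (hq : ‖q‖ < 1) (hq0 : q ≠ 0) (hqα : ‖q‖ < ‖α‖) (hα : ‖α‖ < 1)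
    (hqx : ‖q‖ ≤ ‖x‖) (hx : ‖x‖ ≤ 1) :
    DifferentiableAt ℂ (weight q (fun _ : Fin 1 => q * α) (fun _ => q / α)) x := by
  refine differentiableAt_weight hq (fun _ => lt_of_lt_of_le ?_ hqx) fun _ => ?_
  · rw [norm_mul]
    exact mul_lt_of_lt_one_right (norm_pos_iff.2 hq0) hα
  · rw [norm_mul]
    exact mul_lt_one_of_nonneg_of_lt_one_left (norm_nonneg _) (norm_div_lt_one hqα) hx

lemma continuousOn_poleWeight (hq : ‖q‖ < 1) (hq0 : q ≠ 0) (hqα : ‖q‖ < ‖α‖) (hα : ‖α‖ < 1)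
    {r : ℝ} (hqr : ‖q‖ ≤ r) (hr : r ≤ 1) (hrα : r ≠ ‖α‖) :
    ContinuousOn (poleWeight q α) (sphere 0 r) := by
  have hx0 {x : ℂ} (hx : x ∈ sphere (0 : ℂ) r) : x ≠ 0 :=
    ne_of_mem_sphere hx ((norm_pos_iff.2 hq0).trans_le hqr).ne'
  refine ContinuousOn.congr (fun x hx => ?_) fun x hx => poleWeight_eq_div_sub_mul hq (hx0 hx)
  have hxr : ‖x‖ = r := mem_sphere_zero_iff_norm.1 hx
  have hxα : x - α ≠ 0 := sub_ne_zero.2 fun h => hrα (by rw [← hxr, h])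
  have hweight := differentiableAt_weight_pole hq hq0 hqα hα (hqr.trans_eq hxr.symm)
    (hxr.trans_le hr)
  exact ((continuousAt_id.div (continuousAt_id.sub_const α) hxα).mul
    hweight.continuousAt).continuousWithinAt

lemma sum_pointedKernel_poleWeight_q_mul (hq : ‖q‖ < 1) (hq0 : q ≠ 0) (hu : u ≠ 0) (hα : α ≠ 0)
    (hn : n ≠ 0) {z : Fin (n + 1) → ℂ} (h0 : ∀ k, z k ≠ 0) :
    ∑ j, pointedKernel q u (poleWeight q α) (poleWeight q α) (q * z j) (j.removeNth z) = 0 := by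
  rw [sum_pointedKernel_q_mul hq hq0 hu h0 (r := fun _ => (-1) ^ n * (u / α)) (c := 0)
    (fun j => ?_) fun hz => ?_, zero_mul]
  · rw [poleWeight_q_mul hq hq0 hα (h0 j)]
    field_simp
    ring
  · simpa only [Polynomial.eval_C, Polynomial.coeff_C_of_ne_zero hn] using sum_eval_div_prod_sub hz
      ((Polynomial.natDegree_C ((-1) ^ n * (u / α))).trans_le (Nat.zero_le n))

lemma circleAverage_pointedKernel_poleWeight_sub (hq : ‖q‖ < 1) (hq0 : q ≠ 0) (hu : u ≠ 0)
    (hqα : ‖q‖ < ‖α‖) (hα : ‖α‖ < 1) {z : Fin n → ℂ} (hz : ∀ k, ‖z k‖ = 1) :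
    circleAverage (fun x => pointedKernel q u (poleWeight q α) (poleWeight q α) x z) 0 1 -
        circleAverage (fun x => pointedKernel q u (poleWeight q α) (poleWeight q α) (q * x) z) 0 1 =
      (qp q q ^ 2)⁻¹ * kernel q (u / α) 1 z := by
  have hα0 : α ≠ 0 := norm_pos_iff.1 ((norm_nonneg q).trans_lt hqα)
  have hpole (x : ℂ) (hx : x ≠ 0) : pointedKernel q u (poleWeight q α) (poleWeight q α) x z =
      x / (x - α) * pointedKernel q u (weight q (fun _ : Fin 1 => q * α) (fun _ => q / α))
        (poleWeight q α) x z := by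
    rw [pointedKernel, pointedKernel, poleWeight_eq_div_sub_mul hq hx]
    ring
  have hres := circleAverage_sub_comp_mul_left hq0 hqα hα (g := fun x => pointedKernel q u
    (weight q (fun _ : Fin 1 => q * α) (fun _ => q / α)) (poleWeight q α) x z) fun x hqx hx =>
      differentiableAt_pointedKernel hq hu (norm_pos_iff.1 ((norm_pos_iff.2 hq0).trans_le hqx))
        (fun k => norm_pos_iff.1 (hz k ▸ one_pos))
        (differentiableAt_weight_pole hq hq0 hqα hα hqx hx)
  have hsphere {x : ℂ} (hx : x ∈ sphere (0 : ℂ) |1|) : x ≠ 0 := ne_of_mem_sphere hx (by simp)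
  rw [circleAverage_congr_sphere fun x hx => hpole x (hsphere hx),
    circleAverage_congr_sphere fun x hx => hpole (q * x) (mul_ne_zero hq0 (hsphere hx)), hres]
  have hone : (∏ k, theta q (α / z k)) * ∏ k, poleWeight q α (z k) = 1 := by
    rw [← prod_mul_distrib, prod_congr rfl fun k _ =>
      theta_div_mul_poleWeight hq hqα hα (hz k), prod_const_one]
  rw [pointedKernel, kernel, weight, Fin.prod_univ_one, mul_div_cancel_right₀ _ hα0,
    div_mul_cancel₀ _ hα0, div_div, ← sq]
  simp only [Pi.one_apply, prod_const_one]
  linear_combination theta q (u / (α * ∏ k, z k)) * (qp q q ^ 2)⁻¹ * interaction q z * hone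

lemma torusAverage_kernel_poleWeight (hq : ‖q‖ < 1) (hq0 : q ≠ 0) (hu : u ≠ 0)
    (hqα : ‖q‖ < ‖α‖) (hα : ‖α‖ < 1) (hn : n ≠ 0) :
    torusAverage (n := n + 1) (kernel q u (poleWeight q α)) =
      (n + 1) * ((qp q q ^ 2)⁻¹ * torusAverage (n := n) (kernel q (u / α) 1)) := by
  have hcont {r : ℝ} := continuousOn_poleWeight (r := r) hq hq0 hqα hα
  rw [← torusAverage_const_mul, ← torusAverage_congr fun z hz =>
    circleAverage_pointedKernel_poleWeight_sub hq hq0 hu hqα hα hz,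
    ← torusAverage_sum_pointedKernel_sub hq hq0 hu (hcont hq.le le_rfl hα.ne')
      (hcont le_rfl hq.le hqα.ne) (hcont hq.le le_rfl hα.ne')]
  refine torusAverage_congr fun z hz => ?_
  have h0 (k : Fin (n + 1)) : z k ≠ 0 := norm_pos_iff.1 (hz k ▸ one_pos)
  have hα0 : α ≠ 0 := norm_pos_iff.1 ((norm_nonneg q).trans_lt hqα)
  rw [sum_sub_distrib, sum_pointedKernel_self hq h0,
    sum_pointedKernel_poleWeight_q_mul hq hq0 hu hα0 hn h0, sub_zero]

end Constant

section Evaluation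

variable {n : ℕ} {q u α : ℂ}

lemma exists_norm_lt_norm_lt_one (hq : ‖q‖ < 1) : ∃ α : ℂ, ‖q‖ < ‖α‖ ∧ ‖α‖ < 1 := by
  obtain ⟨r, hqr, hr⟩ := exists_between hq
  have hr0 : |r| = r := abs_of_pos ((norm_nonneg q).trans_lt hqr)
  exact ⟨r, by rwa [Complex.norm_real, Real.norm_eq_abs, hr0],
    by rwa [Complex.norm_real, Real.norm_eq_abs, hr0]⟩

lemma normalizedAverage_zero (q u : ℂ) :
    normalizedAverage q u (0 : Fin n → ℂ) 0 = torusAverage (n := n) (kernel q u 1) := by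
  have hweight : weight q (0 : Fin n → ℂ) 0 = 1 := funext fun x => by simp [weight]
  rw [normalizedAverage, hweight]
  simp

lemma normalizedAverage_single (hα : α ≠ 0) (u : ℂ) :
    normalizedAverage q u (Pi.single (0 : Fin (n + 1)) α) (Pi.single 0 (q / α)) =
      qp q q * torusAverage (n := n + 1) (kernel q u (poleWeight q α)) := by
  have hweight : weight q (Pi.single (0 : Fin (n + 1)) α) (Pi.single 0 (q / α)) =
      poleWeight q α := by
    funext x
    rw [weight, Fin.prod_univ_succ, poleWeight, theta]
    simp [div_div_eq_mul_div, div_mul_eq_mul_div]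
  have hprefactor : ∏ i, ∏ j, qp q (Pi.single (M := fun _ : Fin (n + 1) => ℂ) 0 α i *
      Pi.single (M := fun _ : Fin (n + 1) => ℂ) 0 (q / α) j) = qp q q := by
    simp [Fin.prod_univ_succ, mul_div_cancel₀ _ hα]
  rw [normalizedAverage, hweight, hprefactor]

lemma qp_mul_torusAverage_kernel_poleWeight (hq : ‖q‖ < 1) (hq0 : q ≠ 0) (hu : u ≠ 0)
    (hqα : ‖q‖ < ‖α‖) (hα : ‖α‖ < 1) :
    qp q q * torusAverage (n := n + 1) (kernel q u (poleWeight q α)) =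
      qp q (u * ∏ l, Pi.single (M := fun _ : Fin (n + 1) => ℂ) 0 (q / α) l) *
        qp q (q / u * ∏ l, Pi.single (M := fun _ : Fin (n + 1) => ℂ) 0 α l) *
        torusAverage (n := n + 1) (kernel q u 1) := by
  have hα0 : α ≠ 0 := norm_pos_iff.1 ((norm_nonneg q).trans_lt hqα)
  rw [← normalizedAverage_single hα0, ← normalizedAverage_zero,
    normalizedAverage_eq_mul_zero_zero hq hq0 hu ?_ ?_]
  · rwa [Pi.norm_single]
  · rw [Pi.norm_single]
    exact norm_div_lt_one hqα

lemma torusAverage_kernel_one_succ (hq : ‖q‖ < 1) (hq0 : q ≠ 0) (hu : u ≠ 0)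
    (hqα : ‖q‖ < ‖α‖) (hα : ‖α‖ < 1) (hn : n ≠ 0) :
    qp q q * torusAverage (n := n + 1) (kernel q u 1) =
      (n + 1) * torusAverage (n := n) (kernel q (u / α) 1) := by
  have hzero (x : ℂ) : ∏ l, Pi.single (M := fun _ : Fin (n + 1) => ℂ) 0 x l = 0 := by
    rw [Fin.prod_univ_succ]
    simp [hn]
  have h := qp_mul_torusAverage_kernel_poleWeight (n := n) hq hq0 hu hqα hα
  rw [hzero, hzero, mul_zero, mul_zero, qp_zero, one_mul, one_mul,
    torusAverage_kernel_poleWeight hq hq0 hu hqα hα hn] at h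
  rw [← h]
  have hqq := qp_ne_zero hq hq
  field_simp

lemma torusAverage_kernel_one_fin_one (hq : ‖q‖ < 1) (hu : u ≠ 0) :
    torusAverage (n := 1) (kernel q u 1) = circleAverage (fun x => theta q (u / x)) 0 1 := by
  rw [← torusAverage_const (n := 0) (circleAverage _ 0 1), ← torusAverage_removeNth
    (G := fun x _ => theta q (u / x)) ?_ 0]
  · refine torusAverage_congr fun z _ => ?_
    simp [kernel, interaction]
  · exact continuous_theta_comp hq (continuous_const.div (continuous_subtype_val.comp
      (AddCircle.continuous_toCircle.comp continuous_fst)) fun p => Circle.coe_ne_zero _) fun p =>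
        div_ne_zero hu (Circle.coe_ne_zero _)

lemma circleAverage_theta_div (hq : ‖q‖ < 1) {u v : ℂ} (hu : u ≠ 0) (hv : v ≠ 0) :
    circleAverage (fun x => theta q (u / x)) 0 1 =
      circleAverage (fun x => theta q (v / x)) 0 1 := by
  wlog huv : ‖u‖ ≤ ‖v‖ generalizing u v
  · exact (this hv hu (not_le.1 huv).le).symm
  have hscale (x : ℂ) : theta q (v / x) = theta q (u / (u / v * x)) := by
    congr 1
    field_simp
  simp only [hscale]
  refine (circleAverage_comp_mul_left_eq (f := fun x => theta q (u / x)) (div_ne_zero hu hv) ?_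
    fun x hx _ => ?_).symm
  · rw [norm_div]
    exact div_le_one_of_le₀ huv (norm_nonneg v)
  · have hx0 : x ≠ 0 := norm_pos_iff.1 ((norm_pos_iff.2 (div_ne_zero hu hv)).trans_le hx)
    exact differentiableAt_theta_comp hq
      ((differentiableAt_const u).fun_div differentiableAt_id hx0) (div_ne_zero hu hx0)

lemma qp_mul_circleAverage_theta_div (hq : ‖q‖ < 1) (hq0 : q ≠ 0) (hu : u ≠ 0) :
    qp q q * circleAverage (fun x => theta q (u / x)) 0 1 = 1 := by
  obtain ⟨α, hqα, hα⟩ := exists_norm_lt_norm_lt_one hq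
  have hα0 : α ≠ 0 := norm_pos_iff.1 ((norm_nonneg q).trans_lt hqα)
  have hone : torusAverage (n := 1) (kernel q α (poleWeight q α)) = 1 := by
    rw [← torusAverage_const (n := 1) 1]
    refine torusAverage_congr fun z hz => ?_
    have htheta : theta q (α / z 0) * poleWeight q α (z 0) = 1 :=
      theta_div_mul_poleWeight hq hqα hα (hz 0)
    simpa [kernel, interaction] using htheta
  have h := qp_mul_torusAverage_kernel_poleWeight (n := 0) hq hq0 hα0 hqα hα
  rw [hone, Fin.prod_univ_one, Fin.prod_univ_one, Pi.single_eq_same, Pi.single_eq_same,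
    mul_div_cancel₀ _ hα0, div_mul_cancel₀ _ hα0, torusAverage_kernel_one_fin_one hq hα0] at h
  have hqq := qp_ne_zero hq hq
  rw [circleAverage_theta_div hq hu hα0]
  exact mul_left_cancel₀ hqq (by rw [h, mul_assoc])

lemma pow_mul_torusAverage_kernel_one (hq : ‖q‖ < 1) (hq0 : q ≠ 0) (hu : u ≠ 0) :
    qp q q ^ (n + 1) * torusAverage (n := n + 1) (kernel q u 1) = (n + 1).factorial := by
  obtain ⟨α, hqα, hα⟩ := exists_norm_lt_norm_lt_one hq
  have hα0 : α ≠ 0 := norm_pos_iff.1 ((norm_nonneg q).trans_lt hqα)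
  induction n generalizing u with
  | zero =>
    rw [torusAverage_kernel_one_fin_one hq hu, zero_add, pow_one,
      qp_mul_circleAverage_theta_div hq hq0 hu, Nat.factorial_one, Nat.cast_one]
  | succ n ih =>
    rw [pow_succ, mul_assoc, torusAverage_kernel_one_succ hq hq0 hu hqα hα n.succ_ne_zero,
      mul_left_comm, ih (div_ne_zero hu hα0), Nat.factorial_succ (n + 1)]
    push_cast
    ring

end Evaluation

section TorusIntegral

variable {n : ℕ} {q : ℂ} {a b : Fin n → ℂ}

lemma pow_mul_normalizedAverage (hq : ‖q‖ < 1) (hq0 : q ≠ 0) {u : ℂ} (hu : u ≠ 0) (ha : ‖a‖ < 1)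
    (hb : ‖b‖ < 1) :
    qp q q ^ n * normalizedAverage q u a b =
      n.factorial * (qp q (u * ∏ i, b i) * qp q (q / u * ∏ i, a i)) := by
  cases n with
  | zero =>
    have hconst (f : (Fin 0 → ℂ) → ℂ) : torusAverage f = f ![] := by
      rw [← torusAverage_const (n := 0) (f ![])]
      exact torusAverage_congr fun z _ => congrArg f (Subsingleton.elim z ![])
    simp [normalizedAverage, hconst, kernel, interaction, theta]
  | succ n =>
    rw [normalizedAverage_eq_mul_zero_zero hq hq0 hu ha hb, normalizedAverage_zero, mul_left_comm,
      pow_mul_torusAverage_kernel_one hq hq0 hu, mul_comm]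

lemma torusKer_eq_kernel {t s : ℂ} (hu : t * ∏ i, a i ≠ 0)
    (hbal : (∏ i, a i) * (∏ i, b i) * t * s = q) {z : Fin n → ℂ} (hz : ∀ i, z i ≠ 0) :
    torusKer q t s a b z = kernel q (t * ∏ i, a i) (weight q a b) z := by
  have hz0 : ∏ i, z i ≠ 0 := prod_ne_zero_iff.2 fun i _ => hz i
  have htheta : s * (∏ i, b i) * ∏ i, z i = q / (t * (∏ i, a i) / ∏ i, z i) := by
    rw [← hbal, eq_div_iff (div_ne_zero hu hz0)]
    field_simp
  rw [torusKer, kernel, theta, ← htheta, interaction, Finset.prod_comm (s := univ) (t := univ)]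
  simp only [weight, div_eq_mul_inv, prod_inv_distrib]

lemma integral_torusKer {t s : ℂ} (hq : ‖q‖ < 1) (hu : t * ∏ i, a i ≠ 0) (ha : ‖a‖ < 1)
    (hb : ‖b‖ < 1) (hbal : (∏ i, a i) * (∏ i, b i) * t * s = q) :
    ∫ θ : Fin n → ℝ in Set.univ.pi fun _ => Set.Icc 0 (2 * π),
        torusKer q t s a b (fun i => Complex.exp (θ i * Complex.I)) =
      (2 * π) ^ n * torusAverage (n := n) (kernel q (t * ∏ i, a i) (weight q a b)) := by
  rw [← integral_box_eq_torusAverage (continuous_kernel_weight hq hu continuous_const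
    continuous_const (fun _ => ha) (fun _ => hb) continuous_id)]
  simp only [torusKer_eq_kernel hu hbal fun _ => Complex.exp_ne_zero _]

end TorusIntegral

end QTorus

theorem torus_integral_evaluation_general
    {q : ℂ} (hq0 : q ≠ 0) (hq1 : ‖q‖ < 1) {n : ℕ} {a b : Fin n → ℂ}
    (ha1 : ∀ i, ‖a i‖ < 1) (hb1 : ∀ i, ‖b i‖ < 1) {t s : ℂ}
    (hbal : (∏ i, a i) * (∏ i, b i) * t * s = q) :
    (n.factorial : ℂ)⁻¹ * (((2 * Real.pi) ^ n : ℝ) : ℂ)⁻¹ *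
        (∫ θ : Fin n → ℝ in Set.univ.pi fun _ : Fin n => Set.Icc (0 : ℝ) (2 * Real.pi),
          torusKer q t s a b fun i => Complex.exp (θ i * Complex.I)) =
      qp q (q * t⁻¹) * qp q (q * s⁻¹) / (qp q q ^ n * ∏ i, ∏ j, qp q (a i * b j)) := by
  have ha : ‖a‖ < 1 := (pi_norm_lt_iff one_pos).2 ha1
  have hb : ‖b‖ < 1 := (pi_norm_lt_iff one_pos).2 hb1
  obtain ⟨⟨⟨hA, hB⟩, ht⟩, hs⟩ : ((∏ i, a i ≠ 0 ∧ ∏ i, b i ≠ 0) ∧ t ≠ 0) ∧ s ≠ 0 := by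
    simpa only [← mul_ne_zero_iff, hbal] using hq0
  have hu : t * ∏ i, a i ≠ 0 := mul_ne_zero ht hA
  have hprod : ∏ i, ∏ j, qp q (a i * b j) ≠ 0 := prod_ne_zero_iff.2 fun i _ =>
    prod_ne_zero_iff.2 fun j _ =>
      QTorus.qp_ne_zero hq1 (QTorus.norm_apply_mul_lt_one ha (hb1 j).le i)
  have hqq : qp q q ≠ 0 := QTorus.qp_ne_zero hq1 hq1
  have hfactorial : (n.factorial : ℂ) ≠ 0 := Nat.cast_ne_zero.2 n.factorial_ne_zero
  have ht' : q / (t * ∏ i, a i) * ∏ i, a i = q / t := by field_simp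
  have hs' : t * (∏ i, a i) * ∏ i, b i = q / s := by
    rw [← hbal]
    field_simp
  have haverage := QTorus.pow_mul_normalizedAverage hq1 hq0 hu ha hb
  rw [QTorus.normalizedAverage, ht', hs'] at haverage
  rw [QTorus.integral_torusKer hq1 hu ha hb hbal,
    eq_div_iff (mul_ne_zero (pow_ne_zero n hqq) hprod)]
  simp only [← div_eq_mul_inv]
  push_cast
  field_simp
  linear_combination haverage

/-- Contour-integral corollary over the `n`-torus of the Macdonald-type sum. -/
theorem torus_integral_evaluation
    (q : ℝ) (hq0 : 0 < q) (hq1 : q < 1) (n : ℕ) (hn : 1 ≤ n)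
    (a b : Fin n → ℂ) (ha : ∀ i, a i ≠ 0) (hb : ∀ i, b i ≠ 0)
    (ha1 : ∀ i, ‖a i‖ < 1) (hb1 : ∀ i, ‖b i‖ < 1)
    (t s : ℂ) (ht0 : t ≠ 0) (hs0 : s ≠ 0)
    (hbal : (∏ i, a i) * (∏ i, b i) * t * s = (q : ℂ)) :
    (n.factorial : ℂ)⁻¹ * (((2 * Real.pi) ^ n : ℝ) : ℂ)⁻¹ *
        (∫ θ : Fin n → ℝ in Set.univ.pi fun _ : Fin n => Set.Icc (0 : ℝ) (2 * Real.pi),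
          torusKer (q : ℂ) t s a b fun i => Complex.exp (θ i * Complex.I)) =
      qp (q : ℂ) ((q : ℂ) * t⁻¹) * qp (q : ℂ) ((q : ℂ) * s⁻¹) /
        (qp (q : ℂ) (q : ℂ) ^ n * ∏ i, ∏ j, qp (q : ℂ) (a i * b j)) :=
  torus_integral_evaluation_general (Complex.ofReal_ne_zero.2 hq0.ne')
    (by rwa [Complex.norm_real, Real.norm_of_nonneg hq0.le]) ha1 hb1 hbal
end

section
/- Suppose |q a_1⁻¹⋯a_n⁻¹ b_1⁻¹⋯b_n⁻¹| < |t| < 1, set s := q t⁻¹ a_1⁻¹⋯a_n⁻¹ b_1⁻¹⋯b_n⁻¹, and let x ∈ (ℂ^*)ⁿ satisfy x_i b_j ∉ qᶻ and x_i a_j⁻¹ ∉ qᶻ for all 1 ≤ i, j ≤ n. Then the reflective equation holds: I(t;x) = (x_1⋯x_n)^{n−1} · ∏_{i=1}^n ∏_{j=1}^n [ θ(q a_j⁻¹ x_i) / θ(b_j x_i) ] · Ī(s; x⁻¹), where x⁻¹ := (x_1⁻¹,…,x_n⁻¹). (Connection between the Milne–Gustafson sum and its dual, Lemma 3.6 of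 the paper, written multiplicatively.) -/
/-!
The identity holds term by term: the summand of `I(t;x)` at `ν` is the prefactor times the summand
of `Ī(s;x⁻¹)` at `-ν`, so it remains to reindex the lattice sum by `ν ↦ -ν`.

Write `X_i = x_i q^{ν_i}`. By definition of `θ`, the quotient `(q X_i / a_j)_∞ / (b_j X_i)_∞` is
`θ(q X_i / a_j) / θ(b_j X_i)` times the dual factor `(q / (b_j X_i))_∞ / (a_j / X_i)_∞` at
`1 / X_i`. Quasi-periodicity, `θ(q z) = -z⁻¹ θ(z)`, reduces the theta quotient to its value at `x_i`
times `(a_j b_j / q)^{ν_i}`, and `X_j - X_i = X_i X_j (X_i⁻¹ - X_j⁻¹)` turns the difference product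
into the dual one times `(∏ X_i)^{n-1}`. The powers that appear multiply up to
`(t q⁻¹ ∏ a_j b_j)^{∑ ν_i} = s^{-∑ ν_i}`.
-/

open scoped BigOperators
open Finset

/-- The theta function `θ(a) = (a)_∞ (q/a)_∞`. -/
noncomputable def th (q a : ℂ) : ℂ := qp q a * qp q (q / a)

/-- Summand of the normalized Jackson integral of Milne–Gustafson type. -/
noncomputable def mgTerm {n : ℕ} (q t : ℂ) (a b x : Fin n → ℂ) (ν : Fin n → ℤ) : ℂ :=
  t ^ (∑ i, ν i) *
    (∏ i, ∏ j, qp q (q * (a j)⁻¹ * (x i * q ^ ν i)) / qp q (b j * (x i * q ^ ν i))) *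
    ∏ i, ∏ j ∈ Finset.Ioi i, (x j * q ^ ν j - x i * q ^ ν i)

/-- The normalized Jackson integral of Milne–Gustafson type `I(t;x)`. -/
noncomputable def mgSum {n : ℕ} (q t : ℂ) (a b x : Fin n → ℂ) : ℂ :=
  (1 - q) ^ n * ∑' ν : Fin n → ℤ, mgTerm q t a b x ν

/-- Summand of the normalized dual Jackson integral of Milne–Gustafson type. -/
noncomputable def mgDualTerm {n : ℕ} (q s : ℂ) (a b y : Fin n → ℂ) (ν : Fin n → ℤ) : ℂ :=
  s ^ (∑ i, ν i) *
    (∏ i, ∏ j, qp q (q * (b j)⁻¹ * (y i * q ^ ν i)) / qp q (a j * (y i * q ^ ν i))) *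
    ∏ i, ∏ j ∈ Finset.Ioi i, (y i * q ^ ν i - y j * q ^ ν j)

/-- The normalized dual Jackson integral of Milne–Gustafson type `Ī(s;y)`. -/
noncomputable def mgDualSum {n : ℕ} (q s : ℂ) (a b y : Fin n → ℂ) : ℂ :=
  (1 - q) ^ n * ∑' ν : Fin n → ℤ, mgDualTerm q s a b y ν

section BigOperators

variable {ι : Type*}

lemma prod_zpow_eq_zpow_sum₀ {G₀ : Type*} [CommGroupWithZero G₀] {c : G₀} (hc : c ≠ 0)
    (s : Finset ι) (f : ι → ℤ) : ∏ i ∈ s, c ^ f i = c ^ ∑ i ∈ s, f i := by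
  classical
  induction s using Finset.induction_on with
  | empty => simp
  | insert i s hi ih => rw [prod_insert hi, sum_insert hi, zpow_add₀ hc, ih]

variable [Fintype ι] [LinearOrder ι] [LocallyFiniteOrderTop ι] [LocallyFiniteOrderBot ι]

lemma prod_prod_Ioi_mul_eq_prod_pow {M : Type*} [CommMonoid M] (X : ι → M) :
    ∏ i, ∏ j ∈ Ioi i, X i * X j = (∏ i, X i) ^ (Fintype.card ι - 1) := by
  rw [prod_prod_Ioi_mul_eq_prod_prod_off_diag fun _ j ↦ X j]
  simp [prod_pow, card_compl]

lemma prod_prod_Ioi_sub_eq_prod_pow_mul {K : Type*} [Field K] {X : ι → K} (hX : ∀ i, X i ≠ 0) :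
    ∏ i, ∏ j ∈ Ioi i, (X j - X i) =
      (∏ i, X i) ^ (Fintype.card ι - 1) * ∏ i, ∏ j ∈ Ioi i, ((X i)⁻¹ - (X j)⁻¹) := by
  simp only [← prod_prod_Ioi_mul_eq_prod_pow, ← prod_mul_distrib]
  refine prod_congr rfl fun i _ ↦ prod_congr rfl fun j _ ↦ ?_
  rw [inv_sub_inv (hX i) (hX j), mul_div_cancel₀ _ (mul_ne_zero (hX i) (hX j))]

end BigOperators

lemma eq_zpow_mul_of_forall_add_one {G₀ : Type*} [CommGroupWithZero G₀] {c : G₀} (hc : c ≠ 0)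
    {f : ℤ → G₀} (hf : ∀ k, f (k + 1) = c * f k) (m : ℤ) : f m = c ^ m * f 0 := by
  induction m using Int.induction_on with
  | zero => simp
  | succ k ih => rw [hf, ih, ← mul_assoc, ← zpow_one_add₀ hc, add_comm]
  | pred k ih =>
    apply mul_left_cancel₀ hc
    rw [← hf, sub_add_cancel, ih, ← mul_assoc, ← zpow_one_add₀ hc, add_sub_cancel]

section Theta

variable {q z w : ℂ}

lemma summable_norm_neg_pow_mul (hq : ‖q‖ < 1) (z : ℂ) :
    Summable fun i : ℕ ↦ ‖-(q ^ i * z)‖ := by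
  simpa using (summable_geometric_of_lt_one (norm_nonneg q) hq).mul_right ‖z‖

lemma qp_eq_one_sub_mul_qp_mul (hq : ‖q‖ < 1) (z : ℂ) : qp q z = (1 - z) * qp q (z * q) := by
  have hshift (i : ℕ) : 1 - q ^ (i + 1) * z = 1 - q ^ i * (z * q) := by ring
  have hmul : Multipliable fun i : ℕ ↦ 1 - q ^ i * (z * q) := by
    simpa only [sub_eq_add_neg] using
      multipliable_one_add_of_summable (summable_norm_neg_pow_mul hq (z * q))
  rw [qp, tprod_eq_zero_mul' (by simpa only [hshift] using hmul)]
  simp only [hshift, pow_zero, one_mul, qp]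

lemma qp_ne_zero_s6 (hq : ‖q‖ < 1) (hz : ∀ k : ℕ, q ^ k * z ≠ 1) : qp q z ≠ 0 := by
  simp only [qp, sub_eq_add_neg]
  refine tprod_one_add_ne_zero_of_summable (fun k ↦ ?_) (summable_norm_neg_pow_mul hq z)
  rw [← sub_eq_add_neg]
  exact sub_ne_zero_of_ne (hz k).symm

lemma qp_div_mul_zpow_ne_zero (hq0 : q ≠ 0) (hq : ‖q‖ < 1) (hz : ∀ k : ℤ, z ≠ q ^ k) (m : ℤ) :
    qp q (q / (z * q ^ m)) ≠ 0 := by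
  refine qp_ne_zero_s6 hq fun k hk ↦ hz (k + 1 - m) ?_
  have hden : z * q ^ m ≠ 0 := fun h ↦ by simp [h] at hk
  rw [← mul_div_assoc, div_eq_one_iff_eq hden] at hk
  rw [zpow_sub₀ hq0, zpow_add_one₀ hq0, zpow_natCast, hk,
    mul_div_cancel_right₀ _ (zpow_ne_zero m hq0)]

lemma th_mul_self (hq0 : q ≠ 0) (hq : ‖q‖ < 1) (hz : z ≠ 0) : th q (z * q) = -z⁻¹ * th q z := by
  have hinv : q / (z * q) = z⁻¹ := by field_simp
  rw [th, th, hinv, qp_eq_one_sub_mul_qp_mul hq z, qp_eq_one_sub_mul_qp_mul hq z⁻¹,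
    inv_mul_eq_div z q]
  field_simp
  ring

lemma th_mul_self_div_th_mul_self (hq0 : q ≠ 0) (hq : ‖q‖ < 1) (hz : z ≠ 0) (hw : w ≠ 0) :
    th q (z * q) / th q (w * q) = w / z * (th q z / th q w) := by
  rw [th_mul_self hq0 hq hz, th_mul_self hq0 hq hw, neg_mul, neg_mul, neg_div_neg_eq,
    mul_div_mul_comm, inv_div_inv]

lemma th_mul_zpow_div_th_mul_zpow (hq0 : q ≠ 0) (hq : ‖q‖ < 1) (hz : z ≠ 0) (hw : w ≠ 0) (m : ℤ) :
    th q (z * q ^ m) / th q (w * q ^ m) = (w / z) ^ m * (th q z / th q w) := by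
  have hstep (k : ℤ) : th q (z * q ^ (k + 1)) / th q (w * q ^ (k + 1)) =
      w / z * (th q (z * q ^ k) / th q (w * q ^ k)) := by
    have hk : q ^ k ≠ 0 := zpow_ne_zero k hq0
    rw [zpow_add_one₀ hq0, ← mul_assoc, ← mul_assoc, th_mul_self_div_th_mul_self hq0 hq
      (mul_ne_zero hz hk) (mul_ne_zero hw hk), mul_div_mul_right _ _ hk]
  simpa using eq_zpow_mul_of_forall_add_one
    (f := fun k ↦ th q (z * q ^ k) / th q (w * q ^ k)) (div_ne_zero hw hz) hstep m

lemma qp_div_qp_eq_th_div_th_mul (hz : qp q (q / z) ≠ 0) (hw : qp q (q / w) ≠ 0) :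
    qp q z / qp q w = th q z / th q w * (qp q (q / w) / qp q (q / z)) := by
  rw [th, th, div_mul_div_comm, mul_assoc, mul_assoc, mul_comm (qp q (q / w)),
    mul_div_mul_right _ _ (mul_ne_zero hz hw)]

lemma qp_mul_zpow_div_qp_mul_zpow (hq0 : q ≠ 0) (hq : ‖q‖ < 1) (hz0 : z ≠ 0) (hw0 : w ≠ 0)
    (hz : ∀ k : ℤ, z ≠ q ^ k) (hw : ∀ k : ℤ, w ≠ q ^ k) (m : ℤ) :
    qp q (z * q ^ m) / qp q (w * q ^ m) =
      th q z / th q w * (w / z) ^ m * (qp q (q / (w * q ^ m)) / qp q (q / (z * q ^ m))) := by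
  rw [qp_div_qp_eq_th_div_th_mul (qp_div_mul_zpow_ne_zero hq0 hq hz m)
      (qp_div_mul_zpow_ne_zero hq0 hq hw m),
    th_mul_zpow_div_th_mul_zpow hq0 hq hz0 hw0, mul_comm ((w / z) ^ m)]

end Theta

section Reflection

variable {q : ℂ}

lemma qp_div_qp_reflect (hq0 : q ≠ 0) (hq : ‖q‖ < 1) {a b x : ℂ} (ha : a ≠ 0) (hb : b ≠ 0)
    (hx : x ≠ 0) (hxb : ∀ k : ℤ, x * b ≠ q ^ k) (hxa : ∀ k : ℤ, x * a⁻¹ ≠ q ^ k) (m : ℤ) :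
    qp q (q * a⁻¹ * (x * q ^ m)) / qp q (b * (x * q ^ m)) =
      th q (q * a⁻¹ * x) / th q (b * x) * (a * b / q) ^ m *
        (qp q (q * b⁻¹ * (x⁻¹ * q ^ (-m))) / qp q (a * (x⁻¹ * q ^ (-m)))) := by
  have hz (k : ℤ) : q * a⁻¹ * x ≠ q ^ k := fun h ↦ hxa (k - 1) <| by
    rw [zpow_sub_one₀ hq0, ← h]
    field_simp
  have hw (k : ℤ) : b * x ≠ q ^ k := by simpa only [mul_comm b x] using hxb k
  have hratio : b * x / (q * a⁻¹ * x) = a * b / q := by field_simp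
  have hzinv : q / (q * a⁻¹ * x * q ^ m) = a * (x⁻¹ * q ^ (-m)) := by
    rw [zpow_neg]
    field_simp
  have hwinv : q / (b * x * q ^ m) = q * b⁻¹ * (x⁻¹ * q ^ (-m)) := by
    rw [zpow_neg]
    field_simp
  rw [← mul_assoc _ x, ← mul_assoc b x, qp_mul_zpow_div_qp_mul_zpow hq0 hq (by positivity)
    (mul_ne_zero hb hx) hz hw, hratio, hzinv, hwinv]

variable {n : ℕ} {a b x : Fin n → ℂ}

lemma prod_qp_div_qp_reflect (hq0 : q ≠ 0) (hq : ‖q‖ < 1) (ha : ∀ i, a i ≠ 0) (hb : ∀ i, b i ≠ 0)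
    (hx : ∀ i, x i ≠ 0) (hxb : ∀ i j, ∀ m : ℤ, x i * b j ≠ q ^ m)
    (hxa : ∀ i j, ∀ m : ℤ, x i * (a j)⁻¹ ≠ q ^ m) (ν : Fin n → ℤ) :
    ∏ i, ∏ j, qp q (q * (a j)⁻¹ * (x i * q ^ ν i)) / qp q (b j * (x i * q ^ ν i)) =
      (∏ i, ∏ j, th q (q * (a j)⁻¹ * x i) / th q (b j * x i)) *
        ((∏ j, a j) * (∏ j, b j) / q ^ n) ^ (∑ i, ν i) *
        ∏ i, ∏ j, qp q (q * (b j)⁻¹ * ((x i)⁻¹ * q ^ (-ν i))) /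
          qp q (a j * ((x i)⁻¹ * q ^ (-ν i))) := by
  have hmultiplier : (∏ j, a j) * (∏ j, b j) / q ^ n = ∏ j, a j * b j / q := by
    simp [prod_div_distrib, prod_mul_distrib]
  have hne : ∏ j, a j * b j / q ≠ 0 :=
    prod_ne_zero_iff.2 fun j _ ↦ div_ne_zero (mul_ne_zero (ha j) (hb j)) hq0
  rw [hmultiplier, ← prod_zpow_eq_zpow_sum₀ hne]
  simp only [← prod_zpow, ← prod_mul_distrib (s := univ)]
  exact prod_congr rfl fun i _ ↦ prod_congr rfl fun j _ ↦
    qp_div_qp_reflect hq0 hq (ha j) (hb j) (hx i) (hxb i j) (hxa i j) (ν i)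

lemma prod_prod_Ioi_sub_reflect (hq0 : q ≠ 0) (hx : ∀ i, x i ≠ 0) (ν : Fin n → ℤ) :
    ∏ i, ∏ j ∈ Ioi i, (x j * q ^ ν j - x i * q ^ ν i) =
      (∏ i, x i) ^ (n - 1) * (q ^ (n - 1)) ^ (∑ i, ν i) *
        ∏ i, ∏ j ∈ Ioi i, ((x i)⁻¹ * q ^ (-ν i) - (x j)⁻¹ * q ^ (-ν j)) := by
  have hX (i : Fin n) : x i * q ^ ν i ≠ 0 := mul_ne_zero (hx i) (zpow_ne_zero _ hq0)
  rw [prod_prod_Ioi_sub_eq_prod_pow_mul hX, Fintype.card_fin, prod_mul_distrib, mul_pow,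
    prod_zpow_eq_zpow_sum₀ hq0, ← zpow_natCast (q ^ _), zpow_comm, zpow_natCast]
  simp only [mul_inv, zpow_neg]

lemma mgTerm_eq_mul_mgDualTerm_neg (hq0 : q ≠ 0) (hq : ‖q‖ < 1) (ha : ∀ i, a i ≠ 0)
    (hb : ∀ i, b i ≠ 0) (hx : ∀ i, x i ≠ 0) (hxb : ∀ i j, ∀ m : ℤ, x i * b j ≠ q ^ m)
    (hxa : ∀ i j, ∀ m : ℤ, x i * (a j)⁻¹ ≠ q ^ m) {s t : ℂ}
    (hs : s = q * t⁻¹ * (∏ i, a i)⁻¹ * (∏ i, b i)⁻¹) (ν : Fin n → ℤ) :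
    mgTerm q t a b x ν =
      (∏ i, x i) ^ (n - 1) * (∏ i, ∏ j, th q (q * (a j)⁻¹ * x i) / th q (b j * x i)) *
        mgDualTerm q s a b (fun i ↦ (x i)⁻¹) (-ν) := by
  obtain rfl | hn := eq_or_ne n 0
  · simp [mgTerm, mgDualTerm]
  have hbase : s⁻¹ = t * ((∏ j, a j) * (∏ j, b j) / q ^ n) * q ^ (n - 1) := by
    have hpow : q ^ (n - 1) ≠ 0 := pow_ne_zero _ hq0
    rw [hs, ← pow_sub_one_mul hn q]
    simp only [mul_inv, inv_inv]
    field_simp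
  have hweight : s ^ (∑ i, (-ν) i) = t ^ (∑ i, ν i) *
      ((∏ j, a j) * (∏ j, b j) / q ^ n) ^ (∑ i, ν i) * (q ^ (n - 1)) ^ (∑ i, ν i) := by
    simp only [Pi.neg_apply, sum_neg_distrib]
    rw [zpow_neg, ← inv_zpow, hbase, mul_zpow, mul_zpow]
  rw [mgTerm, mgDualTerm, prod_qp_div_qp_reflect hq0 hq ha hb hx hxb hxa,
    prod_prod_Ioi_sub_reflect hq0 hx, hweight]
  simp only [Pi.neg_apply]
  ring

end Reflection

theorem milne_gustafson_reflective_equation_general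
    {q : ℂ} (hq0 : q ≠ 0) (hq : ‖q‖ < 1) {n : ℕ} {a b : Fin n → ℂ} (ha : ∀ i, a i ≠ 0)
    (hb : ∀ i, b i ≠ 0) {t : ℂ} (hlow : ‖q * (∏ i, a i)⁻¹ * (∏ i, b i)⁻¹‖ < ‖t‖)
    (hupp : ‖t‖ < 1) {x : Fin n → ℂ} (hx : ∀ i, x i ≠ 0)
    (hxb : ∀ i j, ∀ m : ℤ, x i * b j ≠ q ^ m) (hxa : ∀ i j, ∀ m : ℤ, x i * (a j)⁻¹ ≠ q ^ m)
    {s : ℂ} (hs : s = q * t⁻¹ * (∏ i, a i)⁻¹ * (∏ i, b i)⁻¹) :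
    mgSum q t a b x =
      (∏ i, x i) ^ (n - 1) * (∏ i, ∏ j, th q (q * (a j)⁻¹ * x i) / th q (b j * x i)) *
        mgDualSum q s a b fun i ↦ (x i)⁻¹ := by
  rw [mgSum, mgDualSum, tsum_congr (mgTerm_eq_mul_mgDualTerm_neg hq0 hq ha hb hx hxb hxa hs),
    tsum_mul_left, tsum_comp_neg, mul_left_comm]

/-- Reflective equation relating the Milne–Gustafson sum and its dual. -/
theorem milne_gustafson_reflective_equation
    (q : ℝ) (hq0 : 0 < q) (hq1 : q < 1) (n : ℕ) (hn : 1 ≤ n)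
    (a b : Fin n → ℂ) (ha : ∀ i, a i ≠ 0) (hb : ∀ i, b i ≠ 0)
    (t : ℂ) (ht0 : t ≠ 0)
    (hlow : ‖(q : ℂ) * (∏ i, a i)⁻¹ * (∏ i, b i)⁻¹‖ < ‖t‖) (hupp : ‖t‖ < 1)
    (x : Fin n → ℂ) (hx : ∀ i, x i ≠ 0)
    (hxb : ∀ i j, ∀ m : ℤ, x i * b j ≠ (q : ℂ) ^ m)
    (hxa : ∀ i j, ∀ m : ℤ, x i * (a j)⁻¹ ≠ (q : ℂ) ^ m)
    (s : ℂ) (hs : s = (q : ℂ) * t⁻¹ * (∏ i, a i)⁻¹ * (∏ i, b i)⁻¹) :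
    mgSum (q : ℂ) t a b x =
      (∏ i, x i) ^ (n - 1) *
        (∏ i, ∏ j, th (q : ℂ) ((q : ℂ) * (a j)⁻¹ * x i) / th (q : ℂ) (b j * x i)) *
        mgDualSum (q : ℂ) s a b fun i => (x i)⁻¹ := by
  exact milne_gustafson_reflective_equation_general (by exact_mod_cast hq0.ne')
    (by rwa [Complex.norm_of_nonneg hq0.le]) ha hb hlow hupp hx hxb hxa hs
end
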